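/- arXiv:1606.02104 — 2 statements merged into one kernel-verified Lean document; each statement's English description precedes it below -/
import Mathlib

section
/- For every ε > 0 there is a constant C(ε) such that: for every integer N ≥ 2, every real α, and all integers a, q with q ≥ 1, gcd(a,q) = 1 and |α − a/q| ≤ 1/q², one has |S₃(N,α)| ≤ C(ε) · N^{1/3+ε} (1/q + N^{−1/6} + q/N)^{1/16}. -/
/-- `e(x) = exp(2πix)`. -/
noncomputable def eexp (x : ℝ) : ℂ := Complex.exp (2 * Real.pi * Complex.I * x)

/-- `S₃(N,α) = Σ_{p ≤ N^{1/3}, p prime} e(αp³)`. -/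
noncomputable def S₃ (N : ℕ) (α : ℝ) : ℂ :=
  ∑ p ∈ (Finset.range (N + 1)).filter
      (fun p => Nat.Prime p ∧ (p : ℝ) ≤ (N : ℝ) ^ ((1 : ℝ) / 3)),
    eexp (α * (p : ℝ) ^ 3)

/-!
Partial summation reduces the sum over primes to `∑ Λ(n) e(αn³)`, and Vaughan's identity with both
truncations at `X^{1/4}` splits that sum into type I sums, with one smooth variable, and type II
sums, whose two variables both exceed `X^{1/4}`.

In a type II sum, Cauchy–Schwarz and Hölder remove the arbitrary coefficients and Weyl differencing,
twice in `m` and then twice in `n`, makes the phase linear. A divisor bound and Vinogradov's lemma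
on `∑ min(N, 1/‖αk‖)` then apply; the sixteenth power reached this way is the exponent `1/16`.

In a type I sum the inner sum over `n ≤ X/m` is bounded by Weyl's inequality through the denominator
of a Dirichlet approximation `ρ m` to `αm³`. Whenever that denominator is small, `ρ m / m³` is
a single rational `γ` near `α`, independent of `m` and with large denominator, so that the
denominators of `ρ m = γm³` are controlled by greatest common divisors.
-/

namespace MinorArc

open Finset
open scoped FourierTransform ComplexConjugate

section Exponential

theorem eexp_eq_fourierChar (x : ℝ) : eexp x = 𝐞 x := by
  rw [Real.fourierChar_apply, eexp]
  push_cast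
  ring_nf

theorem eexp_add (x y : ℝ) : eexp (x + y) = eexp x * eexp y := by
  simp only [eexp_eq_fourierChar, AddChar.map_add_eq_mul, Circle.coe_mul]

theorem eexp_neg (x : ℝ) : eexp (-x) = conj (eexp x) := by
  simp only [eexp_eq_fourierChar, AddChar.map_neg_eq_inv, Circle.coe_inv_eq_conj]

theorem eexp_sub (x y : ℝ) : eexp (x - y) = eexp x * conj (eexp y) := by
  rw [sub_eq_add_neg, eexp_add, eexp_neg]

theorem norm_eexp (x : ℝ) : ‖eexp x‖ = 1 := by
  rw [eexp_eq_fourierChar, Circle.norm_coe]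

theorem eexp_nat_mul (n : ℕ) (x : ℝ) : eexp (n * x) = eexp x ^ n := by
  rw [← nsmul_eq_mul, eexp_eq_fourierChar, AddChar.map_nsmul_eq_pow, Circle.coe_pow,
    eexp_eq_fourierChar]

theorem eexp_intCast (n : ℤ) : eexp n = 1 := by
  rw [eexp, ← Complex.exp_int_mul_two_pi_mul_I n]
  push_cast
  ring_nf

theorem eexp_sub_intCast (x : ℝ) (n : ℤ) : eexp (x - n) = eexp x := by
  rw [eexp_sub, eexp_intCast, map_one, mul_one]

theorem four_mul_norm_coe_le_norm_eexp_sub_one (x : ℝ) :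
    4 * ‖(x : UnitAddCircle)‖ ≤ ‖eexp x - 1‖ := by
  set y := x - round x with hy
  have hy2 : |y| ≤ 1 / 2 := abs_sub_round x
  have hsin : 2 * |y| ≤ |Real.sin (Real.pi * y)| := by
    have habs : |Real.pi * y| = Real.pi * |y| := by rw [abs_mul, abs_of_pos Real.pi_pos]
    have h := Real.mul_abs_le_abs_sin (x := Real.pi * y)
      (by rw [habs]; nlinarith [Real.pi_pos])
    rwa [habs, ← mul_assoc, div_mul_cancel₀ _ Real.pi_ne_zero] at h
  have hnorm : ‖eexp y - 1‖ = 2 * |Real.sin (Real.pi * y)| := by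
    have hexp : eexp y = Complex.exp (Complex.I * ((2 * Real.pi * y : ℝ))) := by
      rw [eexp]; push_cast; ring_nf
    rw [hexp, Complex.norm_exp_I_mul_ofReal_sub_one, Real.norm_eq_abs, abs_mul, abs_two]
    ring_nf
  rw [UnitAddCircle.norm_eq, ← eexp_sub_intCast x (round x), ← hy, hnorm]
  linarith

end Exponential

section GeometricSums

/-- The usual majorant `min (N, 1 / ‖x‖)` of a geometric sum of length at most `N` and ratio
`e(x)`, in the smooth form `1 / (1 / N + ‖x‖)`; here `‖x‖`, the distance from `x` to the nearest
integer, is the norm of the class of `x` in `ℝ / ℤ`. -/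
noncomputable def geomMajorant (N x : ℝ) : ℝ := (N⁻¹ + ‖(x : UnitAddCircle)‖)⁻¹

variable {N : ℝ}

theorem geomMajorant_nonneg (hN : 0 ≤ N) (x : ℝ) : 0 ≤ geomMajorant N x := by
  unfold geomMajorant; positivity

theorem geomMajorant_le (hN : 0 < N) (x : ℝ) : geomMajorant N x ≤ N :=
  inv_le_of_inv_le₀ hN (le_add_of_nonneg_right (norm_nonneg _))

theorem geomMajorant_mul_abs (N a x : ℝ) : geomMajorant N (a * |x|) = geomMajorant N (a * x) := by
  rcases abs_choice x with h | h <;> rw [h]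
  rw [mul_neg, geomMajorant, geomMajorant, AddCircle.coe_neg, norm_neg]

theorem norm_sum_range_eexp_mul_le (γ c : ℝ) (n : ℕ) :
    ‖∑ i ∈ range n, eexp (i * γ + c)‖ * (2 * ‖(γ : UnitAddCircle)‖) ≤ 1 := by
  have hgeom : ‖∑ i ∈ range n, eexp γ ^ i‖ * ‖eexp γ - 1‖ ≤ 2 := by
    rw [← norm_mul, geom_sum_mul]
    refine (norm_sub_le _ _).trans (le_of_eq ?_)
    rw [norm_pow, norm_eexp, norm_one, one_pow]
    norm_num
  simp_rw [eexp_add, eexp_nat_mul]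
  rw [← sum_mul, norm_mul, norm_eexp, mul_one]
  nlinarith [four_mul_norm_coe_le_norm_eexp_sub_one γ,
    norm_nonneg (∑ i ∈ range n, eexp γ ^ i)]

theorem exists_eq_Icc_of_ordConnected {J : Finset ℤ} (hJ : (J : Set ℤ).OrdConnected)
    (hne : J.Nonempty) : ∃ A B : ℤ, J = Icc A B := by
  refine ⟨J.min' hne, J.max' hne, Subset.antisymm
    (fun x hx => mem_Icc.2 ⟨J.min'_le x hx, J.le_max' x hx⟩) fun x hx => ?_⟩
  exact hJ.out (J.min'_mem hne) (J.max'_mem hne) (mem_Icc.1 hx)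

theorem norm_sum_eexp_linear_le (γ c : ℝ) {J : Finset ℤ} (hJ : (J : Set ℤ).OrdConnected)
    (hN : 0 < N) (hcard : (#J : ℝ) ≤ N) :
    ‖∑ n ∈ J, eexp (γ * n + c)‖ ≤ 2 * geomMajorant N γ := by
  have htriv : ‖∑ n ∈ J, eexp (γ * n + c)‖ ≤ N := by
    refine (norm_sum_le _ _).trans ?_
    simpa only [norm_eexp, sum_const, nsmul_eq_mul, mul_one] using hcard
  have hgeom : ‖∑ n ∈ J, eexp (γ * n + c)‖ * (2 * ‖(γ : UnitAddCircle)‖) ≤ 1 := by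
    rcases J.eq_empty_or_nonempty with rfl | hne
    · simp
    obtain ⟨A, B, rfl⟩ := exists_eq_Icc_of_ordConnected hJ hne
    convert norm_sum_range_eexp_mul_le γ (γ * A + c) (B + 1 - A).toNat using 4
    rw [Int.Icc_eq_finset_map, sum_map]
    refine sum_congr rfl fun i _ => congrArg eexp ?_
    simp only [Function.Embedding.trans_apply, Nat.castEmbedding_apply, addLeftEmbedding_apply]
    push_cast
    ring
  rw [geomMajorant, ← div_eq_mul_inv, le_div_iff₀ (by positivity), mul_add]
  have hone := mul_le_mul_of_nonneg_right htriv (inv_nonneg.2 hN.le)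
  rw [mul_inv_cancel₀ hN.ne'] at hone
  linarith

end GeometricSums

section WeylDifferencing

variable {G : Type*} [AddCommGroup G] [DecidableEq G]

theorem ofReal_sq_norm_sum {ι : Type*} (s : Finset ι) (F : ι → ℂ) :
    ((‖∑ i ∈ s, F i‖ ^ 2 : ℝ) : ℂ) = ∑ i ∈ s, ∑ j ∈ s, F i * conj (F j) := by
  rw [← Complex.normSq_eq_norm_sq, ← Complex.mul_conj, map_sum, sum_mul_sum]

theorem ofReal_sq_norm_sum_eq_sum_shift {I H : Finset G} (hH : ∀ m ∈ I, ∀ m' ∈ I, m' - m ∈ H)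
    (F : G → ℂ) :
    ((‖∑ m ∈ I, F m‖ ^ 2 : ℝ) : ℂ) =
      ∑ h ∈ H, ∑ m ∈ I with m + h ∈ I, F (m + h) * conj (F m) := by
  simp_rw [ofReal_sq_norm_sum, sum_filter]
  rw [sum_comm, sum_comm (s := H)]
  refine sum_congr rfl fun m hm => ?_
  rw [← sum_filter]
  refine sum_nbij' (· - m) (m + ·) (fun m' hm' => ?_) (fun h hh => (mem_filter.1 hh).2)
    (fun _ _ => add_sub_cancel _ _) (fun _ _ => add_sub_cancel_left _ _) (fun m' _ => ?_)
  · simpa only [mem_filter, add_sub_cancel, hm', and_true] using hH m hm m' hm'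
  · rw [add_sub_cancel]

/-- The points of `I` at which the second difference with steps `h` and `h'` only involves
values on `I`. -/
def secondDiffDomain (I : Finset G) (h h' : G) : Finset G :=
  {m ∈ I | m + h ∈ I ∧ m + h' ∈ I ∧ m + h' + h ∈ I}

theorem mem_secondDiffDomain {I : Finset G} {h h' m : G} :
    m ∈ secondDiffDomain I h h' ↔ m ∈ I ∧ m + h ∈ I ∧ m + h' ∈ I ∧ m + h' + h ∈ I :=
  mem_filter

theorem card_secondDiffDomain_le (I : Finset G) (h h' : G) : #(secondDiffDomain I h h') ≤ #I :=
  card_filter_le _ _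

theorem ordConnected_secondDiffDomain {I : Finset ℤ} (hI : (I : Set ℤ).OrdConnected) (h h' : ℤ) :
    (secondDiffDomain I h h' : Set ℤ).OrdConnected := by
  refine ⟨fun x hx y hy z ⟨hxz, hzy⟩ => ?_⟩
  simp only [mem_coe, mem_secondDiffDomain] at hx hy ⊢
  exact ⟨hI.out hx.1 hy.1 ⟨hxz, hzy⟩, hI.out hx.2.1 hy.2.1 ⟨by lia, by lia⟩,
    hI.out hx.2.2.1 hy.2.2.1 ⟨by lia, by lia⟩, hI.out hx.2.2.2 hy.2.2.2 ⟨by lia, by lia⟩⟩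

theorem norm_sum_eexp_pow_four_le {I H : Finset G} (hH : ∀ m ∈ I, ∀ m' ∈ I, m' - m ∈ H)
    (f : G → ℝ) :
    ‖∑ m ∈ I, eexp (f m)‖ ^ 4 ≤ #H *
      (∑ h ∈ H, ∑ h' ∈ H, ∑ m ∈ secondDiffDomain I h h',
        eexp (fwdDiff h' (fwdDiff h f) m)).re := by
  set D : G → ℂ := fun h => ∑ m ∈ I with m + h ∈ I, eexp (fwdDiff h f m) with hD
  have hfirst : ‖∑ m ∈ I, eexp (f m)‖ ^ 2 ≤ ∑ h ∈ H, ‖D h‖ := by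
    have h := ofReal_sq_norm_sum_eq_sum_shift hH (fun m => eexp (f m))
    simp_rw [← eexp_sub] at h
    rw [← Real.norm_of_nonneg (sq_nonneg ‖_‖), ← Complex.norm_real, h]
    exact norm_sum_le _ _
  have hsecond (h : G) : ((‖D h‖ ^ 2 : ℝ) : ℂ) = ∑ h' ∈ H, ∑ m ∈ secondDiffDomain I h h',
      eexp (fwdDiff h' (fwdDiff h f) m) := by
    rw [hD, ofReal_sq_norm_sum_eq_sum_shift
      fun m hm m' hm' => hH m (mem_filter.1 hm).1 m' (mem_filter.1 hm').1]
    refine sum_congr rfl fun h' _ => sum_congr ?_ fun m _ => ?_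
    · ext m
      simp only [mem_filter, mem_secondDiffDomain]
      tauto
    · exact (eexp_sub _ _).symm
  calc ‖∑ m ∈ I, eexp (f m)‖ ^ 4 = (‖∑ m ∈ I, eexp (f m)‖ ^ 2) ^ 2 := by ring
    _ ≤ (∑ h ∈ H, ‖D h‖) ^ 2 := by gcongr
    _ ≤ #H * ∑ h ∈ H, ‖D h‖ ^ 2 := sq_sum_le_card_mul_sum_sq
    _ = _ := by
      simp_rw [← hsecond]
      rw [← Complex.ofReal_sum, Complex.ofReal_re]

theorem fwdDiff_fwdDiff_mul_cube (β : ℝ) (h h' m : ℤ) :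
    fwdDiff h' (fwdDiff h fun m : ℤ => β * (m : ℝ) ^ 3) m =
      β * ((3 * h * h' * (2 * m + h + h') : ℤ) : ℝ) := by
  simp only [fwdDiff]
  push_cast
  ring

end WeylDifferencing

section DivisorBound

variable {ε : ℝ}

theorem add_one_le_mul_pow_rpow (hε : 0 < ε) {x : ℝ} (hx : 2 ≤ x) (v : ℕ) :
    (v + 1 : ℝ) ≤ (1 + 1 / (ε * Real.log 2)) * (x ^ v) ^ ε := by
  have _ : 0 < Real.log 2 := Real.log_pos one_lt_two
  have hexp : 1 + v * (ε * Real.log 2) ≤ (x ^ v) ^ ε :=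
    calc 1 + v * (ε * Real.log 2) ≤ Real.exp (v * (ε * Real.log 2)) := by
          linarith [Real.add_one_le_exp (v * (ε * Real.log 2))]
      _ = ((2 : ℝ) ^ v) ^ ε := by
          rw [Real.rpow_def_of_pos (by positivity), Real.log_pow]
          ring_nf
      _ ≤ (x ^ v) ^ ε := by gcongr
  calc (v + 1 : ℝ) ≤ v + 1 + (v * (ε * Real.log 2) + 1 / (ε * Real.log 2)) :=
        le_add_of_nonneg_right (by positivity)
    _ = (1 + 1 / (ε * Real.log 2)) * (1 + v * (ε * Real.log 2)) := by field_simp; ring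
    _ ≤ _ := by gcongr

theorem add_one_le_pow_rpow (hε : 0 < ε) {x : ℝ} (hx : (2 : ℝ) ^ (1 / ε) ≤ x) (v : ℕ) :
    (v + 1 : ℝ) ≤ (x ^ v) ^ ε := by
  have hx0 : 0 ≤ x := le_trans (by positivity) hx
  have htwo : 2 ≤ x ^ ε := by
    have h := Real.rpow_le_rpow (by positivity) hx hε.le
    rwa [← Real.rpow_mul zero_le_two, one_div_mul_cancel hε.ne', Real.rpow_one] at h
  calc (v + 1 : ℝ) ≤ 2 ^ v := by exact_mod_cast Nat.lt_two_pow_self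
    _ ≤ (x ^ ε) ^ v := by gcongr
    _ = (x ^ v) ^ ε := (Real.rpow_pow_comm hx0 ε v)

theorem exists_card_divisors_le_rpow (hε : 0 < ε) :
    ∃ C : ℝ, 1 ≤ C ∧ ∀ n : ℕ, n ≠ 0 → (#n.divisors : ℝ) ≤ C * (n : ℝ) ^ ε := by
  set C₁ : ℝ := 1 + 1 / (ε * Real.log 2)
  set P₀ : ℕ := ⌈(2 : ℝ) ^ (1 / ε)⌉₊
  have hC₁1 : 1 ≤ C₁ :=
    le_add_of_nonneg_right (one_div_nonneg.2 (mul_nonneg hε.le (Real.log_pos one_lt_two).le))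
  have hfactor (n p : ℕ) (hp : p ∈ n.primeFactors) : ((n.factorization p + 1 : ℕ) : ℝ) ≤
      (if p < P₀ then C₁ else 1) * ((p : ℝ) ^ n.factorization p) ^ ε := by
    push_cast
    split_ifs with hlt
    · exact add_one_le_mul_pow_rpow hε
        (by exact_mod_cast (Nat.prime_of_mem_primeFactors hp).two_le) _
    · rw [one_mul]
      exact add_one_le_pow_rpow hε (Nat.ceil_le.1 (not_lt.1 hlt)) _
  refine ⟨C₁ ^ P₀, one_le_pow₀ hC₁1, fun n hn => ?_⟩
  have hpowers : ∏ p ∈ n.primeFactors, ((p : ℝ) ^ n.factorization p) ^ ε = (n : ℝ) ^ ε := by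
    rw [Real.finsetProd_rpow _ _ fun p _ => by positivity]
    exact_mod_cast congrArg (fun k : ℕ => (k : ℝ) ^ ε) (Nat.prod_factorization_pow_eq_self hn)
  have hsmall : ∏ p ∈ n.primeFactors, (if p < P₀ then C₁ else 1) ≤ C₁ ^ P₀ := by
    rw [prod_ite, prod_const, prod_const_one, mul_one]
    refine pow_le_pow_right₀ hC₁1 (le_trans (card_le_card fun p hp => ?_) (card_range P₀).le)
    exact mem_range.2 (mem_filter.1 hp).2
  rw [Nat.card_divisors hn, Nat.cast_prod, ← hpowers]
  refine (prod_le_prod (fun p _ => by positivity) (hfactor n)).trans ?_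
  rw [prod_mul_distrib]
  gcongr

theorem card_int_divisors_natCast (n : ℕ) : #(n : ℤ).divisors = 2 * #n.divisors := by
  rw [Int.divisors, card_disjUnion, card_map, card_map, Int.natAbs_natCast, two_mul]

end DivisorBound

section VinogradovLemma

/-- `q` is the denominator of a reduced fraction `a / q` with `|α - a / q| ≤ 1 / q ^ 2`, as
provided by Dirichlet's approximation theorem. -/
def IsApproxDenom (α : ℝ) (q : ℕ) : Prop :=
  1 ≤ q ∧ ∃ a : ℤ, Int.gcd a q = 1 ∧ |α - a / q| ≤ 1 / (q : ℝ) ^ 2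

variable {α N : ℝ} {q : ℕ}

theorem IsApproxDenom.cast_pos (hq : IsApproxDenom α q) : (0 : ℝ) < q := by
  exact_mod_cast hq.1

theorem sum_range_inv_add_one_le (n : ℕ) :
    ∑ i ∈ range n, ((i : ℝ) + 1)⁻¹ ≤ 1 + Real.log n := by
  simpa [harmonic] using harmonic_le_one_add_log n

theorem min_zmod_val_div_le_norm [NeZero q] {x δ : ℝ} {z : ℤ} (hx : q * x = z + δ) :
    min ((z : ZMod q).val : ℝ) (q - (z : ZMod q).val) / q ≤
      ‖(x : UnitAddCircle)‖ + |δ| / q := by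
  set ρ := (z : ZMod q).val with hρ
  have hq : (0 : ℝ) < q := by exact_mod_cast NeZero.pos q
  have hρq : ρ < q := ZMod.val_lt _
  obtain ⟨t, ht⟩ : (q : ℤ) ∣ z - ρ := by
    rw [hρ, ZMod.val_intCast]
    exact Int.dvd_self_sub_emod
  have hsplit : x = ρ / q + t + δ / q := by
    have htR : (z : ℝ) - ρ = q * t := by exact_mod_cast ht
    field_simp
    linarith
  have hres : ‖((ρ / q : ℝ) : UnitAddCircle)‖ = min (ρ : ℝ) (q - ρ) / q := by
    have h := AddCircle.norm_div_natCast (p := 1) (m := ρ) (n := q)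
    rw [Nat.mod_eq_of_lt hρq, mul_one, one_mul] at h
    rw [h, Nat.cast_min, Nat.cast_sub hρq.le]
  have hint : ((t : ℝ) : UnitAddCircle) = 0 := (AddCircle.coe_eq_zero_iff 1).2 ⟨t, by simp⟩
  have hδ : ‖((δ / q : ℝ) : UnitAddCircle)‖ ≤ |δ| / q := by
    rw [UnitAddCircle.norm_eq]
    simpa [abs_div] using round_le (δ / q) 0
  have hx' : ((ρ / q : ℝ) : UnitAddCircle) = x - ((δ / q : ℝ) : UnitAddCircle) := by
    rw [eq_sub_iff_add_eq, hsplit, AddCircle.coe_add, AddCircle.coe_add, hint, add_zero]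
  rw [← hres, hx']
  exact (norm_sub_le _ _).trans (by gcongr)

/-- A bound for `geomMajorant N x` when `q * x` is within `3 / 2` of an integer congruent to `ρ`
modulo `q`. The convention `0⁻¹ = 0` is harmless, as `ρ = 0` falls under the first case. -/
noncomputable def residueMajorant (N : ℝ) (q ρ : ℕ) : ℝ :=
  (if min ρ (q - ρ) ≤ 1 then N else 0) + 4 * q * ((ρ : ℝ)⁻¹ + ((q : ℝ) - ρ)⁻¹)

theorem geomMajorant_le_residueMajorant [NeZero q] (hN : 0 < N) {x δ : ℝ} {z : ℤ}
    (hx : q * x = z + δ) (hδ : |δ| ≤ 3 / 2) :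
    geomMajorant N x ≤ residueMajorant N q (z : ZMod q).val := by
  have hnorm := min_zmod_val_div_le_norm hx
  set ρ := (z : ZMod q).val
  have hq : (0 : ℝ) < q := by exact_mod_cast NeZero.pos q
  have hρq : (ρ : ℝ) ≤ q := by exact_mod_cast (ZMod.val_lt _).le
  have hinv : 0 ≤ (ρ : ℝ)⁻¹ ∧ 0 ≤ ((q : ℝ) - ρ)⁻¹ :=
    ⟨by positivity, inv_nonneg.2 (sub_nonneg.2 hρq)⟩
  rw [residueMajorant]
  split_ifs with hsmall
  · exact (geomMajorant_le hN x).trans (le_add_of_nonneg_right (by nlinarith))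
  set w : ℝ := min (ρ : ℝ) (q - ρ) with hw
  have hw2 : 2 ≤ w := by
    rw [hw, ← Nat.cast_sub (ZMod.val_lt _).le, ← Nat.cast_min]
    exact_mod_cast not_le.1 hsmall
  have hx_lower : w / (4 * q) ≤ ‖(x : UnitAddCircle)‖ := by
    have hδq : |δ| / q ≤ 3 / 2 / q := by gcongr
    have hgap : w / (4 * q) ≤ w / q - 3 / 2 / q := by
      rw [← sub_div, div_le_div_iff₀ (by positivity) hq]
      nlinarith
    linarith
  calc geomMajorant N x ≤ (w / (4 * q))⁻¹ :=
        inv_anti₀ (by positivity) (hx_lower.trans (le_add_of_nonneg_left (by positivity)))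
    _ = 4 * q * w⁻¹ := by rw [inv_div, div_eq_mul_inv]
    _ ≤ 4 * q * ((ρ : ℝ)⁻¹ + ((q : ℝ) - ρ)⁻¹) := by
        gcongr
        rcases min_choice (ρ : ℝ) (q - ρ) with h | h <;> rw [hw, h] <;> linarith
    _ = _ := (zero_add _).symm

theorem sum_residueMajorant_le (hN : 0 ≤ N) (q : ℕ) :
    ∑ ρ ∈ range q, residueMajorant N q ρ ≤ 3 * N + 8 * q * (1 + Real.log q) := by
  have hends : ∑ ρ ∈ range q, (if min ρ (q - ρ) ≤ 1 then N else 0) ≤ 3 * N := by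
    have hcard : #{ρ ∈ range q | min ρ (q - ρ) ≤ 1} ≤ 3 := by
      refine (card_le_card (t := {0, 1, q - 1}) fun ρ hρ => ?_).trans card_le_three
      simp only [mem_filter, mem_range, min_le_iff] at hρ
      simp only [mem_insert, mem_singleton]
      lia
    rw [← sum_filter, sum_const, nsmul_eq_mul]
    gcongr
    exact_mod_cast hcard
  have hleft : ∑ ρ ∈ range q, (ρ : ℝ)⁻¹ ≤ 1 + Real.log q := by
    calc ∑ ρ ∈ range q, (ρ : ℝ)⁻¹ ≤ ∑ ρ ∈ range (q + 1), (ρ : ℝ)⁻¹ :=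
          sum_le_sum_of_subset_of_nonneg (range_subset_range.2 q.le_succ) fun _ _ _ => by positivity
      _ = ∑ ρ ∈ range q, ((ρ : ℝ) + 1)⁻¹ := by simp [sum_range_succ']
      _ ≤ _ := sum_range_inv_add_one_le q
  have hright : ∑ ρ ∈ range q, ((q : ℝ) - ρ)⁻¹ ≤ 1 + Real.log q := by
    refine (le_of_eq ?_).trans (sum_range_inv_add_one_le q)
    rw [← sum_range_reflect]
    refine sum_congr rfl fun ρ hρ => ?_
    rw [Nat.sub_sub, Nat.cast_sub (by have := mem_range.1 hρ; lia)]
    push_cast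
    ring_nf
  simp only [residueMajorant, sum_add_distrib, ← mul_sum]
  nlinarith [Nat.cast_nonneg (α := ℝ) q]

theorem sum_range_natCast_zmod [NeZero q] {M : Type*} [AddCommMonoid M] (g : ZMod q → M) :
    ∑ j ∈ range q, g j = ∑ x, g x :=
  sum_nbij' (fun j : ℕ => (j : ZMod q)) ZMod.val (fun _ _ => mem_univ _)
    (fun x _ => mem_range.2 x.val_lt) (fun _ hj => ZMod.val_cast_of_lt (mem_range.1 hj))
    (fun x _ => ZMod.natCast_zmod_val x) fun _ _ => rfl

theorem sum_range_intCast_zmod_val [NeZero q] {a : ℤ} (ha : Int.gcd a q = 1) (c : ℤ)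
    (F : ℕ → ℝ) :
    ∑ j ∈ range q, F ((c + a * j : ℤ) : ZMod q).val = ∑ ρ ∈ range q, F ρ := by
  obtain ⟨u, hu⟩ := (ZMod.coe_int_isUnit_iff_isCoprime a q).2
    (Int.isCoprime_iff_gcd_eq_one.2 (by rwa [Int.gcd_comm]))
  have hF : ∑ ρ ∈ range q, F ρ = ∑ x : ZMod q, F x.val := by
    rw [← sum_range_natCast_zmod fun x : ZMod q => F x.val]
    exact sum_congr rfl fun ρ hρ => by rw [ZMod.val_cast_of_lt (mem_range.1 hρ)]
  rw [hF, ← (u.mulLeft.trans (Equiv.addLeft (c : ZMod q))).sum_comp, ← sum_range_natCast_zmod]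
  refine sum_congr rfl fun j _ => ?_
  simp [hu]

theorem sum_geomMajorant_block_le (hq : IsApproxDenom α q) (hN : 0 < N) (k : ℕ) :
    ∑ j ∈ range q, geomMajorant N (α * (k + j : ℕ)) ≤ 3 * N + 8 * q * (1 + Real.log q) := by
  have _ := hq.cast_pos
  obtain ⟨hq1, a, ha, hα⟩ := hq
  have : NeZero q := ⟨by lia⟩
  set c : ℤ := round (q * (α * k))
  have hterm (j : ℕ) (hj : j ∈ range q) : geomMajorant N (α * (k + j : ℕ)) ≤
      residueMajorant N q ((c + a * j : ℤ) : ZMod q).val := by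
    refine geomMajorant_le_residueMajorant hN
      (δ := (q * (α * k) - c) + q * j * (α - a / q)) ?_ ?_
    · push_cast
      field_simp
      ring
    have hround : |q * (α * k) - c| ≤ 1 / 2 := abs_sub_round _
    have hjq : (j : ℝ) ≤ q := by exact_mod_cast (mem_range.1 hj).le
    have hdrift : |q * j * (α - a / q)| ≤ 1 := by
      rw [abs_mul, abs_of_nonneg (by positivity)]
      calc (q * j : ℝ) * |α - a / q| ≤ (q * q) * (1 / (q : ℝ) ^ 2) := by gcongr
        _ = 1 := by field_simp
    linarith [abs_add_le (q * (α * k) - c) (q * j * (α - a / q))]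
  calc _ ≤ ∑ j ∈ range q, residueMajorant N q ((c + a * j : ℤ) : ZMod q).val := sum_le_sum hterm
    _ = ∑ ρ ∈ range q, residueMajorant N q ρ := sum_range_intCast_zmod_val ha c _
    _ ≤ _ := sum_residueMajorant_le hN.le q

theorem sum_geomMajorant_le (hq : IsApproxDenom α q) (hN : 0 < N) (K : ℕ) :
    ∑ k ∈ Icc 1 K, geomMajorant N (α * k) ≤ (K / q + 1) * (3 * N + 8 * q * (1 + Real.log q)) := by
  have hblocks (t : ℕ) : ∑ k ∈ range (t * q), geomMajorant N (α * (1 + k : ℕ)) ≤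
      t * (3 * N + 8 * q * (1 + Real.log q)) := by
    induction t with
    | zero => simp
    | succ t ih =>
      rw [add_mul, one_mul, sum_range_add]
      have hblock := sum_geomMajorant_block_le hq hN (1 + t * q)
      simp_rw [← add_assoc]
      push_cast at ih hblock ⊢
      linarith
  have hK : K ≤ (K / q + 1) * q := by
    rw [add_one_mul]
    exact (Nat.lt_div_mul_add hq.1).le
  calc ∑ k ∈ Icc 1 K, geomMajorant N (α * k)
      = ∑ k ∈ range K, geomMajorant N (α * (1 + k : ℕ)) := by
        rw [← Ico_succ_right_eq_Icc, sum_Ico_eq_sum_range, Nat.succ_eq_succ,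
          Nat.succ_sub_one]
    _ ≤ ∑ k ∈ range ((K / q + 1) * q), geomMajorant N (α * (1 + k : ℕ)) :=
        sum_le_sum_of_subset_of_nonneg (range_subset_range.2 hK)
          fun _ _ _ => geomMajorant_nonneg hN.le _
    _ ≤ ((K / q + 1 : ℕ) : ℝ) * (3 * N + 8 * q * (1 + Real.log q)) := hblocks _
    _ ≤ _ := by
        have _ : 0 ≤ Real.log q := Real.log_natCast_nonneg q
        gcongr
        push_cast
        gcongr
        exact Nat.cast_div_le

theorem sum_comp_le_mul_sum {ι κ : Type*} [DecidableEq κ] {s : Finset ι} {t : Finset κ}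
    {φ : ι → κ} (hφ : ∀ i ∈ s, φ i ∈ t) {R : ℝ} (hR : ∀ k ∈ t, (#{i ∈ s | φ i = k} : ℝ) ≤ R)
    {F : κ → ℝ} (hF : ∀ k ∈ t, 0 ≤ F k) :
    ∑ i ∈ s, F (φ i) ≤ R * ∑ k ∈ t, F k := by
  rw [← sum_fiberwise_of_maps_to' hφ, mul_sum]
  refine sum_le_sum fun k hk => ?_
  rw [sum_const, nsmul_eq_mul]
  exact mul_le_mul_of_nonneg_right (hR k hk) (hF k hk)

theorem card_filter_mul_prod_natAbs_eq_le {ι : Type*} {r : ℕ} {s : Finset ι} {φ : ι → Fin r → ℤ}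
    (hinj : Set.InjOn φ s) (c : ℕ) {k : ℕ} (hk : k ≠ 0) :
    #{i ∈ s | c * ∏ j, (φ i j).natAbs = k} ≤ (2 * #k.divisors) ^ r := by
  rw [← card_int_divisors_natCast, ← Fintype.card_piFinset_const]
  refine card_le_card_of_injOn φ (fun i hi => ?_) (hinj.mono (coe_subset.2 (filter_subset _ _)))
  refine Fintype.mem_piFinset.2 fun j => Int.mem_divisors.2 ⟨?_, by exact_mod_cast hk⟩
  rw [← Int.natAbs_dvd_natAbs, Int.natAbs_natCast, ← (mem_filter.1 hi).2]
  exact (dvd_prod_of_mem (fun j => (φ i j).natAbs) (mem_univ j)).mul_left c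

theorem sum_geomMajorant_mul_prod_le (hq : IsApproxDenom α q) (hN : 0 < N) {ι : Type*} {r : ℕ}
    {s : Finset ι} {φ : ι → Fin r → ℤ} (hinj : Set.InjOn φ s) (hφ : ∀ i ∈ s, ∀ j, φ i j ≠ 0)
    {c : ℕ} (hc : c ≠ 0) {K : ℕ} (hK : ∀ i ∈ s, c * ∏ j, (φ i j).natAbs ≤ K) {Z : ℝ} (hZ : 1 ≤ Z)
    (hlog : 1 + Real.log q ≤ Z) (hdiv : ∀ k : ℕ, k ≠ 0 → k ≤ K → (#k.divisors : ℝ) ≤ Z) :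
    ∑ i ∈ s, geomMajorant N (α * (c * ∏ j, (φ i j : ℝ))) ≤
      (2 * Z) ^ r * (8 * Z * (K * N / q + K + N + q)) := by
  have hq0 := hq.cast_pos
  have hsize : (K / q + 1) * (3 * N + 8 * q * (1 + Real.log q)) ≤
      8 * Z * (K * N / q + K + N + q) :=
    calc (K / q + 1) * (3 * N + 8 * q * (1 + Real.log q))
        ≤ (K / q + 1) * (8 * (Z * N) + 8 * q * Z) := by
          gcongr
          · norm_num
          · exact le_mul_of_one_le_left hN.le hZ
      _ = 8 * Z * (K * N / q + K + N + q) := by field_simp; ring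
  have hmap (i : ι) (hi : i ∈ s) : c * ∏ j, (φ i j).natAbs ∈ Icc 1 K := by
    refine mem_Icc.2 ⟨Nat.one_le_iff_ne_zero.2 (mul_ne_zero hc ?_), hK i hi⟩
    exact prod_ne_zero_iff.2 fun j _ => Int.natAbs_ne_zero.2 (hφ i hi j)
  have hfibre (k : ℕ) (hk : k ∈ Icc 1 K) :
      (#{i ∈ s | c * ∏ j, (φ i j).natAbs = k} : ℝ) ≤ (2 * Z) ^ r := by
    have hk0 : k ≠ 0 := Nat.one_le_iff_ne_zero.1 (mem_Icc.1 hk).1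
    calc (#{i ∈ s | c * ∏ j, (φ i j).natAbs = k} : ℝ) ≤ ((2 * #k.divisors) ^ r : ℕ) :=
          Nat.cast_le.2 (card_filter_mul_prod_natAbs_eq_le hinj c hk0)
      _ ≤ (2 * Z) ^ r := by
        push_cast
        gcongr
        exact hdiv k hk0 (mem_Icc.1 hk).2
  have habs (i : ι) : geomMajorant N (α * (c * ∏ j, (φ i j : ℝ))) =
      geomMajorant N (α * (c * ∏ j, (φ i j).natAbs : ℕ)) := by
    rw [← geomMajorant_mul_abs, abs_mul, abs_prod, Nat.abs_cast, Nat.cast_mul, Nat.cast_prod]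
    simp only [Nat.cast_natAbs, Int.cast_abs]
  calc ∑ i ∈ s, geomMajorant N (α * (c * ∏ j, (φ i j : ℝ)))
      = ∑ i ∈ s, geomMajorant N (α * (c * ∏ j, (φ i j).natAbs : ℕ)) :=
        sum_congr rfl fun i _ => habs i
    _ ≤ (2 * Z) ^ r * ∑ k ∈ Icc 1 K, geomMajorant N (α * k) :=
        sum_comp_le_mul_sum (F := fun k : ℕ => geomMajorant N (α * k)) hmap hfibre
          fun _ _ => geomMajorant_nonneg hN.le _
    _ ≤ _ := mul_le_mul_of_nonneg_left
        ((sum_geomMajorant_le hq hN K).trans hsize) (by positivity)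

end VinogradovLemma

section WeylInequality

theorem sum_product_self_le_sum_erase_add {ι : Type*} [DecidableEq ι] (s : Finset ι) (a : ι)
    {Q : ι × ι → ℝ} {B : ℝ} (hB : 0 ≤ B) (hQ : ∀ p ∈ s ×ˢ s, Q p ≤ B) :
    ∑ p ∈ s ×ˢ s, Q p ≤ ∑ p ∈ s.erase a ×ˢ s.erase a, Q p + 2 * #s * B := by
  have hsub : s.erase a ×ˢ s.erase a ⊆ s ×ˢ s :=
    product_subset_product (erase_subset a s) (erase_subset a s)
  have hcard : #((s ×ˢ s) \ (s.erase a ×ˢ s.erase a)) ≤ 2 * #s :=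
    calc #((s ×ˢ s) \ (s.erase a ×ˢ s.erase a)) ≤ #(({a} ×ˢ s) ∪ (s ×ˢ {a})) := by
          refine card_le_card fun p hp => ?_
          simp only [mem_sdiff, mem_product, mem_erase, mem_union, mem_singleton] at hp ⊢
          tauto
      _ ≤ #s + #s := by simpa using card_union_le ({a} ×ˢ s) (s ×ˢ {a})
      _ = 2 * #s := (two_mul _).symm
  calc ∑ p ∈ s ×ˢ s, Q p
      = ∑ p ∈ s.erase a ×ˢ s.erase a, Q p + ∑ p ∈ (s ×ˢ s) \ (s.erase a ×ˢ s.erase a), Q p := by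
        rw [add_comm, sum_sdiff hsub]
    _ ≤ ∑ p ∈ s.erase a ×ˢ s.erase a, Q p + #((s ×ˢ s) \ (s.erase a ×ˢ s.erase a)) * B := by
        rw [← nsmul_eq_mul]
        gcongr
        exact sum_le_card_nsmul _ _ _ fun p hp => hQ p (sdiff_subset hp)
    _ ≤ ∑ p ∈ s.erase a ×ˢ s.erase a, Q p + 2 * #s * B := by
        gcongr
        exact_mod_cast hcard

/-- The integers of absolute value less than `M`: the possible differences of two elements of an
interval of `M` integers. -/
noncomputable def differenceInterval (M : ℕ) : Finset ℤ := Ioo (-(M : ℤ)) M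

/-- The nonzero elements of `differenceInterval M`. -/
noncomputable def nonzeroDifferences (M : ℕ) : Finset ℤ := (differenceInterval M).erase 0

theorem card_differenceInterval_le (M : ℕ) : #(differenceInterval M) ≤ 2 * M := by
  rw [differenceInterval, Int.card_Ioo]
  lia

theorem card_nonzeroDifferences_le (M : ℕ) : #(nonzeroDifferences M) ≤ 2 * M :=
  (card_erase_le).trans (card_differenceInterval_le M)

theorem sub_mem_differenceInterval {A m m' : ℤ} {M : ℕ} (hm : m ∈ Ico A (A + M))
    (hm' : m' ∈ Ico A (A + M)) : m' - m ∈ differenceInterval M := by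
  rw [differenceInterval, mem_Ioo]
  rw [mem_Ico] at hm hm'
  lia

theorem mem_nonzeroDifferences {M : ℕ} {h : ℤ} :
    h ∈ nonzeroDifferences M ↔ h ≠ 0 ∧ h.natAbs < M := by
  rw [nonzeroDifferences, differenceInterval, mem_erase, mem_Ioo]
  lia

theorem norm_sum_secondDiffDomain_eexp_cube_le {N : ℕ} (hN : 1 ≤ N) {J : Finset ℤ}
    (hJ : (J : Set ℤ).OrdConnected) (hcard : #J ≤ N) (γ : ℝ) (h h' : ℤ) :
    ‖∑ m ∈ secondDiffDomain J h h',
      eexp (fwdDiff h' (fwdDiff h fun m : ℤ => γ * (m : ℝ) ^ 3) m)‖ ≤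
        2 * geomMajorant N (γ * (6 * h * h')) := by
  have harg (m : ℤ) : fwdDiff h' (fwdDiff h fun m : ℤ => γ * (m : ℝ) ^ 3) m =
      γ * (6 * h * h') * m + γ * (3 * h * h' * (h + h')) := by
    rw [fwdDiff_fwdDiff_mul_cube]
    push_cast
    ring
  simp_rw [harg]
  exact norm_sum_eexp_linear_le _ _ (ordConnected_secondDiffDomain hJ h h') (by exact_mod_cast hN)
    (by exact_mod_cast (card_secondDiffDomain_le J h h').trans hcard)

theorem norm_sum_eexp_cube_pow_four_le {N : ℕ} (hN : 1 ≤ N) {A : ℤ} {J : Finset ℤ}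
    (hJ : (J : Set ℤ).OrdConnected) (hJA : J ⊆ Ico A (A + N)) (γ : ℝ) :
    ‖∑ n ∈ J, eexp (γ * (n : ℝ) ^ 3)‖ ^ 4 ≤ 16 * (N : ℝ) ^ 3 +
      4 * N * ∑ p ∈ nonzeroDifferences N ×ˢ nonzeroDifferences N,
        geomMajorant N (γ * (6 * p.1 * p.2)) := by
  set H := differenceInterval N
  set G : ℤ × ℤ → ℝ := fun p => 2 * geomMajorant N (γ * (6 * p.1 * p.2))
  have hN0 : (0 : ℝ) < N := by exact_mod_cast hN
  have hH : (#H : ℝ) ≤ 2 * N := by exact_mod_cast card_differenceInterval_le N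
  have hcard : #J ≤ N := by simpa using card_le_card hJA
  have hG0 (p : ℤ × ℤ) : 0 ≤ G p := mul_nonneg zero_le_two (geomMajorant_nonneg hN0.le _)
  have hG (p : ℤ × ℤ) : G p ≤ 2 * N := mul_le_mul_of_nonneg_left (geomMajorant_le hN0 _) zero_le_two
  calc ‖∑ n ∈ J, eexp (γ * (n : ℝ) ^ 3)‖ ^ 4
      ≤ #H * (∑ h ∈ H, ∑ h' ∈ H, ∑ m ∈ secondDiffDomain J h h',
          eexp (fwdDiff h' (fwdDiff h fun m : ℤ => γ * (m : ℝ) ^ 3) m)).re :=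
        norm_sum_eexp_pow_four_le (fun m hm m' hm' =>
          sub_mem_differenceInterval (hJA hm) (hJA hm')) fun m : ℤ => γ * (m : ℝ) ^ 3
    _ ≤ #H * ∑ h ∈ H, ∑ h' ∈ H, G (h, h') := by
        gcongr
        refine (Complex.re_le_norm _).trans (norm_sum_le_of_le _ fun h _ => ?_)
        exact norm_sum_le_of_le _ fun h' _ =>
          norm_sum_secondDiffDomain_eexp_cube_le hN hJ hcard γ h h'
    _ ≤ #H * (∑ p ∈ H.erase 0 ×ˢ H.erase 0, G p + 2 * #H * (2 * N)) := by
        gcongr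
        rw [← sum_product']
        exact sum_product_self_le_sum_erase_add H 0 (by positivity) fun p _ => hG p
    _ ≤ 2 * N * (∑ p ∈ H.erase 0 ×ˢ H.erase 0, G p + 2 * (2 * N) * (2 * N)) := by
        have _ := sum_nonneg fun p (_ : p ∈ H.erase 0 ×ˢ H.erase 0) => hG0 p
        gcongr
    _ = _ := by
        simp only [G, ← mul_sum]
        rw [nonzeroDifferences]
        ring

theorem sum_Ioc_natCast_int {M : Type*} [AddCommMonoid M] (Y : ℕ) (F : ℤ → M) :
    ∑ n ∈ Ioc 0 Y, F n = ∑ n ∈ Icc (1 : ℤ) Y, F n :=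
  sum_nbij' (fun n : ℕ => (n : ℤ)) Int.toNat (by simp; lia) (by simp; lia) (by simp)
    (by simp; lia) fun _ _ => rfl

theorem sum_geomMajorant_nonzeroDifferences_le {α : ℝ} {q : ℕ} (hq : IsApproxDenom α q) {N : ℕ}
    (hN : 1 ≤ N) {Z : ℝ} (hZ : 1 ≤ Z) (hlog : 1 + Real.log q ≤ Z)
    (hdiv : ∀ k : ℕ, k ≠ 0 → k ≤ 6 * N ^ 2 → (#k.divisors : ℝ) ≤ Z) :
    ∑ p ∈ nonzeroDifferences N ×ˢ nonzeroDifferences N, geomMajorant N (α * (6 * p.1 * p.2)) ≤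
      (2 * Z) ^ 2 * (8 * Z * ((6 * N ^ 2 : ℕ) * N / q + (6 * N ^ 2 : ℕ) + N + q)) := by
  have hgeom := sum_geomMajorant_mul_prod_le (N := N) hq (by exact_mod_cast hN)
    (s := nonzeroDifferences N ×ˢ nonzeroDifferences N)
    (φ := fun p => ![p.1, p.2]) (c := 6) (K := 6 * N ^ 2)
    (fun p _ p' _ hpp' => by simpa [Prod.ext_iff] using hpp')
    (fun p hp j => by
      simp only [mem_product, mem_nonzeroDifferences] at hp
      fin_cases j
      exacts [hp.1.1, hp.2.1]) (by norm_num)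
    (fun p hp => by
      simp only [mem_product, mem_nonzeroDifferences] at hp
      simp only [Fin.prod_univ_two, Matrix.cons_val_zero, Matrix.cons_val_one]
      nlinarith [Nat.mul_le_mul hp.1.2.le hp.2.2.le]) hZ hlog hdiv
  simpa only [Fin.prod_univ_two, Matrix.cons_val_zero, Matrix.cons_val_one, Nat.cast_ofNat,
    ← mul_assoc (6 : ℝ)] using hgeom

theorem norm_sum_Ioc_eexp_cube_pow_four_le {α : ℝ} {q : ℕ} (hq : IsApproxDenom α q) {N Y : ℕ}
    (hN : 1 ≤ N) (hY : Y ≤ N) {Z : ℝ} (hZ : 1 ≤ Z) (hlog : 1 + Real.log q ≤ Z)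
    (hdiv : ∀ k : ℕ, k ≠ 0 → k ≤ 6 * N ^ 2 → (#k.divisors : ℝ) ≤ Z) :
    ‖∑ n ∈ Ioc 0 Y, eexp (α * (n : ℝ) ^ 3)‖ ^ 4 ≤
      1000 * Z ^ 3 * ((N : ℝ) ^ 3 + (N : ℝ) ^ 4 / q + N * q) := by
  have hN1 : (1 : ℝ) ≤ N := by exact_mod_cast hN
  have hq0 := hq.cast_pos
  have hweyl : ‖∑ n ∈ Ioc 0 Y, eexp (α * (n : ℝ) ^ 3)‖ ^ 4 ≤ 16 * (N : ℝ) ^ 3 +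
      4 * N * ∑ p ∈ nonzeroDifferences N ×ˢ nonzeroDifferences N,
        geomMajorant N (α * (6 * p.1 * p.2)) := by
    have hsub : Icc (1 : ℤ) Y ⊆ Ico 1 (1 + N) := fun n hn => by
      rw [mem_Icc] at hn
      rw [mem_Ico]
      lia
    have h := norm_sum_eexp_cube_pow_four_le hN
      (by rw [coe_Icc]; exact Set.ordConnected_Icc) hsub α
    rw [← sum_Ioc_natCast_int Y fun n : ℤ => eexp (α * (n : ℝ) ^ 3)] at h
    exact_mod_cast h
  have hZ3 : 1 ≤ Z ^ 3 := one_le_pow₀ hZ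
  calc ‖∑ n ∈ Ioc 0 Y, eexp (α * (n : ℝ) ^ 3)‖ ^ 4
      ≤ 16 * (N : ℝ) ^ 3 + 4 * N *
          ((2 * Z) ^ 2 * (8 * Z * ((6 * N ^ 2 : ℕ) * N / q + (6 * N ^ 2 : ℕ) + N + q))) := by
        grw [hweyl, sum_geomMajorant_nonzeroDifferences_le hq hN hZ hlog hdiv]
    _ = 16 * (N : ℝ) ^ 3 +
          Z ^ 3 * (768 * (N ^ 4 / q) + 768 * N ^ 3 + 128 * N ^ 2 + 128 * (N * q)) := by
        push_cast
        field_simp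
        ring
    _ ≤ 16 * (Z ^ 3 * (N : ℝ) ^ 3) +
          Z ^ 3 * (768 * (N ^ 4 / q) + 768 * N ^ 3 + 128 * N ^ 3 + 128 * (N * q)) := by
        gcongr
        · exact le_mul_of_one_le_left (by positivity) hZ3
        · norm_num
    _ = Z ^ 3 * (912 * N ^ 3 + 768 * (N ^ 4 / q) + 128 * (N * q)) := by ring
    _ ≤ Z ^ 3 * (1000 * N ^ 3 + 1000 * (N ^ 4 / q) + 1000 * (N * q)) := by gcongr <;> norm_num
    _ = _ := by ring

end WeylInequality

section BilinearSum

theorem sq_norm_bilinear_sum_le {ι κ : Type*} (s : Finset ι) (t : Finset κ) {u : ι → ℂ}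
    {v : κ → ℂ} {A B : ℝ} (hu : ∀ m ∈ s, ‖u m‖ ≤ A) (hv : ∀ n ∈ t, ‖v n‖ ≤ B) (K : ι → κ → ℂ) :
    ‖∑ m ∈ s, ∑ n ∈ t, u m * v n * K m n‖ ^ 2 ≤
      (A * B) ^ 2 * (#s * ∑ n₁ ∈ t, ∑ n₂ ∈ t, ‖∑ m ∈ s, K m n₁ * conj (K m n₂)‖) := by
  have hexpand : ((∑ m ∈ s, ‖∑ n ∈ t, v n * K m n‖ ^ 2 : ℝ) : ℂ) =
      ∑ n₁ ∈ t, ∑ n₂ ∈ t, v n₁ * conj (v n₂) * ∑ m ∈ s, K m n₁ * conj (K m n₂) := by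
    simp_rw [Complex.ofReal_sum, ofReal_sq_norm_sum, mul_sum]
    rw [sum_comm]
    refine sum_congr rfl fun n₁ _ => sum_comm.trans ?_
    refine sum_congr rfl fun n₂ _ => sum_congr rfl fun m _ => ?_
    rw [map_mul]
    ring
  have hsquares : ∑ m ∈ s, ‖∑ n ∈ t, v n * K m n‖ ^ 2 ≤
      B ^ 2 * ∑ n₁ ∈ t, ∑ n₂ ∈ t, ‖∑ m ∈ s, K m n₁ * conj (K m n₂)‖ := by
    simp_rw [mul_sum (a := B ^ 2)]
    rw [← Real.norm_of_nonneg (sum_nonneg fun m (_ : m ∈ s) => sq_nonneg ‖∑ n ∈ t, v n * K m n‖),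
      ← Complex.norm_real, hexpand]
    refine norm_sum_le_of_le _ fun n₁ h₁ => norm_sum_le_of_le _ fun n₂ h₂ => ?_
    rw [norm_mul, norm_mul, RCLike.norm_conj, sq]
    gcongr
    exacts [(norm_nonneg _).trans (hv n₁ h₁), hv n₁ h₁, hv n₂ h₂]
  calc ‖∑ m ∈ s, ∑ n ∈ t, u m * v n * K m n‖ ^ 2
      ≤ (A * ∑ m ∈ s, ‖∑ n ∈ t, v n * K m n‖) ^ 2 := by
        rw [mul_sum]
        gcongr
        refine norm_sum_le_of_le _ fun m hm => ?_
        simp_rw [mul_assoc, ← mul_sum, norm_mul]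
        gcongr
        exact hu m hm
    _ ≤ A ^ 2 * (#s * ∑ m ∈ s, ‖∑ n ∈ t, v n * K m n‖ ^ 2) := by
        rw [mul_pow]
        gcongr
        exact sq_sum_le_card_mul_sum_sq
    _ ≤ A ^ 2 * (#s * (B ^ 2 * ∑ n₁ ∈ t, ∑ n₂ ∈ t, ‖∑ m ∈ s, K m n₁ * conj (K m n₂)‖)) := by
        gcongr
    _ = _ := by ring

/-- The integers `M ≤ m < 2 M`. -/
noncomputable def dyadicBlock (M : ℕ) : Finset ℤ := Ico (M : ℤ) (M + M)

theorem card_dyadicBlock (M : ℕ) : #(dyadicBlock M) = M := by simp [dyadicBlock]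

theorem mem_dyadicBlock {M : ℕ} {m : ℤ} : m ∈ dyadicBlock M ↔ (M : ℤ) ≤ m ∧ m < M + M := mem_Ico

/-- The cubic phase `eexp (α * (m * n) ^ 3)` cut off to the hyperbolic region `m * n ≤ X`. -/
noncomputable def cubicKernel (X : ℕ) (α : ℝ) (m n : ℤ) : ℂ :=
  if m * n ≤ X then eexp (α * (m * n : ℤ) ^ 3) else 0

/-- The part of the block of `n` on which all four points `m`, `m + h`, `m + h'`, `m + h + h'` of
the differenced sum over `m` satisfy the hyperbolic condition. -/
noncomputable def hyperbolicDiffDomain (N X : ℕ) (h h' m : ℤ) : Finset ℤ :=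
  {n ∈ dyadicBlock N | m * n ≤ X ∧ (m + h) * n ≤ X ∧ (m + h') * n ≤ X ∧ (m + h' + h) * n ≤ X}

/-- The sum over `n` that remains after Weyl differencing in `m`. -/
noncomputable def differencedSum (N X : ℕ) (α : ℝ) (h h' m : ℤ) : ℂ :=
  ∑ n ∈ hyperbolicDiffDomain N X h h' m, eexp (α * (3 * h * h' * (2 * m + h + h') : ℤ) * n ^ 3)

variable {M N X : ℕ} {α : ℝ}

theorem card_hyperbolicDiffDomain_le (N X : ℕ) (h h' m : ℤ) :
    #(hyperbolicDiffDomain N X h h' m) ≤ N :=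
  (card_filter_le _ _).trans (card_dyadicBlock N).le

theorem norm_differencedSum_le (N X : ℕ) (α : ℝ) (h h' m : ℤ) :
    ‖differencedSum N X α h h' m‖ ≤ N :=
  calc ‖differencedSum N X α h h' m‖ ≤ ∑ _ ∈ hyperbolicDiffDomain N X h h' m, (1 : ℝ) :=
        norm_sum_le_of_le _ fun _ _ => (norm_eexp _).le
    _ ≤ N := by simpa using card_hyperbolicDiffDomain_le N X h h' m

theorem sum_cubicKernel_mul_conj (s : Finset ℤ) (X : ℕ) (α : ℝ) (n₁ n₂ : ℤ) :
    ∑ m ∈ s, cubicKernel X α m n₁ * conj (cubicKernel X α m n₂) =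
      ∑ m ∈ s with m * n₁ ≤ X ∧ m * n₂ ≤ X, eexp (α * (n₁ ^ 3 - n₂ ^ 3 : ℤ) * m ^ 3) := by
  rw [sum_filter]
  refine sum_congr rfl fun m _ => ?_
  have hphase : α * (n₁ ^ 3 - n₂ ^ 3 : ℤ) * m ^ 3 =
      α * (m * n₁ : ℤ) ^ 3 - α * (m * n₂ : ℤ) ^ 3 := by
    push_cast
    ring
  rw [cubicKernel, cubicKernel, hphase, eexp_sub]
  by_cases h₁ : m * n₁ ≤ X <;> by_cases h₂ : m * n₂ ≤ X <;> simp [h₁, h₂]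

theorem norm_sum_cubicKernel_pow_four_le {n₁ n₂ : ℤ} (hn₁ : n₁ ∈ dyadicBlock N)
    (hn₂ : n₂ ∈ dyadicBlock N) :
    ‖∑ m ∈ dyadicBlock M, cubicKernel X α m n₁ * conj (cubicKernel X α m n₂)‖ ^ 4 ≤
      #(differenceInterval M) * (∑ x ∈ (differenceInterval M ×ˢ differenceInterval M).sigma
        fun p => secondDiffDomain (dyadicBlock M) p.1 p.2,
        if n₁ ∈ hyperbolicDiffDomain N X x.1.1 x.1.2 x.2 ∧
            n₂ ∈ hyperbolicDiffDomain N X x.1.1 x.1.2 x.2 then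
          eexp (α * (n₁ ^ 3 - n₂ ^ 3 : ℤ) *
            (3 * x.1.1 * x.1.2 * (2 * x.2 + x.1.1 + x.1.2) : ℤ)) else 0).re := by
  set I := {m ∈ dyadicBlock M | m * n₁ ≤ X ∧ m * n₂ ≤ X}
  rw [sum_cubicKernel_mul_conj]
  refine (norm_sum_eexp_pow_four_le (fun m hm m' hm' => sub_mem_differenceInterval
    (mem_filter.1 hm).1 (mem_filter.1 hm').1)
    (fun m : ℤ => α * (n₁ ^ 3 - n₂ ^ 3 : ℤ) * (m : ℝ) ^ 3)).trans_eq ?_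
  rw [← sum_product', sum_sigma]
  congr 2
  refine sum_congr rfl fun p _ => ?_
  rw [← sum_filter]
  refine sum_congr ?_ fun m _ => by rw [fwdDiff_fwdDiff_mul_cube]
  ext m
  simp only [mem_secondDiffDomain, mem_filter, hyperbolicDiffDomain, hn₁, hn₂]
  tauto

theorem sum_sum_ite_eq_sq_norm_differencedSum (N X : ℕ) (α : ℝ) (h h' m : ℤ) :
    (∑ n₁ ∈ dyadicBlock N, ∑ n₂ ∈ dyadicBlock N,
      if n₁ ∈ hyperbolicDiffDomain N X h h' m ∧ n₂ ∈ hyperbolicDiffDomain N X h h' m then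
        eexp (α * (n₁ ^ 3 - n₂ ^ 3 : ℤ) * (3 * h * h' * (2 * m + h + h') : ℤ)) else 0) =
      ((‖differencedSum N X α h h' m‖ ^ 2 : ℝ) : ℂ) := by
  have hJ : dyadicBlock N ∩ hyperbolicDiffDomain N X h h' m = hyperbolicDiffDomain N X h h' m :=
    inter_eq_right.2 (filter_subset _ _)
  simp_rw [ite_and, sum_ite_irrel, sum_const_zero, sum_ite_mem, hJ]
  rw [differencedSum, ofReal_sq_norm_sum]
  refine sum_congr rfl fun n₁ _ => sum_congr rfl fun n₂ _ => ?_
  rw [← eexp_sub]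
  congr 1
  push_cast
  ring

theorem sum_norm_sum_cubicKernel_pow_four_le (M N X : ℕ) (α : ℝ) :
    ∑ n₁ ∈ dyadicBlock N, ∑ n₂ ∈ dyadicBlock N,
        ‖∑ m ∈ dyadicBlock M, cubicKernel X α m n₁ * conj (cubicKernel X α m n₂)‖ ^ 4 ≤
      #(differenceInterval M) * ∑ x ∈ (differenceInterval M ×ˢ differenceInterval M).sigma
        fun p => secondDiffDomain (dyadicBlock M) p.1 p.2,
        ‖differencedSum N X α x.1.1 x.1.2 x.2‖ ^ 2 := by
  refine (sum_le_sum fun n₁ hn₁ => sum_le_sum fun n₂ hn₂ =>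
    norm_sum_cubicKernel_pow_four_le hn₁ hn₂).trans_eq ?_
  simp_rw [← mul_sum, ← Complex.re_sum]
  rw [sum_congr rfl fun n₁ _ => sum_comm, sum_comm]
  simp_rw [sum_sum_ite_eq_sq_norm_differencedSum]
  rw [← Complex.ofReal_sum, Complex.ofReal_re]

/-- The triples `((h, h'), m)` that survive Weyl differencing of a sum over `dyadicBlock M`, with
both differences nonzero. -/
noncomputable def nondegenerateTriples (M : ℕ) : Finset (Σ _ : ℤ × ℤ, ℤ) :=
  (nonzeroDifferences M ×ˢ nonzeroDifferences M).sigma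
    fun p => secondDiffDomain (dyadicBlock M) p.1 p.2

theorem card_nondegenerateTriples_le (M : ℕ) : #(nondegenerateTriples M) ≤ 4 * M ^ 3 :=
  calc #(nondegenerateTriples M)
      ≤ ∑ _ ∈ nonzeroDifferences M ×ˢ nonzeroDifferences M, M := by
        rw [nondegenerateTriples, card_sigma]
        exact sum_le_sum fun p _ =>
          (card_secondDiffDomain_le _ _ _).trans (card_dyadicBlock M).le
    _ = #(nonzeroDifferences M) * #(nonzeroDifferences M) * M := by
        rw [sum_const, card_product, smul_eq_mul]
    _ ≤ 2 * M * (2 * M) * M := by gcongr <;> exact card_nonzeroDifferences_le M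
    _ = 4 * M ^ 3 := by ring

theorem sum_sq_norm_differencedSum_le (M N X : ℕ) (α : ℝ) :
    ∑ x ∈ (differenceInterval M ×ˢ differenceInterval M).sigma
        (fun p => secondDiffDomain (dyadicBlock M) p.1 p.2),
        ‖differencedSum N X α x.1.1 x.1.2 x.2‖ ^ 2 ≤
      ∑ x ∈ nondegenerateTriples M, ‖differencedSum N X α x.1.1 x.1.2 x.2‖ ^ 2 +
        4 * M ^ 2 * N ^ 2 := by
  have hH : (#(differenceInterval M) : ℝ) ≤ 2 * M := by exact_mod_cast card_differenceInterval_le M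
  have hinner (p : ℤ × ℤ) : ∑ m ∈ secondDiffDomain (dyadicBlock M) p.1 p.2,
      ‖differencedSum N X α p.1 p.2 m‖ ^ 2 ≤ M * N ^ 2 :=
    calc _ ≤ #(secondDiffDomain (dyadicBlock M) p.1 p.2) • (N : ℝ) ^ 2 :=
          sum_le_card_nsmul _ _ _ fun m _ => by grw [norm_differencedSum_le N X α p.1 p.2 m]
      _ ≤ M * N ^ 2 := by
          rw [nsmul_eq_mul]
          gcongr
          exact (card_secondDiffDomain_le _ _ _).trans (card_dyadicBlock M).le
  rw [nondegenerateTriples, sum_sigma, sum_sigma, nonzeroDifferences]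
  calc _ ≤ _ + 2 * #(differenceInterval M) * ((M : ℝ) * N ^ 2) :=
        sum_product_self_le_sum_erase_add _ 0 (by positivity) fun p _ => hinner p
    _ ≤ _ + 2 * (2 * M) * ((M : ℝ) * N ^ 2) := by gcongr
    _ = _ := by ring

theorem ordConnected_hyperbolicDiffDomain {h h' m : ℤ} (h₁ : 0 ≤ m) (h₂ : 0 ≤ m + h)
    (h₃ : 0 ≤ m + h') (h₄ : 0 ≤ m + h' + h) :
    (hyperbolicDiffDomain N X h h' m : Set ℤ).OrdConnected := by
  refine ⟨fun x hx y hy z ⟨hxz, hzy⟩ => ?_⟩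
  simp only [mem_coe, hyperbolicDiffDomain, mem_filter, mem_dyadicBlock] at hx hy ⊢
  obtain ⟨hyN, hy₁, hy₂, hy₃, hy₄⟩ := hy
  exact ⟨by lia, (mul_le_mul_of_nonneg_left hzy h₁).trans hy₁,
    (mul_le_mul_of_nonneg_left hzy h₂).trans hy₂, (mul_le_mul_of_nonneg_left hzy h₃).trans hy₃,
    (mul_le_mul_of_nonneg_left hzy h₄).trans hy₄⟩

theorem mem_nondegenerateTriples {x : Σ _ : ℤ × ℤ, ℤ} :
    x ∈ nondegenerateTriples M ↔ (x.1.1 ∈ nonzeroDifferences M ∧ x.1.2 ∈ nonzeroDifferences M) ∧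
      x.2 ∈ dyadicBlock M ∧ x.2 + x.1.1 ∈ dyadicBlock M ∧ x.2 + x.1.2 ∈ dyadicBlock M ∧
      x.2 + x.1.2 + x.1.1 ∈ dyadicBlock M := by
  rw [nondegenerateTriples, mem_sigma, mem_product, mem_secondDiffDomain]

theorem norm_differencedSum_pow_four_le (hN : 1 ≤ N) {x : Σ _ : ℤ × ℤ, ℤ}
    (hx : x ∈ nondegenerateTriples M) :
    ‖differencedSum N X α x.1.1 x.1.2 x.2‖ ^ 4 ≤ 16 * (N : ℝ) ^ 3 + 4 * N *
      ∑ p ∈ nonzeroDifferences N ×ˢ nonzeroDifferences N, geomMajorant N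
        (α * (18 * (x.1.1 * x.1.2 * (2 * x.2 + x.1.1 + x.1.2) * p.1 * p.2))) := by
  simp only [mem_nondegenerateTriples, mem_dyadicBlock] at hx
  refine (norm_sum_eexp_cube_pow_four_le hN (ordConnected_hyperbolicDiffDomain (by lia) (by lia)
    (by lia) (by lia)) (filter_subset _ _) _).trans_eq ?_
  congr 2
  refine sum_congr rfl fun p _ => congrArg _ ?_
  push_cast
  ring

theorem sum_nondegenerateTriples_geomMajorant_le {q : ℕ} (hq : IsApproxDenom α q) (hN : 1 ≤ N)
    {Z : ℝ} (hZ : 1 ≤ Z) (hlog : 1 + Real.log q ≤ Z)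
    (hdiv : ∀ k : ℕ, k ≠ 0 → k ≤ 72 * M ^ 3 * N ^ 2 → (#k.divisors : ℝ) ≤ Z) :
    ∑ w ∈ nondegenerateTriples M ×ˢ (nonzeroDifferences N ×ˢ nonzeroDifferences N),
        geomMajorant N (α * (18 * (w.1.1.1 * w.1.1.2 * (2 * w.1.2 + w.1.1.1 + w.1.1.2) *
          w.2.1 * w.2.2))) ≤
      (2 * Z) ^ 5 * (8 * Z * (72 * M ^ 3 * N ^ 2 * N / q + 72 * M ^ 3 * N ^ 2 + N + q)) := by
  have h := sum_geomMajorant_mul_prod_le (N := N) hq (by exact_mod_cast hN)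
    (s := nondegenerateTriples M ×ˢ (nonzeroDifferences N ×ˢ nonzeroDifferences N))
    (φ := fun w => ![w.1.1.1, w.1.1.2, 2 * w.1.2 + w.1.1.1 + w.1.1.2, w.2.1, w.2.2])
    (c := 18) (K := 72 * M ^ 3 * N ^ 2) ?_ ?_ (by norm_num) ?_ hZ hlog hdiv
  · simp only [Fin.prod_univ_five, Matrix.cons_val] at h
    exact_mod_cast h
  · rintro ⟨⟨⟨h, h'⟩, m⟩, l, l'⟩ - ⟨⟨⟨k, k'⟩, n⟩, j, j'⟩ - heq
    simp only [Matrix.vecCons_inj] at heq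
    obtain ⟨rfl, rfl, hmn, rfl, rfl, -⟩ := heq
    obtain rfl : m = n := by lia
    rfl
  all_goals
    intro w hw
    simp only [mem_product, mem_nondegenerateTriples, mem_nonzeroDifferences,
      mem_dyadicBlock] at hw
    obtain ⟨⟨⟨⟨hh, hhM⟩, hh', hh'M⟩, hm⟩, ⟨hl, hlN⟩, hl', hl'N⟩ := hw
  · have hsum : 2 * w.1.2 + w.1.1.1 + w.1.1.2 ≠ 0 := by lia
    simpa [Fin.forall_fin_succ] using ⟨hh, hh', hsum, hl, hl'⟩
  · have hsum : (2 * w.1.2 + w.1.1.1 + w.1.1.2).natAbs ≤ 4 * M := by lia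
    simp only [Fin.prod_univ_five, Matrix.cons_val]
    calc _ ≤ 18 * (M * M * (4 * M) * N * N) := by gcongr
      _ = _ := by ring

theorem sum_norm_differencedSum_pow_four_le {q : ℕ} (hq : IsApproxDenom α q) (hM : 1 ≤ M)
    (hN : 1 ≤ N) {Z : ℝ} (hZ : 1 ≤ Z) (hlog : 1 + Real.log q ≤ Z)
    (hdiv : ∀ k : ℕ, k ≠ 0 → k ≤ 72 * M ^ 3 * N ^ 2 → (#k.divisors : ℝ) ≤ Z) :
    ∑ x ∈ nondegenerateTriples M, ‖differencedSum N X α x.1.1 x.1.2 x.2‖ ^ 4 ≤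
      80000 * Z ^ 6 * N * (M ^ 3 * N ^ 3 / q + M ^ 3 * N ^ 2 + q) := by
  have hM1 : (1 : ℝ) ≤ M := by exact_mod_cast hM
  have hN1 : (1 : ℝ) ≤ N := by exact_mod_cast hN
  have hq0 := hq.cast_pos
  have hcard : (#(nondegenerateTriples M) : ℝ) ≤ 4 * M ^ 3 := by
    exact_mod_cast card_nondegenerateTriples_le M
  have hZ6 : 1 ≤ Z ^ 6 := one_le_pow₀ hZ
  have hM3 : (1 : ℝ) ≤ M ^ 3 := one_le_pow₀ hM1
  calc ∑ x ∈ nondegenerateTriples M, ‖differencedSum N X α x.1.1 x.1.2 x.2‖ ^ 4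
      ≤ #(nondegenerateTriples M) * (16 * (N : ℝ) ^ 3) + 4 * N *
          ∑ w ∈ nondegenerateTriples M ×ˢ (nonzeroDifferences N ×ˢ nonzeroDifferences N),
            geomMajorant N (α * (18 * (w.1.1.1 * w.1.1.2 * (2 * w.1.2 + w.1.1.1 + w.1.1.2) *
              w.2.1 * w.2.2))) := by
        rw [sum_product, mul_sum, ← nsmul_eq_mul, ← sum_const, ← sum_add_distrib]
        exact sum_le_sum fun x hx => norm_differencedSum_pow_four_le hN hx
    _ ≤ 4 * M ^ 3 * (16 * (N : ℝ) ^ 3) + 4 * N * ((2 * Z) ^ 5 *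
          (8 * Z * (72 * M ^ 3 * N ^ 2 * N / q + 72 * M ^ 3 * N ^ 2 + N + q))) := by
        grw [hcard, sum_nondegenerateTriples_geomMajorant_le hq hN hZ hlog hdiv]
    _ = 64 * N * (1 * (M ^ 3 * N ^ 2)) + 1024 * N * Z ^ 6 *
          (72 * (M ^ 3 * N ^ 3 / q) + 72 * (M ^ 3 * N ^ 2) + 1 * (N ^ 1) + q) := by ring
    _ ≤ 64 * N * (Z ^ 6 * (M ^ 3 * N ^ 2)) + 1024 * N * Z ^ 6 *
          (72 * (M ^ 3 * N ^ 3 / q) + 72 * (M ^ 3 * N ^ 2) + M ^ 3 * N ^ 2 + q) := by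
        gcongr
        norm_num
    _ = N * Z ^ 6 * (73728 * (M ^ 3 * N ^ 3 / q) + 74816 * (M ^ 3 * N ^ 2) + 1024 * q) := by ring
    _ ≤ N * Z ^ 6 * (80000 * (M ^ 3 * N ^ 3 / q) + 80000 * (M ^ 3 * N ^ 2) + 80000 * q) := by
        gcongr <;> norm_num
    _ = _ := by ring

/-- A bilinear form over a box of dyadic blocks, restricted to `m * n ≤ X`, with the phase
`α * (m * n) ^ 3`. -/
noncomputable def bilinearCubeSum (M N X : ℕ) (α : ℝ) (u v : ℤ → ℂ) : ℂ :=
  ∑ m ∈ dyadicBlock M, ∑ n ∈ dyadicBlock N, u m * v n * cubicKernel X α m n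

theorem norm_bilinearCubeSum_pow_eight_le (M N X : ℕ) (α : ℝ) {u v : ℤ → ℂ} {A B : ℝ}
    (hu : ∀ m ∈ dyadicBlock M, ‖u m‖ ≤ A) (hv : ∀ n ∈ dyadicBlock N, ‖v n‖ ≤ B) :
    ‖bilinearCubeSum M N X α u v‖ ^ 8 ≤ (A * B) ^ 8 * ((M : ℝ) ^ 4 * (N ^ 6 * (2 * M *
      (∑ x ∈ nondegenerateTriples M, ‖differencedSum N X α x.1.1 x.1.2 x.2‖ ^ 2 +
        4 * M ^ 2 * N ^ 2)))) := by
  set T : ℤ → ℤ → ℝ := fun n₁ n₂ =>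
    ‖∑ m ∈ dyadicBlock M, cubicKernel X α m n₁ * conj (cubicKernel X α m n₂)‖
  have hcauchy : ‖bilinearCubeSum M N X α u v‖ ^ 2 ≤
      (A * B) ^ 2 * (M * ∑ n₁ ∈ dyadicBlock N, ∑ n₂ ∈ dyadicBlock N, T n₁ n₂) := by
    have h := sq_norm_bilinear_sum_le (dyadicBlock M) (dyadicBlock N) hu hv (cubicKernel X α)
    rwa [card_dyadicBlock] at h
  have hholder : (∑ n₁ ∈ dyadicBlock N, ∑ n₂ ∈ dyadicBlock N, T n₁ n₂) ^ 4 ≤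
      (N : ℝ) ^ 6 * ∑ n₁ ∈ dyadicBlock N, ∑ n₂ ∈ dyadicBlock N, T n₁ n₂ ^ 4 := by
    have h := pow_sum_le_card_mul_sum_pow (s := dyadicBlock N ×ˢ dyadicBlock N)
      (f := fun p => T p.1 p.2) (fun p _ => norm_nonneg _) 3
    rw [sum_product, sum_product, card_product, card_dyadicBlock] at h
    refine h.trans_eq ?_
    push_cast
    ring
  have hM : (#(differenceInterval M) : ℝ) ≤ 2 * M := by exact_mod_cast card_differenceInterval_le M
  calc ‖bilinearCubeSum M N X α u v‖ ^ 8 = (‖bilinearCubeSum M N X α u v‖ ^ 2) ^ 4 := by ring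
    _ ≤ ((A * B) ^ 2 * (M * ∑ n₁ ∈ dyadicBlock N, ∑ n₂ ∈ dyadicBlock N, T n₁ n₂)) ^ 4 := by gcongr
    _ = (A * B) ^ 8 * (M ^ 4 * (∑ n₁ ∈ dyadicBlock N, ∑ n₂ ∈ dyadicBlock N, T n₁ n₂) ^ 4) := by ring
    _ ≤ (A * B) ^ 8 * (M ^ 4 *
          (N ^ 6 * ∑ n₁ ∈ dyadicBlock N, ∑ n₂ ∈ dyadicBlock N, T n₁ n₂ ^ 4)) := by gcongr
    _ ≤ _ := by
        grw [sum_norm_sum_cubicKernel_pow_four_le, hM, sum_sq_norm_differencedSum_le]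

theorem norm_bilinearCubeSum_pow_sixteen_le {q : ℕ} (hq : IsApproxDenom α q) (hM : 1 ≤ M)
    (hN : 1 ≤ N) {Z : ℝ} (hZ : 1 ≤ Z) (hlog : 1 + Real.log q ≤ Z)
    (hdiv : ∀ k : ℕ, k ≠ 0 → k ≤ 72 * M ^ 3 * N ^ 2 → (#k.divisors : ℝ) ≤ Z)
    {u v : ℤ → ℂ} {A B : ℝ} (hu : ∀ m ∈ dyadicBlock M, ‖u m‖ ≤ A)
    (hv : ∀ n ∈ dyadicBlock N, ‖v n‖ ≤ B) :
    ‖bilinearCubeSum M N X α u v‖ ^ 16 ≤ (A * B) ^ 16 * (3000000 * Z ^ 6 * ((M : ℝ) * N) ^ 13 *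
      (M * N ^ 3 + M ^ 3 * N ^ 2 + M ^ 3 * N ^ 3 / q + q)) := by
  set W := ∑ x ∈ nondegenerateTriples M, ‖differencedSum N X α x.1.1 x.1.2 x.2‖ ^ 2
  have hq0 := hq.cast_pos
  have hcard : (#(nondegenerateTriples M) : ℝ) ≤ 4 * M ^ 3 := by
    exact_mod_cast card_nondegenerateTriples_le M
  have hW : W ^ 2 ≤
      4 * M ^ 3 * (80000 * Z ^ 6 * N * (M ^ 3 * N ^ 3 / q + M ^ 3 * N ^ 2 + q)) := by
    refine sq_sum_le_card_mul_sum_sq.trans ?_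
    simp_rw [← pow_mul]
    grw [hcard, sum_norm_differencedSum_pow_four_le hq hM hN hZ hlog hdiv]
  have hZ6 : 1 ≤ Z ^ 6 := one_le_pow₀ hZ
  calc ‖bilinearCubeSum M N X α u v‖ ^ 16 = (‖bilinearCubeSum M N X α u v‖ ^ 8) ^ 2 := by ring
    _ ≤ ((A * B) ^ 8 * ((M : ℝ) ^ 4 * (N ^ 6 * (2 * M * (W + 4 * M ^ 2 * N ^ 2))))) ^ 2 := by
        gcongr
        exact norm_bilinearCubeSum_pow_eight_le M N X α hu hv
    _ = (A * B) ^ 16 * (4 * M ^ 10 * N ^ 12 * (W + 4 * M ^ 2 * N ^ 2) ^ 2) := by ring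
    _ ≤ (A * B) ^ 16 * (4 * M ^ 10 * N ^ 12 * (2 * (W ^ 2 + (4 * M ^ 2 * N ^ 2) ^ 2))) := by
        gcongr
        exact add_sq_le
    _ ≤ (A * B) ^ 16 * (4 * M ^ 10 * N ^ 12 * (2 * (4 * M ^ 3 * (80000 * Z ^ 6 * N *
          (M ^ 3 * N ^ 3 / q + M ^ 3 * N ^ 2 + q)) + 1 * (4 * M ^ 2 * N ^ 2) ^ 2))) := by
        rw [one_mul]
        gcongr
    _ ≤ (A * B) ^ 16 * (4 * M ^ 10 * N ^ 12 * (2 * (4 * M ^ 3 * (80000 * Z ^ 6 * N *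
          (M ^ 3 * N ^ 3 / q + M ^ 3 * N ^ 2 + q)) + Z ^ 6 * (4 * M ^ 2 * N ^ 2) ^ 2))) := by
        gcongr
    _ = (A * B) ^ 16 * (Z ^ 6 * (M * N) ^ 13 * (128 * (M * N ^ 3) + 2560000 * (M ^ 3 * N ^ 2) +
          2560000 * (M ^ 3 * N ^ 3 / q) + 2560000 * q)) := by ring
    _ ≤ (A * B) ^ 16 * (Z ^ 6 * (M * N) ^ 13 * (3000000 * (M * N ^ 3) + 3000000 * (M ^ 3 * N ^ 2) +
          3000000 * (M ^ 3 * N ^ 3 / q) + 3000000 * q)) := by gcongr <;> norm_num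
    _ = _ := by ring

end BilinearSum

/-- `Z` majorizes all the divisor functions and logarithms that occur in the estimation of
exponential sums of length `X` over cubes. -/
structure IsDivisorMajorant (X : ℕ) (Z : ℝ) : Prop where
  log_le : 1 + 3 * Real.log X ≤ Z
  card_divisors_le : ∀ k : ℕ, k ≠ 0 → k ≤ 100 * X ^ 10 → (#k.divisors : ℝ) ≤ Z

/-- The conditions under which exponential sums of length `X` over cubes save a factor `δ`, up to
powers of the divisor majorant `Z`, at a real `α` with the approximation denominator `q`. -/
structure AdmissibleSaving (X : ℕ) (α : ℝ) (q : ℕ) (Z δ : ℝ) : Prop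
    extends IsDivisorMajorant X Z where
  isApproxDenom : IsApproxDenom α q
  pos : 0 < δ
  le_one : δ ≤ 1
  one_le_length_mul : 1 ≤ (X : ℝ) * δ ^ 32
  one_le_denom_mul : 1 ≤ (q : ℝ) * δ ^ 16
  denom_le : (q : ℝ) ≤ (X : ℝ) ^ 3 * δ ^ 16

section TypeII

variable {X q : ℕ} {α Z δ : ℝ}

namespace IsDivisorMajorant

theorem one_le (h : IsDivisorMajorant X Z) : 1 ≤ Z := by
  linarith [h.log_le, Real.log_natCast_nonneg X]

theorem log_natCast_le (h : IsDivisorMajorant X Z) {n : ℕ} (hn : n < 2 * X) :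
    Real.log n ≤ Z := by
  rcases n.eq_zero_or_pos with rfl | hn₀
  · simpa using zero_le_one.trans h.one_le
  have hX : (0 : ℝ) < X := by exact_mod_cast (by lia : 0 < X)
  calc Real.log n ≤ Real.log (2 * X) :=
        Real.log_le_log (by positivity) (by exact_mod_cast hn.le)
    _ = Real.log 2 + Real.log X := Real.log_mul two_ne_zero hX.ne'
    _ ≤ Z := by linarith [h.log_le, Real.log_two_lt_d9, Real.log_natCast_nonneg X]

theorem mono (h : IsDivisorMajorant X Z) {Y : ℕ} (hY : 0 < Y) (hYX : Y ≤ X) :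
    IsDivisorMajorant Y Z where
  log_le := by
    have hlog : Real.log Y ≤ Real.log X := by gcongr
    linarith [h.log_le]
  card_divisors_le k hk hkY := h.card_divisors_le k hk (hkY.trans (by gcongr))

end IsDivisorMajorant

namespace AdmissibleSaving

theorem length_pos (h : AdmissibleSaving X α q Z δ) : 0 < X := by
  have h1 := h.one_le_length_mul
  by_contra! hX
  simp only [nonpos_iff_eq_zero.1 hX, Nat.cast_zero, zero_mul] at h1
  linarith

theorem one_le_length (h : AdmissibleSaving X α q Z δ) : (1 : ℝ) ≤ X := by
  exact_mod_cast h.length_pos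

theorem one_add_log_le (h : AdmissibleSaving X α q Z δ) {n : ℕ} (hn : n ≠ 0) (hnX : n ≤ X ^ 3) :
    1 + Real.log n ≤ Z := by
  have hlog := Real.log_le_log (by positivity) (show (n : ℝ) ≤ (X : ℝ) ^ 3 by exact_mod_cast hnX)
  rw [Real.log_pow, Nat.cast_ofNat] at hlog
  linarith [h.log_le]

theorem denom_le_length_pow (h : AdmissibleSaving X α q Z δ) : q ≤ X ^ 3 := by
  have hδ : δ ^ 16 ≤ 1 := pow_le_one₀ h.pos.le h.le_one
  exact_mod_cast h.denom_le.trans (mul_le_of_le_one_right (by positivity) hδ)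

end AdmissibleSaving

theorem sum_dyadicBlock {A : Type*} [AddCommMonoid A] (M : ℕ) (f : ℤ → A) :
    ∑ m ∈ dyadicBlock M, f m = ∑ m ∈ Ico M (M + M), f (m : ℤ) :=
  sum_nbij' Int.toNat (fun m => (m : ℤ)) (by simp [mem_dyadicBlock]; lia)
    (by simp [mem_dyadicBlock]; lia) (by simp [mem_dyadicBlock]; lia) (by simp)
    (by simp [mem_dyadicBlock]; grind)

theorem sum_range_sum_Ico_two_pow {A : Type*} [AddCommMonoid A] (f : ℕ → A) (L : ℕ) :
    ∑ i ∈ range L, ∑ m ∈ Ico (2 ^ i) (2 ^ i + 2 ^ i), f m = ∑ m ∈ Ico 1 (2 ^ L), f m := by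
  induction L with
  | zero => simp
  | succ L ih =>
    rw [sum_range_succ, ih, ← two_mul, ← pow_succ']
    exact sum_Ico_consecutive f Nat.one_le_two_pow (Nat.pow_le_pow_right two_pos L.le_succ)

theorem sum_Ioc_eq_sum_dyadicBlock {A : Type*} [AddCommMonoid A] (X : ℕ) (f : ℤ → A)
    (hf : ∀ m : ℤ, X < m → f m = 0) :
    ∑ m ∈ Ioc 0 X, f m = ∑ i ∈ range (Nat.log 2 X + 1), ∑ m ∈ dyadicBlock (2 ^ i), f m := by
  simp_rw [sum_dyadicBlock]
  rw [sum_range_sum_Ico_two_pow]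
  have hX := Nat.lt_pow_succ_log_self one_lt_two X
  refine sum_subset (fun m => by simp only [mem_Ioc, mem_Ico]; lia) fun m hm hmX => hf m ?_
  simp only [mem_Ioc, mem_Ico] at hm hmX
  lia

/-- The sum `∑ n ≤ X, f n * eexp (α * n ^ 3)` with arithmetic weights `f`. -/
noncomputable def cubeSum (X : ℕ) (α : ℝ) (f : ArithmeticFunction ℝ) : ℂ :=
  ∑ n ∈ Ioc 0 X, (f n : ℂ) * eexp (α * (n : ℝ) ^ 3)

theorem cubeSum_mul (X : ℕ) (α : ℝ) (f g : ArithmeticFunction ℝ) :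
    cubeSum X α (f * g) =
      ∑ m ∈ Ioc 0 X, ∑ n ∈ Ioc 0 X, (f m : ℂ) * g n * cubicKernel X α m n := by
  calc cubeSum X α (f * g)
      = ∑ k ∈ Ioc 0 X, ∑ x ∈ Ioc 0 X ×ˢ Ioc 0 X with x.1 * x.2 = k,
          (f x.1 : ℂ) * g x.2 * eexp (α * (k : ℝ) ^ 3) := by
        refine sum_congr rfl fun k hk => ?_
        rw [mem_Ioc] at hk
        rw [ArithmeticFunction.mul_apply, ← sum_mul,
          Nat.divisorsAntidiagonal_eq_prod_filter_of_le hk.1.ne' hk.2]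
        push_cast
        rfl
    _ = ∑ x ∈ Ioc 0 X ×ˢ Ioc 0 X, (f x.1 : ℂ) * g x.2 * cubicKernel X α x.1 x.2 := by
        simp_rw [sum_filter]
        rw [sum_comm]
        refine sum_congr rfl fun x hx => ?_
        have hpos : 0 < x.1 * x.2 := by
          simp only [mem_product, mem_Ioc] at hx
          exact Nat.mul_pos hx.1.1 hx.2.1
        have hle : (x.1 : ℤ) * x.2 ≤ X ↔ x.1 * x.2 ≤ X := by norm_cast
        rw [sum_ite_eq, cubicKernel]
        simp [hpos, hle]
    _ = _ := sum_product _ _ _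

theorem cubicKernel_of_lt_left {m n : ℤ} (hm : X < m) (hn : 1 ≤ n) : cubicKernel X α m n = 0 :=
  if_neg (by nlinarith)

theorem cubicKernel_of_lt_right {m n : ℤ} (hm : 1 ≤ m) (hn : X < n) : cubicKernel X α m n = 0 :=
  if_neg (by nlinarith)

theorem cubeSum_mul_eq_sum_bilinearCubeSum (X : ℕ) (α : ℝ) (f g : ArithmeticFunction ℝ) :
    cubeSum X α (f * g) = ∑ i ∈ range (Nat.log 2 X + 1), ∑ j ∈ range (Nat.log 2 X + 1),
      bilinearCubeSum (2 ^ i) (2 ^ j) X α (fun m => f m.toNat) (fun n => g n.toNat) := by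
  have hinner : ∀ m ∈ Ioc 0 X, ∑ n ∈ Ioc 0 X, (f m : ℂ) * g n * cubicKernel X α m n =
      ∑ j ∈ range (Nat.log 2 X + 1), ∑ n ∈ dyadicBlock (2 ^ j),
        (f m : ℂ) * g n.toNat * cubicKernel X α m n := by
    intro m hm
    rw [← sum_Ioc_eq_sum_dyadicBlock X]
    · simp
    · intro n hn
      rw [cubicKernel_of_lt_right (by simp only [mem_Ioc] at hm; lia) hn, mul_zero]
  rw [cubeSum_mul, sum_congr rfl hinner, sum_comm, sum_comm (s := range _) (t := range _)]
  refine sum_congr rfl fun j _ => ?_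
  have houter := sum_Ioc_eq_sum_dyadicBlock X fun m => ∑ n ∈ dyadicBlock (2 ^ j),
    (f m.toNat : ℂ) * g n.toNat * cubicKernel X α m n
  simp only [Int.toNat_natCast] at houter
  refine houter fun m hm => sum_eq_zero fun n hn => ?_
  have hn1 : 1 ≤ n := le_trans (mod_cast Nat.one_le_two_pow) (mem_dyadicBlock.1 hn).1
  rw [cubicKernel_of_lt_left hm hn1, mul_zero]

theorem bilinearCubeSum_comm (M N X : ℕ) (α : ℝ) (u v : ℤ → ℂ) :
    bilinearCubeSum M N X α u v = bilinearCubeSum N M X α v u := by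
  rw [bilinearCubeSum, sum_comm]
  refine sum_congr rfl fun n _ => sum_congr rfl fun m _ => ?_
  rw [mul_comm (u m), cubicKernel, cubicKernel, mul_comm m n]

theorem bilinearCubeSum_of_lt {M N : ℕ} (h : X < M * N) (u v : ℤ → ℂ) :
    bilinearCubeSum M N X α u v = 0 := by
  refine sum_eq_zero fun m hm => sum_eq_zero fun n hn => ?_
  have hMm := (mem_dyadicBlock.1 hm).1
  have hNn := (mem_dyadicBlock.1 hn).1
  have hmn : (X : ℤ) < m * n := by
    calc (X : ℤ) < M * N := by exact_mod_cast h
      _ ≤ m * n := by gcongr; lia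
  rw [cubicKernel, if_neg hmn.not_ge, mul_zero]

namespace AdmissibleSaving

theorem one_le_sqrt_length_mul (h : AdmissibleSaving X α q Z δ) : 1 ≤ √(X : ℝ) * δ ^ 16 := by
  have hδ := h.pos
  refine (one_le_sq_iff₀ (by positivity)).1 ?_
  rw [mul_pow, Real.sq_sqrt X.cast_nonneg, ← pow_mul]
  exact h.one_le_length_mul

theorem mul_cube_le (h : AdmissibleSaving X α q Z δ) {M N : ℕ} (hMNX : M * N ≤ X)
    (hXM : X ≤ 16 * M ^ 4) : M * (N : ℝ) ^ 3 ≤ 4 * (X ^ 3 * δ ^ 16) := by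
  have hδ := h.pos
  have hMNX' : (M : ℝ) * N ≤ X := by exact_mod_cast hMNX
  have hsqrt : √(X : ℝ) ≤ 4 * M ^ 2 := by
    refine Real.sqrt_le_iff.2 ⟨by positivity, ?_⟩
    calc (X : ℝ) ≤ 16 * M ^ 4 := by exact_mod_cast hXM
      _ = _ := by ring
  calc M * (N : ℝ) ^ 3 ≤ M * N ^ 3 * (4 * M ^ 2 * δ ^ 16) :=
        le_mul_of_one_le_right (by positivity) (h.one_le_sqrt_length_mul.trans (by gcongr))
    _ = 4 * ((M * N) ^ 3 * δ ^ 16) := by ring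
    _ ≤ _ := by gcongr

theorem cube_mul_sq_le (h : AdmissibleSaving X α q Z δ) {M N : ℕ} (hMN : M ≤ N)
    (hMNX : M * N ≤ X) : (M : ℝ) ^ 3 * N ^ 2 ≤ X ^ 3 * δ ^ 16 := by
  have hMNX' : (M : ℝ) * N ≤ X := by exact_mod_cast hMNX
  have hMs : (M : ℝ) ≤ √X := by
    refine Real.le_sqrt_of_sq_le (le_trans ?_ hMNX')
    rw [sq]
    gcongr
  calc (M : ℝ) ^ 3 * N ^ 2 = (M * N) ^ 2 * M := by ring
    _ ≤ X ^ 2 * √X := by gcongr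
    _ ≤ X ^ 2 * √X * (√X * δ ^ 16) :=
        le_mul_of_one_le_right (by positivity) h.one_le_sqrt_length_mul
    _ = X ^ 2 * √X ^ 2 * δ ^ 16 := by ring
    _ = _ := by rw [Real.sq_sqrt X.cast_nonneg]; ring

theorem cube_mul_cube_div_le (h : AdmissibleSaving X α q Z δ) {M N : ℕ} (hMNX : M * N ≤ X) :
    (M : ℝ) ^ 3 * N ^ 3 / q ≤ X ^ 3 * δ ^ 16 := by
  have hMNX' : (M : ℝ) * N ≤ X := by exact_mod_cast hMNX
  rw [div_le_iff₀ h.isApproxDenom.cast_pos, ← mul_pow, mul_assoc, mul_comm (δ ^ 16)]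
  exact (pow_le_pow_left₀ (by positivity) hMNX' 3).trans
    (le_mul_of_one_le_right (by positivity) h.one_le_denom_mul)

theorem bilinear_majorant_le (h : AdmissibleSaving X α q Z δ) {M N : ℕ} (hMN : M ≤ N)
    (hMNX : M * N ≤ X) (hXM : X ≤ 16 * M ^ 4) :
    3000000 * Z ^ 6 * ((M : ℝ) * N) ^ 13 *
      (M * N ^ 3 + M ^ 3 * N ^ 2 + M ^ 3 * N ^ 3 / q + q) ≤ (4 * Z * X * δ) ^ 16 := by
  have hZ := h.one_le
  have hMNX' : (M : ℝ) * N ≤ X := by exact_mod_cast hMNX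
  calc _ ≤ 3000000 * Z ^ 16 * (X : ℝ) ^ 13 *
        (4 * (X ^ 3 * δ ^ 16) + X ^ 3 * δ ^ 16 + X ^ 3 * δ ^ 16 + X ^ 3 * δ ^ 16) := by
        gcongr ?_ * ?_ * ?_ * (?_ + ?_ + ?_ + ?_)
        · gcongr; norm_num
        · gcongr
        · exact h.mul_cube_le hMNX hXM
        · exact h.cube_mul_sq_le hMN hMNX
        · exact h.cube_mul_cube_div_le hMNX
        · exact h.denom_le
    _ = 21000000 * (Z * X * δ) ^ 16 := by ring
    _ ≤ 4 ^ 16 * (Z * X * δ) ^ 16 := by gcongr; norm_num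
    _ = _ := by ring

theorem norm_bilinearCubeSum_le (h : AdmissibleSaving X α q Z δ) {M N : ℕ} (hM : 1 ≤ M)
    (hN : 1 ≤ N) (hMNX : M * N ≤ X) (hXM : X ≤ 16 * M ^ 4) (hXN : X ≤ 16 * N ^ 4) {u v : ℤ → ℂ}
    (hu : ∀ m ∈ dyadicBlock M, ‖u m‖ ≤ Z) (hv : ∀ n ∈ dyadicBlock N, ‖v n‖ ≤ Z) :
    ‖bilinearCubeSum M N X α u v‖ ≤ 4 * Z ^ 3 * X * δ := by
  wlog hMN : M ≤ N generalizing M N u v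
  · rw [bilinearCubeSum_comm]
    exact this hN hM (by rwa [mul_comm]) hXN hXM hv hu (le_of_not_ge hMN)
  have hδ := h.pos
  have hZ := h.one_le
  have hdiv : ∀ k : ℕ, k ≠ 0 → k ≤ 72 * M ^ 3 * N ^ 2 → (#k.divisors : ℝ) ≤ Z := by
    refine fun k hk hkMN => h.card_divisors_le k hk (hkMN.trans ?_)
    calc 72 * M ^ 3 * N ^ 2 = 72 * ((M * N) ^ 2 * M) := by ring
      _ ≤ 100 * (X ^ 2 * X) := by
        gcongr
        exacts [by norm_num, (Nat.le_mul_of_pos_right M hN).trans hMNX]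
      _ = 100 * X ^ 3 := by ring
      _ ≤ 100 * X ^ 10 := by
        gcongr
        exacts [h.length_pos, by norm_num]
  refine le_of_pow_le_pow_left₀ (n := 16) (by norm_num) (by positivity) ?_
  calc ‖bilinearCubeSum M N X α u v‖ ^ 16
      ≤ (Z * Z) ^ 16 * (3000000 * Z ^ 6 * ((M : ℝ) * N) ^ 13 *
          (M * N ^ 3 + M ^ 3 * N ^ 2 + M ^ 3 * N ^ 3 / q + q)) :=
        norm_bilinearCubeSum_pow_sixteen_le h.isApproxDenom hM hN hZ
          (h.one_add_log_le (Nat.one_le_iff_ne_zero.1 h.isApproxDenom.1) h.denom_le_length_pow)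
          hdiv hu hv
    _ ≤ (Z * Z) ^ 16 * (4 * Z * X * δ) ^ 16 := by
        gcongr
        exact h.bilinear_majorant_le hMN hMNX hXM
    _ = _ := by ring

theorem log_two_add_one_le (h : AdmissibleSaving X α q Z δ) : (Nat.log 2 X + 1 : ℝ) ≤ Z := by
  have hpow : (2 : ℝ) ^ Nat.log 2 X ≤ X := by
    exact_mod_cast Nat.pow_log_le_self 2 h.length_pos.ne'
  have hlog := Real.log_le_log (by positivity) hpow
  rw [Real.log_pow] at hlog
  nlinarith [h.log_le, Real.log_two_gt_d9, Nat.cast_nonneg (α := ℝ) (Nat.log 2 X)]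

theorem norm_bilinearCubeSum_two_pow_le (h : AdmissibleSaving X α q Z δ) {U : ℕ}
    (hU : X < (U + 1) ^ 4) {f g : ArithmeticFunction ℝ} (hf : ∀ m < 2 * X, |f m| ≤ Z)
    (hg : ∀ n < 2 * X, |g n| ≤ Z) (hf₀ : ∀ m ≤ U, f m = 0) (hg₀ : ∀ n ≤ U, g n = 0) (i j : ℕ) :
    ‖bilinearCubeSum (2 ^ i) (2 ^ j) X α (fun m => f m.toNat) (fun n => g n.toNat)‖ ≤
      4 * Z ^ 3 * X * δ := by
  have hδ := h.pos
  have hZ := h.one_le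
  have hpow : ∀ i, U < 2 ^ i + 2 ^ i → X ≤ 16 * (2 ^ i) ^ 4 := fun i hi =>
    calc X ≤ (U + 1) ^ 4 := hU.le
      _ ≤ (2 * 2 ^ i) ^ 4 := by gcongr; lia
      _ = _ := by ring
  have hbound : ∀ {f : ArithmeticFunction ℝ}, (∀ m < 2 * X, |f m| ≤ Z) → ∀ i, 2 ^ i ≤ X →
      ∀ m ∈ dyadicBlock (2 ^ i), ‖(f m.toNat : ℂ)‖ ≤ Z := by
    intro f hf i hi m hm
    rw [Complex.norm_real, Real.norm_eq_abs]
    rw [mem_dyadicBlock] at hm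
    exact hf _ (by lia)
  by_cases hX : X < 2 ^ i * 2 ^ j
  · rw [bilinearCubeSum_of_lt hX, norm_zero]
    positivity
  by_cases hi : 2 ^ i + 2 ^ i ≤ U
  · rw [bilinearCubeSum, sum_eq_zero fun m hm => ?_, norm_zero]
    · positivity
    · simp [hf₀ m.toNat (by rw [mem_dyadicBlock] at hm; lia)]
  by_cases hj : 2 ^ j + 2 ^ j ≤ U
  · rw [bilinearCubeSum, sum_eq_zero fun m _ => sum_eq_zero fun n hn => ?_, norm_zero]
    · positivity
    · simp [hg₀ n.toNat (by rw [mem_dyadicBlock] at hn; lia)]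
  rw [not_lt] at hX
  exact h.norm_bilinearCubeSum_le Nat.one_le_two_pow Nat.one_le_two_pow hX
    (hpow i (not_le.1 hi)) (hpow j (not_le.1 hj))
    (hbound hf i ((Nat.le_mul_of_pos_right _ (by positivity)).trans hX))
    (hbound hg j ((Nat.le_mul_of_pos_left _ (by positivity)).trans hX))

theorem norm_cubeSum_mul_le (h : AdmissibleSaving X α q Z δ) {U : ℕ} (hU : X < (U + 1) ^ 4)
    {f g : ArithmeticFunction ℝ} (hf : ∀ m < 2 * X, |f m| ≤ Z) (hg : ∀ n < 2 * X, |g n| ≤ Z)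
    (hf₀ : ∀ m ≤ U, f m = 0) (hg₀ : ∀ n ≤ U, g n = 0) :
    ‖cubeSum X α (f * g)‖ ≤ 4 * Z ^ 5 * X * δ := by
  have hδ := h.pos
  have hZ := h.one_le
  calc ‖cubeSum X α (f * g)‖
      ≤ ∑ i ∈ range (Nat.log 2 X + 1), ∑ j ∈ range (Nat.log 2 X + 1), 4 * Z ^ 3 * X * δ := by
        rw [cubeSum_mul_eq_sum_bilinearCubeSum]
        exact norm_sum_le_of_le _ fun i _ => norm_sum_le_of_le _ fun j _ =>
          h.norm_bilinearCubeSum_two_pow_le hU hf hg hf₀ hg₀ i j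
    _ = (Nat.log 2 X + 1) ^ 2 * (4 * Z ^ 3 * X * δ) := by simp; ring
    _ ≤ Z ^ 2 * (4 * Z ^ 3 * X * δ) := by
        gcongr
        exact h.log_two_add_one_le
    _ = _ := by ring

end AdmissibleSaving

end TypeII

section TypeI

theorem pow_three_le_div {X m : ℕ} (hm : 1 ≤ m) (hmX : m ^ 4 ≤ X) : m ^ 3 ≤ X / m := by
  rw [Nat.le_div_iff_mul_le (by lia), ← pow_succ]
  exact hmX

theorem le_two_mul_mul_div {X m : ℕ} (hm : 1 ≤ m) (hmX : m ≤ X) : X ≤ 2 * m * (X / m) := by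
  have h := Nat.lt_mul_div_succ X (show 0 < m by lia)
  nlinarith [Nat.div_pos hmX hm]

theorem le_div_pow_three {X m : ℕ} (hm : 1 ≤ m) (hmX : m ^ 4 ≤ X) : X ≤ (X / m) ^ 3 := by
  have h := Nat.lt_mul_div_succ X (show 0 < m by lia)
  have hmN : m ≤ X / m := (Nat.le_self_pow (by lia) m).trans (pow_three_le_div hm hmX)
  obtain ⟨t, ht⟩ : ∃ t, X / m = t + 1 := ⟨X / m - 1, by lia⟩
  rw [ht] at h hmN ⊢
  nlinarith [Nat.mul_le_mul_right (t + 1 + 1) hmN, Nat.zero_le (t ^ 3), Nat.zero_le (t ^ 2)]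

theorem one_le_abs_sub_mul_den_mul_den {x y : ℚ} (hxy : x ≠ y) :
    1 ≤ |(x : ℝ) - y| * (x.den * y.den) := by
  have hnum : 1 ≤ |x - y| * (x - y).den := by
    rw [← Nat.abs_cast (x - y).den, ← abs_mul, Rat.mul_den_eq_num, ← Int.cast_abs]
    exact_mod_cast Int.one_le_abs (Rat.num_ne_zero.2 (sub_ne_zero.2 hxy))
  have hden : (x - y).den ≤ x.den * y.den :=
    Nat.le_of_dvd (Nat.mul_pos x.pos y.pos) (Rat.sub_den_dvd x y)
  have hcast : 1 ≤ |(x : ℝ) - y| * (x - y).den := by exact_mod_cast hnum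
  exact hcast.trans (by gcongr; exact_mod_cast hden)

theorem den_div_natCast_dvd (ρ : ℚ) (k : ℕ) : (ρ / k).den ∣ ρ.den * k := by
  have h : ρ / k = Rat.divInt ρ.num ((ρ.den * k : ℕ) : ℤ) := by
    rw [Rat.divInt_eq_div]
    push_cast
    rw [← div_div, Rat.num_div_den]
  rw [h]
  exact_mod_cast Rat.den_dvd ρ.num ((ρ.den * k : ℕ) : ℤ)

theorem sum_Ioc_ite_dvd_div_le {d : ℕ} (hd : 0 < d) (U : ℕ) :
    ∑ m ∈ Ioc 0 U, (if d ∣ m then (d : ℝ) / m else 0) ≤ 1 + Real.log U := by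
  have hsub : {m ∈ Ioc 0 U | d ∣ m} ⊆ (range U).image fun k => d * (k + 1) := by
    intro m hm
    obtain ⟨hmU, k, rfl⟩ := mem_filter.1 hm
    rw [mem_Ioc] at hmU
    have hk : 0 < k := Nat.pos_of_mul_pos_left hmU.1
    have hkU : k ≤ U := (Nat.le_mul_of_pos_left k hd).trans hmU.2
    exact mem_image.2 ⟨k - 1, mem_range.2 (by lia), by rw [Nat.sub_add_cancel hk]⟩
  calc ∑ m ∈ Ioc 0 U, (if d ∣ m then (d : ℝ) / m else 0)
      = ∑ m ∈ Ioc 0 U with d ∣ m, (d : ℝ) / m := (sum_filter ..).symm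
    _ ≤ ∑ m ∈ (range U).image fun k => d * (k + 1), (d : ℝ) / m :=
        sum_le_sum_of_subset_of_nonneg hsub fun _ _ _ => by positivity
    _ = ∑ k ∈ range U, ((k : ℝ) + 1)⁻¹ := by
        rw [sum_image fun k _ l _ hkl => by simpa [hd.ne'] using hkl]
        refine sum_congr rfl fun k _ => ?_
        push_cast
        field_simp
    _ ≤ 1 + Real.log U := sum_range_inv_add_one_le U

theorem sum_Ioc_gcd_div_le {B : ℕ} (hB : B ≠ 0) (U : ℕ) :
    ∑ m ∈ Ioc 0 U, (Nat.gcd B m : ℝ) / m ≤ #B.divisors * (1 + Real.log U) := by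
  calc ∑ m ∈ Ioc 0 U, (Nat.gcd B m : ℝ) / m
      ≤ ∑ m ∈ Ioc 0 U, ∑ d ∈ B.divisors, (if d ∣ m then (d : ℝ) / m else 0) := by
        refine sum_le_sum fun m _ => ?_
        have h := single_le_sum (s := B.divisors)
          (f := fun d : ℕ => if d ∣ m then (d : ℝ) / m else 0)
          (fun d _ => by split_ifs <;> positivity)
          (Nat.mem_divisors.2 ⟨Nat.gcd_dvd_left B m, hB⟩)
        simpa [Nat.gcd_dvd_right] using h
    _ = ∑ d ∈ B.divisors, ∑ m ∈ Ioc 0 U, (if d ∣ m then (d : ℝ) / m else 0) := sum_comm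
    _ ≤ ∑ d ∈ B.divisors, (1 + Real.log U) :=
        sum_le_sum fun d hd => sum_Ioc_ite_dvd_div_le (Nat.pos_of_mem_divisors hd) U
    _ = _ := by rw [sum_const, nsmul_eq_mul]

theorem inv_natCast_le_gcd_mul {B r m : ℕ} (hB : 0 < B) (hr : 0 < r) (hdvd : B ∣ r * m ^ 3)
    {E : ℝ} (hE : 0 ≤ E) (hBE : 1 ≤ 9 * B * E ^ 3) : (r : ℝ)⁻¹ ≤ 3 * Nat.gcd B m * E := by
  set b := Nat.gcd B (m ^ 3)
  have hb : 0 < b := Nat.gcd_pos_of_pos_left _ hB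
  have hB0 : (0 : ℝ) < B := by exact_mod_cast hB
  have hBrb : (B : ℝ) ≤ r * b := by
    have hdvd' : B ∣ Nat.gcd (r * B) (r * m ^ 3) := Nat.dvd_gcd (dvd_mul_left B r) hdvd
    rw [Nat.gcd_mul_left] at hdvd'
    exact_mod_cast Nat.le_of_dvd (Nat.mul_pos hr hb) hdvd'
  have hbg : (b : ℝ) ≤ (Nat.gcd B m : ℝ) ^ 3 := by
    have hg : 0 < Nat.gcd B m := Nat.gcd_pos_of_pos_left _ hB
    exact_mod_cast Nat.le_of_dvd (by positivity) (gcd_pow_right_dvd_pow_gcd (α := ℕ))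
  have hbB : (b : ℝ) / B ≤ 1 := (div_le_one hB0).2 (by exact_mod_cast Nat.gcd_le_left _ hB)
  have hcube : ((b : ℝ) / B) ^ 3 ≤ (3 * Nat.gcd B m * E) ^ 3 := by
    calc ((b : ℝ) / B) ^ 3 ≤ b / B := pow_le_of_le_one (by positivity) hbB three_ne_zero
      _ ≤ (Nat.gcd B m : ℝ) ^ 3 * (1 / B) := by grw [hbg]; rw [mul_one_div]
      _ ≤ (Nat.gcd B m : ℝ) ^ 3 * (27 * E ^ 3) := by
          gcongr
          rw [div_le_iff₀ hB0]
          nlinarith [show 0 ≤ B * E ^ 3 by positivity]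
      _ = _ := by ring
  calc (r : ℝ)⁻¹ ≤ b / B := by
        rw [inv_eq_one_div, div_le_div_iff₀ (by exact_mod_cast hr) hB0, one_mul, mul_comm]
        exact hBrb
    _ ≤ 3 * Nat.gcd B m * E := le_of_pow_le_pow_left₀ three_ne_zero (by positivity) hcube

/-- A rational approximation of the quality that Dirichlet's theorem provides for denominators up
to `Q`. -/
structure IsDirichletApprox (β Q : ℝ) (ρ : ℚ) : Prop where
  den_le : (ρ.den : ℝ) ≤ Q
  abs_sub_le : |β - ρ| ≤ 1 / (Q * ρ.den)

theorem exists_isDirichletApprox (β : ℝ) {Q : ℝ} (hQ : 1 ≤ Q) : ∃ ρ, IsDirichletApprox β Q ρ := by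
  obtain ⟨ρ, hρ, hden⟩ := Real.exists_rat_abs_sub_le_and_den_le β (Nat.floor_pos.2 hQ)
  have _ : (0 : ℝ) < ρ.den := by exact_mod_cast ρ.pos
  refine ⟨ρ, (Nat.cast_le.2 hden).trans (Nat.floor_le (by linarith)), hρ.trans ?_⟩
  gcongr
  exact (Nat.lt_floor_add_one Q).le

theorem IsDirichletApprox.isApproxDenom {β Q : ℝ} {ρ : ℚ} (hρ : IsDirichletApprox β Q ρ) :
    IsApproxDenom β ρ.den := by
  have _ : (0 : ℝ) < ρ.den := by exact_mod_cast ρ.pos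
  refine ⟨ρ.pos, ρ.num, ρ.reduced, ?_⟩
  rw [← Rat.cast_def]
  refine hρ.abs_sub_le.trans ?_
  rw [sq]
  gcongr
  exact hρ.den_le

variable {X q m : ℕ} {α Z δ : ℝ} {ρ : ℚ}

namespace AdmissibleSaving

theorem one_le_div_mul_pow (h : AdmissibleSaving X α q Z δ) (hm : 1 ≤ m) (hmX : m ^ 4 ≤ X) :
    1 ≤ ((X / m : ℕ) : ℝ) * δ ^ 4 := by
  have hδ := h.pos
  have hN : 1 ≤ ((X / m : ℕ) : ℝ) := by
    exact_mod_cast (Nat.one_le_pow _ _ hm).trans (pow_three_le_div hm hmX)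
  have hpow : 1 ≤ (((X / m : ℕ) : ℝ) * δ ^ 4) ^ 8 := by
    calc 1 ≤ (X : ℝ) * δ ^ 32 := h.one_le_length_mul
      _ ≤ ((X / m : ℕ) : ℝ) ^ 3 * δ ^ 32 := by
          gcongr
          exact_mod_cast le_div_pow_three hm hmX
      _ ≤ ((X / m : ℕ) : ℝ) ^ 8 * δ ^ 32 := by
          gcongr
          norm_num
      _ = _ := by ring
  exact (one_le_pow_iff_of_nonneg (by positivity) (by norm_num)).1 hpow

theorem exists_isDirichletApprox_dilate (h : AdmissibleSaving X α q Z δ) (hm : 1 ≤ m)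
    (hmX : m ^ 4 ≤ X) :
    ∃ ρ, IsDirichletApprox (α * (m : ℝ) ^ 3) (((X / m : ℕ) : ℝ) ^ 3 * δ ^ 4) ρ := by
  refine exists_isDirichletApprox _ ?_
  have hN : 1 ≤ ((X / m : ℕ) : ℝ) := by
    exact_mod_cast (Nat.one_le_pow _ _ hm).trans (pow_three_le_div hm hmX)
  have hδ := h.pos
  grw [h.one_le_div_mul_pow hm hmX]
  gcongr
  exact le_self_pow₀ hN three_ne_zero

theorem den_le_length_pow (h : AdmissibleSaving X α q Z δ)
    (hρ : IsDirichletApprox (α * (m : ℝ) ^ 3) (((X / m : ℕ) : ℝ) ^ 3 * δ ^ 4) ρ) :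
    ρ.den ≤ X ^ 3 := by
  have hδ := h.pos
  have hreal : (ρ.den : ℝ) ≤ (X : ℝ) ^ 3 := by
    calc (ρ.den : ℝ) ≤ ((X / m : ℕ) : ℝ) ^ 3 * δ ^ 4 := hρ.den_le
      _ ≤ ((X / m : ℕ) : ℝ) ^ 3 := mul_le_of_le_one_right (by positivity)
          (pow_le_one₀ hδ.le h.le_one)
      _ ≤ _ := by
          gcongr
          exact Nat.div_le_self X m
  exact_mod_cast hreal

theorem abs_sub_div_pow_le (h : AdmissibleSaving X α q Z δ) (hm : 1 ≤ m) (hmX : m ^ 4 ≤ X)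
    (hρ : IsDirichletApprox (α * (m : ℝ) ^ 3) (((X / m : ℕ) : ℝ) ^ 3 * δ ^ 4) ρ) :
    |α - ((ρ / (m ^ 3 : ℕ) : ℚ) : ℝ)| ≤ 8 / ((X : ℝ) ^ 3 * δ ^ 4 * ρ.den) := by
  have hδ := h.pos
  have hX := h.length_pos
  have _ : (0 : ℝ) < ρ.den := by exact_mod_cast ρ.pos
  have _ : (0 : ℝ) < m := by exact_mod_cast hm
  have hN : (0 : ℝ) < ((X / m : ℕ) : ℝ) := by
    exact_mod_cast (Nat.one_le_pow _ _ hm).trans (pow_three_le_div hm hmX)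
  have hXmN : (X : ℝ) ≤ 2 * m * (X / m : ℕ) := by
    exact_mod_cast le_two_mul_mul_div hm ((Nat.le_self_pow four_ne_zero m).trans hmX)
  calc |α - ((ρ / (m ^ 3 : ℕ) : ℚ) : ℝ)| = |α * (m : ℝ) ^ 3 - ρ| / (m : ℝ) ^ 3 := by
        rw [← abs_of_pos (show (0 : ℝ) < (m : ℝ) ^ 3 by positivity), ← abs_div]
        push_cast
        rw [abs_of_pos (show (0 : ℝ) < (m : ℝ) ^ 3 by positivity), sub_div,
          mul_div_cancel_right₀ _ (by positivity)]
    _ ≤ 1 / (((X / m : ℕ) : ℝ) ^ 3 * δ ^ 4 * ρ.den) / (m : ℝ) ^ 3 := by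
        grw [hρ.abs_sub_le]
    _ = 8 / ((2 * m * (X / m : ℕ)) ^ 3 * δ ^ 4 * ρ.den) := by
        field_simp
        norm_num
    _ ≤ _ := by grw [← hXmN]

theorem norm_sum_dilate_pow_four_le (h : AdmissibleSaving X α q Z δ) (hm : 1 ≤ m)
    (hmX : m ^ 4 ≤ X)
    (hρ : IsDirichletApprox (α * (m : ℝ) ^ 3) (((X / m : ℕ) : ℝ) ^ 3 * δ ^ 4) ρ)
    {Y : ℕ} (hY : Y ≤ X / m) :
    ‖∑ n ∈ Ioc 0 Y, eexp (α * (m : ℝ) ^ 3 * (n : ℝ) ^ 3)‖ ^ 4 ≤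
      1000 * Z ^ 3 * ((X / m : ℕ) : ℝ) ^ 4 * (2 * δ ^ 4 + (ρ.den : ℝ)⁻¹) := by
  have hZ := h.one_le
  have hN1 := (Nat.one_le_pow _ _ hm).trans (pow_three_le_div hm hmX)
  have hden := hρ.den_le
  have hNδ := h.one_le_div_mul_pow hm hmX
  have hdiv : 6 * (X / m) ^ 2 ≤ 100 * X ^ 10 := by
    have hX := h.length_pos
    calc 6 * (X / m) ^ 2 ≤ 100 * X ^ 2 := by
          gcongr
          · norm_num
          · exact Nat.div_le_self X m
      _ ≤ 100 * X ^ 10 := by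
          gcongr
          norm_num
  refine (norm_sum_Ioc_eexp_cube_pow_four_le hρ.isApproxDenom hN1 hY hZ
    (h.one_add_log_le ρ.den_ne_zero (h.den_le_length_pow hρ))
    fun k hk hkN => h.card_divisors_le k hk (hkN.trans hdiv)).trans ?_
  set N : ℝ := ((X / m : ℕ) : ℝ)
  calc 1000 * Z ^ 3 * (N ^ 3 + N ^ 4 / ρ.den + N * ρ.den)
      ≤ 1000 * Z ^ 3 * (N ^ 3 * (N * δ ^ 4) + N ^ 4 / ρ.den + N * (N ^ 3 * δ ^ 4)) := by
        gcongr
        exact le_mul_of_one_le_right (by positivity) hNδ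
    _ = _ := by ring

theorem norm_sum_dilate_le_of_inv_den_le (h : AdmissibleSaving X α q Z δ) (hm : 1 ≤ m)
    (hmX : m ^ 4 ≤ X)
    (hρ : IsDirichletApprox (α * (m : ℝ) ^ 3) (((X / m : ℕ) : ℝ) ^ 3 * δ ^ 4) ρ)
    {g : ℝ} (hg : 1 ≤ g) (hρg : (ρ.den : ℝ)⁻¹ ≤ 3 * g * δ ^ 4) {Y : ℕ} (hY : Y ≤ X / m) :
    ‖∑ n ∈ Ioc 0 Y, eexp (α * (m : ℝ) ^ 3 * (n : ℝ) ^ 3)‖ ≤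
      10 * Z * (X / m : ℕ) * g * δ := by
  have hδ := h.pos
  have hZ := h.one_le
  refine le_of_pow_le_pow_left₀ four_ne_zero (by positivity) ?_
  calc ‖∑ n ∈ Ioc 0 Y, eexp (α * (m : ℝ) ^ 3 * (n : ℝ) ^ 3)‖ ^ 4
      ≤ 1000 * Z ^ 3 * ((X / m : ℕ) : ℝ) ^ 4 * (2 * δ ^ 4 + (ρ.den : ℝ)⁻¹) :=
        h.norm_sum_dilate_pow_four_le hm hmX hρ hY
    _ ≤ 1000 * Z ^ 3 * ((X / m : ℕ) : ℝ) ^ 4 * (2 * (g * δ ^ 4) + 3 * g * δ ^ 4) := by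
        gcongr
        exact le_mul_of_one_le_left (by positivity) hg
    _ = 5000 * (Z ^ 3 * ((X / m : ℕ) : ℝ) ^ 4 * g * δ ^ 4) := by ring
    _ ≤ 10000 * (Z ^ 4 * ((X / m : ℕ) : ℝ) ^ 4 * g ^ 4 * δ ^ 4) := by
        gcongr
        · norm_num
        · norm_num
        · exact le_self_pow₀ hg four_ne_zero
    _ = _ := by ring

theorem sixteen_mul_pow_six_le (h : AdmissibleSaving X α q Z δ) {U : ℕ} (hU : 2 ≤ U)
    (hUX : U ^ 4 ≤ X) : 16 * (U : ℝ) ^ 6 ≤ (X : ℝ) ^ 3 * δ ^ 8 := by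
  have hδ := h.pos
  have hUX' : (U : ℝ) ^ 4 ≤ X := by exact_mod_cast hUX
  have hX : (16 : ℝ) ≤ X := by
    exact_mod_cast (Nat.pow_le_pow_left hU 4).trans hUX
  refine le_of_pow_le_pow_left₀ four_ne_zero (by positivity) ?_
  calc (16 * (U : ℝ) ^ 6) ^ 4 = 16 ^ 4 * 1 * ((U : ℝ) ^ 4) ^ 6 := by ring
    _ ≤ (X : ℝ) ^ 4 * X * (X : ℝ) ^ 6 := by
        gcongr
        exact h.one_le_length
    _ ≤ (X : ℝ) ^ 4 * X * (X : ℝ) ^ 6 * (X * δ ^ 32) :=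
        le_mul_of_one_le_right (by positivity) h.one_le_length_mul
    _ = _ := by ring

theorem div_pow_eq_div_pow (h : AdmissibleSaving X α q Z δ) {U : ℕ} (hUX : U ^ 4 ≤ X)
    {m m' : ℕ} (hm : m ∈ Ioc 0 U) (hm' : m' ∈ Ioc 0 U) (hne : m ≠ m') {ρ ρ' : ℚ}
    (hρ : |α - ((ρ / (m ^ 3 : ℕ) : ℚ) : ℝ)| ≤ 8 / ((X : ℝ) ^ 3 * δ ^ 4 * ρ.den))
    (hρ' : |α - ((ρ' / (m' ^ 3 : ℕ) : ℚ) : ℝ)| ≤ 8 / ((X : ℝ) ^ 3 * δ ^ 4 * ρ'.den))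
    (hden : ρ.den * δ ^ 4 < 1) (hden' : ρ'.den * δ ^ 4 < 1) :
    ρ / (m ^ 3 : ℕ) = ρ' / (m' ^ 3 : ℕ) := by
  rw [mem_Ioc] at hm hm'
  have hδ := h.pos
  have hX := h.length_pos
  have hU := h.sixteen_mul_pow_six_le (by lia) hUX
  have _ : (0 : ℝ) < ρ.den := by exact_mod_cast ρ.pos
  have _ : (0 : ℝ) < ρ'.den := by exact_mod_cast ρ'.pos
  have hden_le {k : ℕ} {τ : ℚ} (hk : 0 < k) (hkU : k ≤ U) :
      ((τ / (k ^ 3 : ℕ)).den : ℝ) ≤ τ.den * (U : ℝ) ^ 3 := by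
    exact_mod_cast (Nat.le_of_dvd (by positivity) (den_div_natCast_dvd τ (k ^ 3))).trans
      (Nat.mul_le_mul_left _ (Nat.pow_le_pow_left hkU 3))
  by_contra hcon
  have hone : 1 ≤ 8 * (ρ.den + ρ'.den) * (U : ℝ) ^ 6 / ((X : ℝ) ^ 3 * δ ^ 4) := by
    calc 1 ≤ _ := one_le_abs_sub_mul_den_mul_den hcon
      _ ≤ (8 / ((X : ℝ) ^ 3 * δ ^ 4 * ρ.den) + 8 / ((X : ℝ) ^ 3 * δ ^ 4 * ρ'.den)) *
          (ρ.den * (U : ℝ) ^ 3 * (ρ'.den * (U : ℝ) ^ 3)) := by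
        rw [abs_sub_comm] at hρ
        grw [abs_sub_le _ α, hρ, hρ', hden_le hm.1 hm.2, hden_le hm'.1 hm'.2]
      _ = _ := by
        field_simp
        ring
  rw [le_div_iff₀ (by positivity), one_mul] at hone
  have hU0 : (0 : ℝ) < U := by exact_mod_cast hm.1.trans_le hm.2
  have hlt : (X : ℝ) ^ 3 * δ ^ 8 < 16 * (U : ℝ) ^ 6 := by
    calc (X : ℝ) ^ 3 * δ ^ 8 = (X : ℝ) ^ 3 * δ ^ 4 * δ ^ 4 := by ring
      _ ≤ 8 * (ρ.den + ρ'.den) * (U : ℝ) ^ 6 * δ ^ 4 := by gcongr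
      _ = 8 * (U : ℝ) ^ 6 * (ρ.den * δ ^ 4 + ρ'.den * δ ^ 4) := by ring
      _ < 8 * (U : ℝ) ^ 6 * (1 + 1) := by gcongr
      _ = _ := by ring
  exact hlt.not_ge hU

theorem one_le_den_mul_pow (h : AdmissibleSaving X α q Z δ) {σ : ℚ}
    (hσ : |α - σ| ≤ 8 / ((X : ℝ) ^ 3 * δ ^ 4)) : 1 ≤ 9 * (σ.den : ℝ) * (δ ^ 4) ^ 3 := by
  have hδ := h.pos
  have hX := h.length_pos
  have hq := h.isApproxDenom.cast_pos
  obtain ⟨hq1, a, ha, hα⟩ := h.isApproxDenom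
  have hpow : δ ^ 16 ≤ δ ^ 12 := pow_le_pow_of_le_one hδ.le h.le_one (by norm_num)
  have hqinv : 1 / (q : ℝ) ≤ δ ^ 12 := by
    rw [div_le_iff₀ hq]
    nlinarith [h.one_le_denom_mul]
  have hden : ((a / q : ℚ)).den = q := by
    have hcop : Nat.Coprime a.natAbs (q : ℤ).natAbs := by simpa [Int.gcd] using ha
    exact_mod_cast Rat.den_div_eq_of_coprime (by exact_mod_cast hq1) hcop
  by_cases hσq : σ = a / q
  · rw [hσq, hden]
    rw [div_le_iff₀ hq] at hqinv
    nlinarith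
  have hσq' : 8 / ((X : ℝ) ^ 3 * δ ^ 4) * q ≤ 8 * δ ^ 12 := by
    rw [div_mul_eq_mul_div, div_le_iff₀ (by positivity)]
    calc 8 * (q : ℝ) ≤ 8 * (X ^ 3 * δ ^ 16) := by gcongr; exact h.denom_le
      _ = _ := by ring
  rw [abs_sub_comm] at hσ
  calc (1 : ℝ) ≤ |(σ : ℝ) - (a / q : ℚ)| * (σ.den * (a / q : ℚ).den) :=
        one_le_abs_sub_mul_den_mul_den hσq
    _ ≤ (8 / ((X : ℝ) ^ 3 * δ ^ 4) + 1 / (q : ℝ) ^ 2) * (σ.den * q) := by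
        rw [hden]
        grw [abs_sub_le _ α, hσ]
        push_cast
        gcongr
    _ = (8 / ((X : ℝ) ^ 3 * δ ^ 4) * q + 1 / q) * σ.den := by field_simp
    _ ≤ (8 * δ ^ 12 + δ ^ 12) * σ.den := by gcongr
    _ = _ := by ring

theorem den_div_pow_le (h : AdmissibleSaving X α q Z δ) {U : ℕ} (hUX : U ^ 4 ≤ X)
    (hm : m ∈ Ioc 0 U)
    (hρ : IsDirichletApprox (α * (m : ℝ) ^ 3) (((X / m : ℕ) : ℝ) ^ 3 * δ ^ 4) ρ) :
    (ρ / (m ^ 3 : ℕ)).den ≤ 100 * X ^ 10 := by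
  rw [mem_Ioc] at hm
  have hX := h.length_pos
  have hmX : m ≤ X := hm.2.trans ((Nat.le_self_pow four_ne_zero U).trans hUX)
  calc (ρ / (m ^ 3 : ℕ)).den ≤ ρ.den * m ^ 3 :=
        Nat.le_of_dvd (Nat.mul_pos ρ.pos (Nat.pow_pos hm.1)) (den_div_natCast_dvd ρ (m ^ 3))
    _ ≤ X ^ 3 * X ^ 3 := by
        gcongr
        exact h.den_le_length_pow hρ
    _ = 1 * X ^ 6 := by ring
    _ ≤ 100 * X ^ 10 := by gcongr <;> norm_num

/- The rationals `ρ m / m ^ 3` attached to those `m` for which `ρ m` has a small denominator all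
coincide. Their common denominator `B` is large, which forces `ρ m` to have a large denominator
unless `gcd B m` is large. -/
theorem exists_inv_den_le_gcd_mul (h : AdmissibleSaving X α q Z δ) {U : ℕ} (hUX : U ^ 4 ≤ X)
    {ρ : ℕ → ℚ} (hρ : ∀ m ∈ Ioc 0 U,
      IsDirichletApprox (α * (m : ℝ) ^ 3) (((X / m : ℕ) : ℝ) ^ 3 * δ ^ 4) (ρ m)) :
    ∃ B : ℕ, 0 < B ∧ (#B.divisors : ℝ) ≤ Z ∧
      ∀ m ∈ Ioc 0 U, ((ρ m).den : ℝ)⁻¹ ≤ 3 * Nat.gcd B m * δ ^ 4 := by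
  have hδ := h.pos
  have hlarge {m B : ℕ} (hB : 0 < B) (hm : ¬ (ρ m).den * δ ^ 4 < 1) :
      ((ρ m).den : ℝ)⁻¹ ≤ 3 * Nat.gcd B m * δ ^ 4 := by
    have hg : (1 : ℝ) ≤ Nat.gcd B m := by exact_mod_cast Nat.gcd_pos_of_pos_left m hB
    rw [inv_le_iff_one_le_mul₀ (by exact_mod_cast (ρ m).pos)]
    nlinarith
  have happrox {m : ℕ} (hm : m ∈ Ioc 0 U) :=
    h.abs_sub_div_pow_le (mem_Ioc.1 hm).1 ((Nat.pow_le_pow_left (mem_Ioc.1 hm).2 4).trans hUX)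
      (hρ m hm)
  by_cases hsmall : ∃ m ∈ Ioc 0 U, (ρ m).den * δ ^ 4 < 1
  · obtain ⟨m₀, hm₀, hden₀⟩ := hsmall
    set σ := ρ m₀ / (m₀ ^ 3 : ℕ)
    have hσB : 1 ≤ 9 * (σ.den : ℝ) * (δ ^ 4) ^ 3 := by
      have hX := h.length_pos
      have hden₁ : (1 : ℝ) ≤ (ρ m₀).den := by exact_mod_cast (ρ m₀).pos
      refine h.one_le_den_mul_pow ((happrox hm₀).trans ?_)
      grw [← hden₁, mul_one]
    refine ⟨σ.den, σ.pos, h.card_divisors_le _ σ.den_ne_zero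
      (h.den_div_pow_le hUX hm₀ (hρ m₀ hm₀)), fun m hm => ?_⟩
    by_cases hden : (ρ m).den * δ ^ 4 < 1
    · have hσm : ρ m / (m ^ 3 : ℕ) = σ := by
        by_cases hmm : m = m₀
        · rw [hmm]
        · exact h.div_pow_eq_div_pow hUX hm hm₀ hmm (happrox hm) (happrox hm₀) hden hden₀
      refine inv_natCast_le_gcd_mul σ.pos (ρ m).pos ?_ (by positivity) hσB
      exact hσm ▸ den_div_natCast_dvd (ρ m) (m ^ 3)
    · exact hlarge σ.pos hden
  · push Not at hsmall
    exact ⟨1, one_pos, by simpa using h.one_le,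
      fun m hm => hlarge one_pos (hsmall m hm).not_gt⟩

theorem exists_sum_dilate_majorant (h : AdmissibleSaving X α q Z δ) {U : ℕ} (hUX : U ^ 4 ≤ X) :
    ∃ T : ℕ → ℝ, (∀ m ∈ Ioc 0 U, ∀ Y ≤ X / m,
      ‖∑ n ∈ Ioc 0 Y, eexp (α * (m : ℝ) ^ 3 * (n : ℝ) ^ 3)‖ ≤ T m) ∧
      ∑ m ∈ Ioc 0 U, T m ≤ 10 * Z ^ 3 * X * δ := by
  have hδ := h.pos
  have hZ := h.one_le
  have hmX {m : ℕ} (hm : m ∈ Ioc 0 U) : m ^ 4 ≤ X :=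
    (Nat.pow_le_pow_left (mem_Ioc.1 hm).2 4).trans hUX
  choose! ρ hρ using fun m (hm : m ∈ Ioc 0 U) =>
    h.exists_isDirichletApprox_dilate (mem_Ioc.1 hm).1 (hmX hm)
  obtain ⟨B, hB, hBZ, hBρ⟩ := h.exists_inv_den_le_gcd_mul hUX hρ
  refine ⟨fun m => 10 * Z * (X / m : ℕ) * Nat.gcd B m * δ, fun m hm Y hY =>
    h.norm_sum_dilate_le_of_inv_den_le (mem_Ioc.1 hm).1 (hmX hm) (hρ m hm)
      (by exact_mod_cast Nat.gcd_pos_of_pos_left m hB) (hBρ m hm) hY, ?_⟩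
  have hlog : 1 + Real.log U ≤ Z := by
    rcases eq_or_ne U 0 with rfl | hU
    · simpa using hZ
    · exact h.one_add_log_le hU (((Nat.le_self_pow four_ne_zero U).trans hUX).trans
        (Nat.le_self_pow three_ne_zero X))
  calc ∑ m ∈ Ioc 0 U, 10 * Z * (X / m : ℕ) * Nat.gcd B m * δ
      ≤ ∑ m ∈ Ioc 0 U, 10 * Z * (X / m) * Nat.gcd B m * δ := by
        gcongr
        exact Nat.cast_div_le
    _ = 10 * Z * X * δ * ∑ m ∈ Ioc 0 U, (Nat.gcd B m : ℝ) / m := by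
        rw [mul_sum]
        exact sum_congr rfl fun m _ => by ring
    _ ≤ 10 * Z * X * δ * (Z * Z) := by
        grw [sum_Ioc_gcd_div_le hB.ne', hBZ, hlog]
    _ = _ := by ring

end AdmissibleSaving

end TypeI

open scoped ArithmeticFunction.Moebius ArithmeticFunction.vonMangoldt ArithmeticFunction.zeta

theorem sum_Ioc_mul_eq_sub (w : ℕ → ℝ) (c : ℕ → ℂ) (Y : ℕ) :
    ∑ n ∈ Ioc 0 Y, (w n : ℂ) * c n = w Y * ∑ n ∈ Ioc 0 Y, c n -
      ∑ k ∈ range Y, ((w (k + 1) - w k : ℝ) : ℂ) * ∑ n ∈ Ioc 0 k, c n := by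
  induction Y with
  | zero => simp
  | succ Y ih =>
    rw [sum_Ioc_succ_top Y.zero_le, sum_Ioc_succ_top Y.zero_le, sum_range_succ, ih]
    push_cast
    ring

theorem norm_sum_Ioc_mul_le (w : ℕ → ℝ) {c : ℕ → ℂ} {T : ℝ} {Y : ℕ}
    (hc : ∀ k ≤ Y, ‖∑ n ∈ Ioc 0 k, c n‖ ≤ T) :
    ‖∑ n ∈ Ioc 0 Y, (w n : ℂ) * c n‖ ≤ (|w Y| + ∑ k ∈ range Y, |w (k + 1) - w k|) * T := by
  rw [sum_Ioc_mul_eq_sub, add_mul, sum_mul]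
  refine (norm_sub_le _ _).trans (add_le_add ?_ (norm_sum_le_of_le _ fun k hk => ?_))
  · rw [norm_mul, Complex.norm_real, Real.norm_eq_abs]
    gcongr
    exact hc Y le_rfl
  · rw [norm_mul, Complex.norm_real, Real.norm_eq_abs]
    gcongr
    exact hc k (mem_range.1 hk).le

theorem norm_sum_Ioc_mul_le_of_monotone {w : ℕ → ℝ} (hw : Monotone w) (hw₀ : 0 ≤ w 0)
    {c : ℕ → ℂ} {T : ℝ} {Y : ℕ} (hc : ∀ k ≤ Y, ‖∑ n ∈ Ioc 0 k, c n‖ ≤ T) :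
    ‖∑ n ∈ Ioc 0 Y, (w n : ℂ) * c n‖ ≤ 2 * w Y * T := by
  have hT : 0 ≤ T := (norm_nonneg _).trans (hc Y le_rfl)
  refine (norm_sum_Ioc_mul_le w hc).trans (mul_le_mul_of_nonneg_right ?_ hT)
  rw [sum_congr rfl fun k _ => abs_of_nonneg (sub_nonneg.2 (hw k.le_succ)), sum_range_sub,
    abs_of_nonneg (hw₀.trans (hw Y.zero_le))]
  linarith

theorem norm_sum_Ioc_mul_le_of_antitone {w : ℕ → ℝ} (hw : Antitone w) (hw₀ : ∀ n, 0 ≤ w n)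
    {c : ℕ → ℂ} {T : ℝ} {Y : ℕ} (hc : ∀ k ≤ Y, ‖∑ n ∈ Ioc 0 k, c n‖ ≤ T) :
    ‖∑ n ∈ Ioc 0 Y, (w n : ℂ) * c n‖ ≤ w 0 * T := by
  refine (norm_sum_Ioc_mul_le w hc).trans_eq ?_
  rw [sum_congr rfl fun k _ => abs_sub_comm _ _ |>.trans
    (abs_of_nonneg (sub_nonneg.2 (hw k.le_succ))), sum_range_sub', abs_of_nonneg (hw₀ Y)]
  ring

/-- The restriction of the arithmetic function `f` to the integers `n ≤ U`. -/
def truncLE (U : ℕ) (f : ArithmeticFunction ℝ) : ArithmeticFunction ℝ :=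
  ⟨fun n => if n ≤ U then f n else 0, by simp⟩

/-- The restriction of the arithmetic function `f` to the integers `n > U`. -/
def truncGT (U : ℕ) (f : ArithmeticFunction ℝ) : ArithmeticFunction ℝ :=
  ⟨fun n => if n ≤ U then 0 else f n, by simp⟩

section Trunc

variable (U : ℕ) (f : ArithmeticFunction ℝ)

theorem truncLE_apply (n : ℕ) : truncLE U f n = if n ≤ U then f n else 0 := rfl

theorem truncGT_apply (n : ℕ) : truncGT U f n = if n ≤ U then 0 else f n := rfl

theorem truncLE_add_truncGT : truncLE U f + truncGT U f = f := by
  ext n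
  rw [ArithmeticFunction.add_apply, truncLE_apply, truncGT_apply]
  split_ifs <;> simp

theorem abs_truncLE_le (n : ℕ) : |truncLE U f n| ≤ |f n| := by
  rw [truncLE_apply]
  split_ifs <;> simp

theorem abs_truncGT_le (n : ℕ) : |truncGT U f n| ≤ |f n| := by
  rw [truncGT_apply]
  split_ifs <;> simp

variable {U}

theorem truncLE_of_lt {n : ℕ} (hn : U < n) : truncLE U f n = 0 := if_neg hn.not_ge

theorem truncGT_of_le {n : ℕ} (hn : n ≤ U) : truncGT U f n = 0 := if_pos hn

end Trunc

section Convolution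

variable {f g : ArithmeticFunction ℝ}

theorem abs_mul_apply_le (f g : ArithmeticFunction ℝ) (n : ℕ) :
    |(f * g) n| ≤ ∑ x ∈ n.divisorsAntidiagonal, |f x.1| * |g x.2| := by
  rw [ArithmeticFunction.mul_apply]
  refine (abs_sum_le_sum_abs _ _).trans_eq (sum_congr rfl fun x _ => abs_mul _ _)

theorem abs_mul_apply_le_log (hf : ∀ n, |f n| ≤ 1) (hg : ∀ n, |g n| ≤ Λ n) (n : ℕ) :
    |(f * g) n| ≤ Real.log n := by
  calc |(f * g) n| ≤ ∑ x ∈ n.divisorsAntidiagonal, |f x.1| * |g x.2| := abs_mul_apply_le f g n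
    _ ≤ ∑ x ∈ n.divisorsAntidiagonal, Λ x.2 := sum_le_sum fun x _ =>
        (mul_le_of_le_one_left (abs_nonneg _) (hf x.1)).trans (hg x.2)
    _ = Real.log n := by
        rw [Nat.sum_divisorsAntidiagonal' fun _ => Λ, ArithmeticFunction.vonMangoldt_sum]

theorem abs_mul_apply_le_card_divisors {K : ℝ} {n : ℕ} (hf : ∀ m ≤ n, |f m| ≤ K)
    (hg : ∀ m, |g m| ≤ 1) : |(f * g) n| ≤ #n.divisors * K := by
  refine (abs_mul_apply_le f g n).trans ?_
  rw [← Nat.map_div_right_divisors, sum_map, ← nsmul_eq_mul]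
  exact sum_le_card_nsmul _ _ _ fun d hd =>
    (mul_le_of_le_one_right (abs_nonneg _) (hg _)).trans (hf d (Nat.divisor_le hd))

theorem mul_apply_eq_zero_of_mul_lt {A B : ℕ} (hf : ∀ m, A < m → f m = 0)
    (hg : ∀ m, B < m → g m = 0) {n : ℕ} (hn : A * B < n) : (f * g) n = 0 := by
  rw [ArithmeticFunction.mul_apply]
  refine sum_eq_zero fun x hx => ?_
  have hxn := (Nat.mem_divisorsAntidiagonal.1 hx).1
  rcases lt_or_ge A x.1 with hA | hA
  · rw [hf _ hA, zero_mul]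
  · rw [hg x.2 (lt_of_not_ge fun hB => by grw [← hxn, hA, hB] at hn; exact hn.false), mul_zero]

theorem mul_apply_eq_zero_of_le {U n : ℕ} (hf : ∀ m ≤ U, f m = 0) (hn : n ≤ U) :
    (f * g) n = 0 := by
  rw [ArithmeticFunction.mul_apply]
  refine sum_eq_zero fun x hx => ?_
  have hxn := Nat.divisor_le (Nat.fst_mem_divisors_of_mem_antidiagonal hx)
  rw [hf x.1 (hxn.trans hn), zero_mul]

end Convolution

theorem abs_moebius_apply_le_one (n : ℕ) : |(μ : ArithmeticFunction ℝ) n| ≤ 1 := by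
  rw [ArithmeticFunction.intCoe_apply]
  exact_mod_cast ArithmeticFunction.abs_moebius_le_one

theorem abs_zeta_apply_le_one (n : ℕ) : |(ζ : ArithmeticFunction ℝ) n| ≤ 1 := by
  rw [ArithmeticFunction.natCoe_apply, ArithmeticFunction.zeta_apply]
  split_ifs <;> simp

theorem abs_vonMangoldt_apply (n : ℕ) : |Λ n| = Λ n :=
  abs_of_nonneg ArithmeticFunction.vonMangoldt_nonneg

theorem monotone_zeta : Monotone (ζ : ArithmeticFunction ℝ) := by
  intro m n hmn
  simp only [ArithmeticFunction.natCoe_apply, ArithmeticFunction.zeta_apply]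
  split_ifs
  · simp
  · simp
  · lia
  · simp

theorem monotone_log : Monotone ArithmeticFunction.log := by
  intro m n hmn
  rw [ArithmeticFunction.log_apply, ArithmeticFunction.log_apply]
  rcases m.eq_zero_or_pos with rfl | hm
  · simpa using Real.log_natCast_nonneg n
  · gcongr

/-- The coefficients of the type I part of Vaughan's identity that comes from both truncations. -/
noncomputable def vaughanCoeff (U : ℕ) : ArithmeticFunction ℝ := truncLE U μ * truncLE U Λ

theorem abs_vaughanCoeff_le_log (U n : ℕ) : |vaughanCoeff U n| ≤ Real.log n :=
  abs_mul_apply_le_log (fun m => (abs_truncLE_le U _ m).trans (abs_moebius_apply_le_one m))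
    (fun m => (abs_truncLE_le U _ m).trans_eq (abs_vonMangoldt_apply m)) n

theorem vaughanCoeff_of_sq_lt {U n : ℕ} (hn : U ^ 2 < n) : vaughanCoeff U n = 0 :=
  mul_apply_eq_zero_of_mul_lt (fun _ => truncLE_of_lt _) (fun _ => truncLE_of_lt _)
    (by rwa [← sq])

theorem vonMangoldt_eq_vaughan (U : ℕ) :
    Λ = truncLE U Λ + truncLE U μ * ArithmeticFunction.log - vaughanCoeff U * ζ +
      truncGT U μ * (truncGT U Λ * ζ) := by
  have hμ := truncLE_add_truncGT U μ
  have hΛ := truncLE_add_truncGT U Λ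
  have hinv : (μ : ArithmeticFunction ℝ) * ζ = 1 := ArithmeticFunction.coe_moebius_mul_coe_zeta
  calc Λ = truncLE U Λ + (μ : ArithmeticFunction ℝ) * ζ * truncGT U Λ := by
        rw [hinv, one_mul, hΛ]
    _ = truncLE U Λ + truncLE U μ * ζ * truncGT U Λ + truncGT U μ * (truncGT U Λ * ζ) := by
        linear_combination -ζ * truncGT U Λ * hμ
    _ = truncLE U Λ + truncLE U μ * (Λ * ζ) - vaughanCoeff U * ζ +
          truncGT U μ * (truncGT U Λ * ζ) := by
        rw [vaughanCoeff]
        linear_combination truncLE U (μ : ArithmeticFunction ℝ) * ζ * hΛ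
    _ = _ := by rw [ArithmeticFunction.vonMangoldt_mul_zeta]

section VaughanSums

variable {X q : ℕ} {α Z δ : ℝ}

theorem cubeSum_add (X : ℕ) (α : ℝ) (f g : ArithmeticFunction ℝ) :
    cubeSum X α (f + g) = cubeSum X α f + cubeSum X α g := by
  simp only [cubeSum, ArithmeticFunction.add_apply, Complex.ofReal_add, add_mul, sum_add_distrib]

theorem cubeSum_sub (X : ℕ) (α : ℝ) (f g : ArithmeticFunction ℝ) :
    cubeSum X α (f - g) = cubeSum X α f - cubeSum X α g := by
  rw [eq_sub_iff_add_eq, ← cubeSum_add, sub_add_cancel]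

theorem cubeSum_mul_eq_sum_dilate (X : ℕ) (α : ℝ) (f g : ArithmeticFunction ℝ) :
    cubeSum X α (f * g) = ∑ m ∈ Ioc 0 X, (f m : ℂ) *
      ∑ n ∈ Ioc 0 (X / m), (g n : ℂ) * eexp (α * (m : ℝ) ^ 3 * (n : ℝ) ^ 3) := by
  rw [cubeSum_mul]
  refine sum_congr rfl fun m hm => ?_
  have hm₀ := (mem_Ioc.1 hm).1
  have hfilter : Ioc 0 (X / m) = {n ∈ Ioc 0 X | (m : ℤ) * (n : ℕ) ≤ X} := by
    ext n
    have hle : (m : ℤ) * n ≤ X ↔ m * n ≤ X := by norm_cast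
    rw [mem_filter, mem_Ioc, mem_Ioc, hle, Nat.le_div_iff_mul_le hm₀, mul_comm n]
    exact ⟨fun h => ⟨⟨h.1, (Nat.le_mul_of_pos_left n hm₀).trans h.2⟩, h.2⟩, fun h => ⟨h.1.1, h.2⟩⟩
  rw [hfilter, sum_filter, mul_sum]
  refine sum_congr rfl fun n _ => ?_
  rw [cubicKernel]
  split_ifs
  · push_cast
    rw [mul_pow, mul_assoc, mul_assoc]
  · rw [mul_zero, mul_zero]

theorem norm_cubeSum_le_sum_abs (X : ℕ) (α : ℝ) (f : ArithmeticFunction ℝ) :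
    ‖cubeSum X α f‖ ≤ ∑ n ∈ Ioc 0 X, |f n| :=
  norm_sum_le_of_le _ fun n _ => by
    rw [norm_mul, norm_eexp, mul_one, Complex.norm_real, Real.norm_eq_abs]

theorem norm_cubeSum_le {f : ArithmeticFunction ℝ} {W : ℕ} {K : ℝ} (hK : 0 ≤ K)
    (hf : ∀ n ∈ Ioc 0 X, |f n| ≤ K) (hf₀ : ∀ n, W < n → f n = 0) :
    ‖cubeSum X α f‖ ≤ W * K := by
  calc ‖cubeSum X α f‖ ≤ ∑ n ∈ Ioc 0 X, |f n| := norm_cubeSum_le_sum_abs X α f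
    _ = ∑ n ∈ Ioc 0 X with n ≤ W, |f n| := by
        refine (sum_filter_of_ne fun n _ hn => ?_).symm
        by_contra! hW
        exact hn (by rw [hf₀ n hW, abs_zero])
    _ ≤ #{n ∈ Ioc 0 X | n ≤ W} • K := sum_le_card_nsmul _ _ _ fun n hn =>
        hf n (mem_filter.1 hn).1
    _ ≤ W * K := by
        rw [nsmul_eq_mul]
        gcongr
        have hsub : {n ∈ Ioc 0 X | n ≤ W} ⊆ Ioc 0 W := fun n => by
          simp only [mem_filter, mem_Ioc]
          exact fun hn => ⟨hn.1.1, hn.2⟩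
        simpa using card_le_card hsub

namespace AdmissibleSaving

theorem pow_three_le (h : AdmissibleSaving X α q Z δ) {U : ℕ} (hUX : U ^ 4 ≤ X) :
    (U : ℝ) ^ 3 ≤ X * δ := by
  have hX := h.one_le_length
  refine le_of_pow_le_pow_left₀ (n := 32) (by norm_num) (mul_nonneg (by positivity) h.pos.le) ?_
  calc ((U : ℝ) ^ 3) ^ 32 = ((U : ℝ) ^ 4) ^ 24 := by ring
    _ ≤ (X : ℝ) ^ 24 := by gcongr; exact_mod_cast hUX
    _ ≤ (X : ℝ) ^ 31 := pow_le_pow_right₀ hX (by norm_num)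
    _ ≤ (X : ℝ) ^ 31 * (X * δ ^ 32) := le_mul_of_one_le_right (by positivity) h.one_le_length_mul
    _ = _ := by ring

theorem norm_cubeSum_mul_le_of_monotone (h : AdmissibleSaving X α q Z δ) {U : ℕ}
    (hUX : U ^ 4 ≤ X) {f g : ArithmeticFunction ℝ} {K : ℝ} (hf : ∀ m ∈ Ioc 0 U, |f m| ≤ K)
    (hf₀ : ∀ m, U < m → f m = 0) (hK : 0 ≤ K) (hg : Monotone g) :
    ‖cubeSum X α (f * g)‖ ≤ 20 * K * g X * Z ^ 3 * X * δ := by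
  obtain ⟨T, hT, hTsum⟩ := h.exists_sum_dilate_majorant hUX
  have hg₀ : 0 ≤ g X := g.map_zero.symm.trans_le (hg X.zero_le)
  have hinner : ∀ m ∈ Ioc 0 U, ‖(f m : ℂ) * ∑ n ∈ Ioc 0 (X / m),
      (g n : ℂ) * eexp (α * (m : ℝ) ^ 3 * (n : ℝ) ^ 3)‖ ≤ K * (2 * g X * T m) := by
    intro m hm
    have hT₀ : 0 ≤ T m := (norm_nonneg _).trans (hT m hm 0 (Nat.zero_le _))
    rw [norm_mul, Complex.norm_real, Real.norm_eq_abs]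
    gcongr
    · exact hf m hm
    · refine (norm_sum_Ioc_mul_le_of_monotone hg g.map_zero.ge (hT m hm)).trans ?_
      gcongr
      exact hg (Nat.div_le_self X m)
  have hU : U ≤ X := (Nat.le_self_pow four_ne_zero U).trans hUX
  calc ‖cubeSum X α (f * g)‖
      = ‖∑ m ∈ Ioc 0 U, (f m : ℂ) * ∑ n ∈ Ioc 0 (X / m),
          (g n : ℂ) * eexp (α * (m : ℝ) ^ 3 * (n : ℝ) ^ 3)‖ := by
        rw [cubeSum_mul_eq_sum_dilate]
        refine congrArg _ (sum_subset (Ioc_subset_Ioc_right hU) fun m hm hmU => ?_).symm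
        rw [mem_Ioc] at hm hmU
        rw [hf₀ m (by lia), Complex.ofReal_zero, zero_mul]
    _ ≤ ∑ m ∈ Ioc 0 U, K * (2 * g X * T m) := norm_sum_le_of_le _ hinner
    _ = K * (2 * g X * ∑ m ∈ Ioc 0 U, T m) := by rw [← mul_sum, ← mul_sum]
    _ ≤ K * (2 * g X * (10 * Z ^ 3 * X * δ)) := by gcongr
    _ = _ := by ring

theorem norm_cubeSum_truncLE_vonMangoldt_le (h : AdmissibleSaving X α q Z δ) {U : ℕ}
    (hUX : U ^ 4 ≤ X) : ‖cubeSum X α (truncLE U Λ)‖ ≤ Z ^ 5 * X * δ := by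
  have hZ := h.one_le
  have hΛ : ∀ n ∈ Ioc 0 X, |truncLE U Λ n| ≤ Z := fun n hn =>
    calc |truncLE U Λ n| ≤ |Λ n| := abs_truncLE_le U Λ n
      _ = Λ n := abs_vonMangoldt_apply n
      _ ≤ Real.log n := ArithmeticFunction.vonMangoldt_le_log
      _ ≤ Z := h.log_natCast_le (by rw [mem_Ioc] at hn; lia)
  calc ‖cubeSum X α (truncLE U Λ)‖ ≤ U * Z :=
        norm_cubeSum_le (by positivity) hΛ fun _ => truncLE_of_lt Λ
    _ ≤ U ^ 3 * Z ^ 5 := by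
        gcongr
        · exact_mod_cast Nat.le_self_pow three_ne_zero U
        · exact le_self_pow₀ hZ (by norm_num)
    _ ≤ X * δ * Z ^ 5 := by gcongr; exact h.pow_three_le hUX
    _ = _ := by ring

theorem norm_cubeSum_truncLE_moebius_mul_log_le (h : AdmissibleSaving X α q Z δ) {U : ℕ}
    (hUX : U ^ 4 ≤ X) :
    ‖cubeSum X α (truncLE U μ * ArithmeticFunction.log)‖ ≤ 20 * Z ^ 5 * X * δ := by
  have hZ := h.one_le
  have hδ := h.pos
  have hX := h.length_pos
  calc ‖cubeSum X α (truncLE U μ * ArithmeticFunction.log)‖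
      ≤ 20 * 1 * Real.log X * Z ^ 3 * X * δ :=
        h.norm_cubeSum_mul_le_of_monotone hUX
          (fun m _ => (abs_truncLE_le U _ m).trans (abs_moebius_apply_le_one m))
          (fun _ => truncLE_of_lt _) zero_le_one monotone_log
    _ ≤ 20 * 1 * Z * Z ^ 3 * X * δ := by gcongr; exact h.log_natCast_le (by lia)
    _ = 20 * Z ^ 4 * X * δ := by ring
    _ ≤ _ := by gcongr; norm_num

theorem norm_cubeSum_truncLE_vaughanCoeff_mul_zeta_le (h : AdmissibleSaving X α q Z δ) {U : ℕ}
    (hUX : U ^ 4 ≤ X) :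
    ‖cubeSum X α (truncLE U (vaughanCoeff U) * ζ)‖ ≤ 20 * Z ^ 5 * X * δ := by
  have hZ := h.one_le
  have hδ := h.pos
  have hU : U ≤ X := (Nat.le_self_pow four_ne_zero U).trans hUX
  have hcoeff : ∀ m ∈ Ioc 0 U, |truncLE U (vaughanCoeff U) m| ≤ Z := fun m hm =>
    calc |truncLE U (vaughanCoeff U) m| ≤ |vaughanCoeff U m| := abs_truncLE_le U _ m
      _ ≤ Real.log m := abs_vaughanCoeff_le_log U m
      _ ≤ Z := h.log_natCast_le (by rw [mem_Ioc] at hm; lia)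
  calc ‖cubeSum X α (truncLE U (vaughanCoeff U) * ζ)‖
      ≤ 20 * Z * (ζ : ArithmeticFunction ℝ) X * Z ^ 3 * X * δ :=
        h.norm_cubeSum_mul_le_of_monotone hUX hcoeff (fun _ => truncLE_of_lt _) (by positivity)
          monotone_zeta
    _ ≤ 20 * Z * 1 * Z ^ 3 * X * δ := by gcongr; exact le_of_abs_le (abs_zeta_apply_le_one X)
    _ = 20 * Z ^ 4 * X * δ := by ring
    _ ≤ _ := by gcongr; norm_num

theorem abs_truncGT_vaughanCoeff_le (h : AdmissibleSaving X α q Z δ) (U : ℕ) {n : ℕ}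
    (hn : n < 2 * X) : |truncGT U (vaughanCoeff U) n| ≤ Z :=
  calc |truncGT U (vaughanCoeff U) n| ≤ |vaughanCoeff U n| := abs_truncGT_le U _ n
    _ ≤ Real.log n := abs_vaughanCoeff_le_log U n
    _ ≤ Z := h.log_natCast_le hn

theorem norm_cubeSum_truncGT_vaughanCoeff_mul_truncLE_le (h : AdmissibleSaving X α q Z δ) {U : ℕ}
    (hUX : U ^ 4 ≤ X) :
    ‖cubeSum X α (truncGT U (vaughanCoeff U) * truncLE U ζ)‖ ≤ Z ^ 5 * X * δ := by
  have hZ := h.one_le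
  have hδ := h.pos
  have hsupp : ∀ m, U ^ 2 < m → truncGT U (vaughanCoeff U) m = 0 := fun m hm => by
    rw [truncGT_apply, vaughanCoeff_of_sq_lt hm, ite_self]
  have hbound : ∀ n ∈ Ioc 0 X, |(truncGT U (vaughanCoeff U) * truncLE U ζ) n| ≤ Z * Z := by
    intro n hn
    rw [mem_Ioc] at hn
    refine (abs_mul_apply_le_card_divisors
      (fun m hm => h.abs_truncGT_vaughanCoeff_le U (n := m) (by lia))
      fun m => (abs_truncLE_le U _ m).trans (abs_zeta_apply_le_one m)).trans ?_
    gcongr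
    refine h.card_divisors_le n hn.1.ne' ?_
    calc n ≤ 1 * X ^ 1 := by lia
      _ ≤ 100 * X ^ 10 := by
        gcongr
        exacts [by norm_num, h.length_pos, by norm_num]
  calc ‖cubeSum X α (truncGT U (vaughanCoeff U) * truncLE U ζ)‖
      ≤ (U ^ 2 * U : ℕ) * (Z * Z) := norm_cubeSum_le (by positivity) hbound fun n =>
        mul_apply_eq_zero_of_mul_lt hsupp fun _ => truncLE_of_lt _
    _ = U ^ 3 * Z ^ 2 := by push_cast; ring
    _ ≤ X * δ * Z ^ 5 := by
        gcongr
        exacts [h.pow_three_le hUX, by norm_num]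
    _ = _ := by ring

theorem norm_cubeSum_truncGT_vaughanCoeff_mul_truncGT_le (h : AdmissibleSaving X α q Z δ) {U : ℕ}
    (hU : X < (U + 1) ^ 4) :
    ‖cubeSum X α (truncGT U (vaughanCoeff U) * truncGT U ζ)‖ ≤ 4 * Z ^ 5 * X * δ :=
  h.norm_cubeSum_mul_le hU (fun _ => h.abs_truncGT_vaughanCoeff_le U)
    (fun n _ => ((abs_truncGT_le U _ n).trans (abs_zeta_apply_le_one n)).trans h.one_le)
    (fun _ => truncGT_of_le _) fun _ => truncGT_of_le _

theorem norm_cubeSum_truncGT_moebius_mul_le (h : AdmissibleSaving X α q Z δ) {U : ℕ}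
    (hU : X < (U + 1) ^ 4) :
    ‖cubeSum X α (truncGT U μ * (truncGT U Λ * ζ))‖ ≤ 4 * Z ^ 5 * X * δ := by
  have hlog : ∀ n, |(truncGT U Λ * ζ : ArithmeticFunction ℝ) n| ≤ Real.log n := fun n => by
    rw [mul_comm]
    exact abs_mul_apply_le_log abs_zeta_apply_le_one
      (fun m => (abs_truncGT_le U Λ m).trans_eq (abs_vonMangoldt_apply m)) n
  exact h.norm_cubeSum_mul_le hU
    (fun n _ => ((abs_truncGT_le U _ n).trans (abs_moebius_apply_le_one n)).trans h.one_le)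
    (fun n hn => (hlog n).trans (h.log_natCast_le hn)) (fun _ => truncGT_of_le _)
    fun _ => mul_apply_eq_zero_of_le fun _ => truncGT_of_le _

theorem norm_cubeSum_vonMangoldt_le (h : AdmissibleSaving X α q Z δ) :
    ‖cubeSum X α Λ‖ ≤ 53 * Z ^ 5 * X * δ := by
  set U := Nat.sqrt (Nat.sqrt X)
  have hUX : U ^ 4 ≤ X := by
    calc U ^ 4 = (U ^ 2) ^ 2 := by ring
      _ ≤ (Nat.sqrt X) ^ 2 := by gcongr; exact Nat.sqrt_le' _
      _ ≤ X := Nat.sqrt_le' X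
  have hXU : X < (U + 1) ^ 4 := by
    calc X < (Nat.sqrt X + 1) ^ 2 := Nat.lt_succ_sqrt' X
      _ ≤ ((U + 1) ^ 2) ^ 2 := by gcongr; exact Nat.lt_succ_sqrt' _
      _ = _ := by ring
  have hsplit : cubeSum X α (vaughanCoeff U * ζ) =
      cubeSum X α (truncLE U (vaughanCoeff U) * ζ) +
        (cubeSum X α (truncGT U (vaughanCoeff U) * truncLE U ζ) +
          cubeSum X α (truncGT U (vaughanCoeff U) * truncGT U ζ)) := by
    rw [← cubeSum_add, ← mul_add, truncLE_add_truncGT, ← cubeSum_add, ← add_mul,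
      truncLE_add_truncGT]
  rw [vonMangoldt_eq_vaughan U, cubeSum_add, cubeSum_sub, cubeSum_add, hsplit]
  refine (norm_add_le_of_le (norm_sub_le_of_le (norm_add_le_of_le
    (h.norm_cubeSum_truncLE_vonMangoldt_le hUX) (h.norm_cubeSum_truncLE_moebius_mul_log_le hUX))
    (norm_add_le_of_le (h.norm_cubeSum_truncLE_vaughanCoeff_mul_zeta_le hUX)
      (norm_add_le_of_le (h.norm_cubeSum_truncGT_vaughanCoeff_mul_truncLE_le hUX)
        (h.norm_cubeSum_truncGT_vaughanCoeff_mul_truncGT_le hXU))))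
    (h.norm_cubeSum_truncGT_moebius_mul_le hXU)).trans ?_
  linarith [mul_nonneg (mul_nonneg (pow_nonneg (zero_le_one.trans h.one_le) 5)
    (Nat.cast_nonneg X)) h.pos.le]

end AdmissibleSaving

end VaughanSums

/-- The factor that exponential sums over the cubes of primes up to `t` save at a real number with
the approximation denominator `q`. -/
noncomputable def weylFactor (q : ℕ) (t : ℝ) : ℝ :=
  (1 / (q : ℝ) + (√t)⁻¹ + (q : ℝ) / t ^ 3) ^ ((1 : ℝ) / 16)

section WeylFactor

variable {q : ℕ} {t : ℝ}

theorem weylFactor_nonneg (q : ℕ) (ht : 0 ≤ t) : 0 ≤ weylFactor q t := by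
  rw [weylFactor]
  positivity

theorem weylFactor_pow_sixteen (q : ℕ) (ht : 0 ≤ t) :
    weylFactor q t ^ 16 = 1 / (q : ℝ) + (√t)⁻¹ + (q : ℝ) / t ^ 3 := by
  rw [weylFactor, ← Real.rpow_mul_natCast (by positivity)]
  norm_num

theorem mul_weylFactor_pow_sixteen (q : ℕ) (ht : 0 < t) :
    (t * weylFactor q t) ^ 16 = t ^ 16 / q + t ^ 15 * √t + q * t ^ 13 := by
  have hsqrt : t * (√t)⁻¹ = √t := by rw [← div_eq_mul_inv, Real.div_sqrt]
  have hdiv : t ^ 16 / t ^ 3 = t ^ 13 := by field_simp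
  rw [mul_pow, weylFactor_pow_sixteen q ht.le]
  calc t ^ 16 * (1 / (q : ℝ) + (√t)⁻¹ + q / t ^ 3)
      = t ^ 16 / q + t ^ 15 * (t * (√t)⁻¹) + q * (t ^ 16 / t ^ 3) := by ring
    _ = _ := by rw [hsqrt, hdiv]

theorem mul_weylFactor_le_mul_weylFactor (q : ℕ) {y : ℝ} (hy : 0 < y) (hyt : y ≤ t) :
    y * weylFactor q y ≤ t * weylFactor q t := by
  have ht := hy.trans_le hyt
  refine le_of_pow_le_pow_left₀ (n := 16) (by norm_num)
    (mul_nonneg ht.le (weylFactor_nonneg q ht.le)) ?_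
  rw [mul_weylFactor_pow_sixteen q hy, mul_weylFactor_pow_sixteen q ht]
  gcongr

theorem sqrt_le_mul_weylFactor (q : ℕ) (ht : 1 ≤ t) : √t ≤ t * weylFactor q t := by
  refine le_of_pow_le_pow_left₀ (n := 16) (by norm_num)
    (mul_nonneg (by positivity) (weylFactor_nonneg q (by positivity))) ?_
  rw [mul_weylFactor_pow_sixteen q (by positivity)]
  calc √t ^ 16 = (√t ^ 2) ^ 8 := by ring
    _ = t ^ 8 := by rw [Real.sq_sqrt (by positivity)]
    _ ≤ t ^ 15 := pow_le_pow_right₀ ht (by norm_num)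
    _ ≤ t ^ 15 * √t := le_mul_of_one_le_right (by positivity) (Real.one_le_sqrt.2 ht)
    _ ≤ t ^ 16 / q + t ^ 15 * √t := le_add_of_nonneg_left (by positivity)
    _ ≤ _ := le_add_of_nonneg_right (by positivity)

end WeylFactor

/-- The arithmetic function whose partial sums are Chebyshev's function `θ`. -/
noncomputable def logPrime : ArithmeticFunction ℝ :=
  ⟨fun n => if n.Prime then Real.log n else 0, by simp⟩

theorem logPrime_apply (n : ℕ) : logPrime n = if n.Prime then Real.log n else 0 := rfl

theorem sum_abs_vonMangoldt_sub_logPrime (X : ℕ) :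
    ∑ n ∈ Ioc 0 X, |(Λ - logPrime) n| = Chebyshev.psi X - Chebyshev.theta X := by
  rw [Chebyshev.psi_sub_theta_eq_sum_not_prime, Nat.floor_natCast, sum_filter]
  refine sum_congr rfl fun n _ => ?_
  rw [sub_eq_add_neg, ArithmeticFunction.add_apply, ArithmeticFunction.neg_apply, logPrime_apply]
  by_cases hn : n.Prime
  · simp [hn, ArithmeticFunction.vonMangoldt_apply_prime hn]
  · simp [hn, abs_vonMangoldt_apply]

/-- The reciprocal of the logarithm, made constant up to `2` so that it is antitone on `ℕ`. -/
noncomputable def invLog (n : ℕ) : ℝ := (Real.log (max (n : ℝ) 2))⁻¹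

theorem antitone_invLog : Antitone invLog := by
  intro m n hmn
  have hpos : 0 < Real.log (max (m : ℝ) 2) := Real.log_pos (by simp)
  rw [invLog, invLog]
  gcongr

theorem invLog_nonneg (n : ℕ) : 0 ≤ invLog n :=
  inv_nonneg.2 (Real.log_nonneg (le_max_of_le_right one_le_two))

theorem invLog_zero_le_two : invLog 0 ≤ 2 := by
  rw [invLog, Nat.cast_zero, max_eq_right zero_le_two,
    inv_le_comm₀ (Real.log_pos one_lt_two) two_pos]
  linarith [Real.log_two_gt_d9]

theorem invLog_mul_logPrime (n : ℕ) : invLog n * logPrime n = if n.Prime then 1 else 0 := by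
  rw [logPrime_apply]
  split_ifs with hn
  · have h2 : (2 : ℝ) ≤ n := by exact_mod_cast hn.two_le
    rw [invLog, max_eq_left h2, inv_mul_cancel₀ (Real.log_pos (by linarith)).ne']
  · rw [mul_zero]

section PrimeSum

variable {X q : ℕ} {α Z : ℝ}

theorem admissibleSaving_weylFactor (hα : IsApproxDenom α q) (hZ : IsDivisorMajorant X Z)
    (hX : 0 < X) (hle : 1 / (q : ℝ) + (√X)⁻¹ + (q : ℝ) / (X : ℝ) ^ 3 ≤ 1) :
    AdmissibleSaving X α q Z (weylFactor q X) := by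
  have hq := hα.cast_pos
  have hX' : (0 : ℝ) < X := by exact_mod_cast hX
  have hpow := weylFactor_pow_sixteen q hX'.le
  have hsum₁ : 1 / (q : ℝ) ≤ weylFactor q X ^ 16 := by
    rw [hpow, add_assoc]
    exact le_add_of_nonneg_right (by positivity)
  have hsum₂ : (√X)⁻¹ ≤ weylFactor q X ^ 16 := by
    rw [hpow, add_right_comm]
    exact le_add_of_nonneg_left (by positivity)
  have hsum₃ : (q : ℝ) / (X : ℝ) ^ 3 ≤ weylFactor q X ^ 16 := by
    rw [hpow]
    exact le_add_of_nonneg_left (by positivity)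
  refine ⟨hZ, hα, Real.rpow_pos_of_pos (by positivity) _,
    Real.rpow_le_one (by positivity) hle (by norm_num), ?_, ?_, ?_⟩
  · calc (1 : ℝ) = X * ((√X)⁻¹) ^ 2 := by
          rw [inv_pow, Real.sq_sqrt hX'.le, mul_inv_cancel₀ hX'.ne']
      _ ≤ X * (weylFactor q X ^ 16) ^ 2 := by gcongr
      _ = _ := by rw [← pow_mul]
  · rwa [div_le_iff₀' hq] at hsum₁
  · rwa [div_le_iff₀' (by positivity)] at hsum₃

theorem norm_cubeSum_vonMangoldt_le (hα : IsApproxDenom α q) (hZ : IsDivisorMajorant X Z) :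
    ‖cubeSum X α Λ‖ ≤ 53 * Z ^ 5 * (X * weylFactor q X) := by
  rcases X.eq_zero_or_pos with rfl | hX
  · simp [cubeSum]
  have hZ₁ := hZ.one_le
  rcases le_total (1 / (q : ℝ) + (√X)⁻¹ + (q : ℝ) / (X : ℝ) ^ 3) 1 with hle | hge
  · exact ((admissibleSaving_weylFactor hα hZ hX hle).norm_cubeSum_vonMangoldt_le).trans_eq
      (mul_assoc _ _ _)
  have hfactor : 1 ≤ weylFactor q X := Real.one_le_rpow hge (by norm_num)
  have hΛ : ∀ n ∈ Ioc 0 X, |Λ n| ≤ Z := fun n hn =>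
    calc |Λ n| = Λ n := abs_vonMangoldt_apply n
      _ ≤ Real.log n := ArithmeticFunction.vonMangoldt_le_log
      _ ≤ Z := hZ.log_natCast_le (by rw [mem_Ioc] at hn; lia)
  calc ‖cubeSum X α Λ‖ ≤ ∑ n ∈ Ioc 0 X, |Λ n| := norm_cubeSum_le_sum_abs X α Λ
    _ ≤ #(Ioc 0 X) • Z := sum_le_card_nsmul _ _ _ hΛ
    _ = 1 * Z ^ 1 * (X * 1) := by simp [mul_comm]
    _ ≤ 53 * Z ^ 5 * (X * weylFactor q X) := by gcongr <;> norm_num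

theorem norm_cubeSum_logPrime_le (hα : IsApproxDenom α q) (hZ : IsDivisorMajorant X Z) :
    ‖cubeSum X α logPrime‖ ≤ 55 * Z ^ 5 * (X * weylFactor q X) := by
  rcases X.eq_zero_or_pos with rfl | hX
  · simp [cubeSum]
  have hX' : (1 : ℝ) ≤ X := by exact_mod_cast hX
  have hZ₁ := hZ.one_le
  have hfactor := weylFactor_nonneg q (t := X) (by positivity)
  have hprimePowers : ‖cubeSum X α (Λ - logPrime)‖ ≤ 2 * Z ^ 5 * (X * weylFactor q X) := by
    calc ‖cubeSum X α (Λ - logPrime)‖ ≤ ∑ n ∈ Ioc 0 X, |(Λ - logPrime) n| :=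
          norm_cubeSum_le_sum_abs X α _
      _ = Chebyshev.psi X - Chebyshev.theta X := sum_abs_vonMangoldt_sub_logPrime X
      _ ≤ 2 * √X * Real.log X := Chebyshev.psi_sub_theta_le hX'
      _ ≤ 2 * (X * weylFactor q X) * Z ^ 5 := by
          gcongr
          · exact sqrt_le_mul_weylFactor q hX'
          · exact (hZ.log_natCast_le (by lia)).trans (le_self_pow₀ hZ₁ (by norm_num))
      _ = _ := by ring
  rw [← sub_sub_cancel Λ logPrime, cubeSum_sub]
  exact (norm_sub_le_of_le (norm_cubeSum_vonMangoldt_le hα hZ) hprimePowers).trans_eq (by ring)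

theorem norm_sum_prime_eexp_cube_le (hα : IsApproxDenom α q) (hZ : IsDivisorMajorant X Z) :
    ‖∑ p ∈ Ioc 0 X with p.Prime, eexp (α * (p : ℝ) ^ 3)‖ ≤
      110 * Z ^ 5 * (X * weylFactor q X) := by
  have hpartial : ∀ Y ≤ X, ‖∑ n ∈ Ioc 0 Y, (logPrime n : ℂ) * eexp (α * (n : ℝ) ^ 3)‖ ≤
      55 * Z ^ 5 * (X * weylFactor q X) := by
    intro Y hYX
    have hZ₁ := hZ.one_le
    have hfactor := weylFactor_nonneg q X.cast_nonneg
    rcases Y.eq_zero_or_pos with rfl | hY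
    · simp only [Ioc_self, sum_empty, norm_zero]
      positivity
    refine (norm_cubeSum_logPrime_le hα (hZ.mono hY hYX)).trans ?_
    gcongr ?_ * ?_
    exact mul_weylFactor_le_mul_weylFactor q (by exact_mod_cast hY) (by exact_mod_cast hYX)
  have hsum : ∑ p ∈ Ioc 0 X with p.Prime, eexp (α * (p : ℝ) ^ 3) =
      ∑ n ∈ Ioc 0 X, (invLog n : ℂ) * ((logPrime n : ℂ) * eexp (α * (n : ℝ) ^ 3)) := by
    rw [sum_filter]
    refine sum_congr rfl fun n _ => ?_
    rw [← mul_assoc, ← Complex.ofReal_mul, invLog_mul_logPrime]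
    split_ifs <;> simp
  rw [hsum]
  refine (norm_sum_Ioc_mul_le_of_antitone antitone_invLog invLog_nonneg hpartial).trans ?_
  have hnonneg := (norm_nonneg _).trans (hpartial 0 X.zero_le)
  linarith [mul_le_mul_of_nonneg_right invLog_zero_le_two hnonneg]

end PrimeSum

theorem one_add_three_mul_log_le {ε : ℝ} (hε : 0 < ε) {N X : ℕ} (hN : 1 ≤ N) (hXN : X ^ 3 ≤ N) :
    1 + 3 * Real.log X ≤ (1 + 1 / ε) * (N : ℝ) ^ ε := by
  have hlog : 3 * Real.log X ≤ Real.log N := by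
    rcases X.eq_zero_or_pos with rfl | hX
    · simpa using Real.log_natCast_nonneg N
    · calc 3 * Real.log X = Real.log ((X : ℝ) ^ 3) := by rw [Real.log_pow, Nat.cast_ofNat]
        _ ≤ Real.log N := Real.log_le_log (by positivity) (by exact_mod_cast hXN)
  calc 1 + 3 * Real.log X ≤ (N : ℝ) ^ ε + (N : ℝ) ^ ε / ε :=
        add_le_add (Real.one_le_rpow (by exact_mod_cast hN) hε.le)
          (hlog.trans (Real.log_le_rpow_div N.cast_nonneg hε))
    _ = _ := by ring

theorem exists_isDivisorMajorant_mul_rpow {ε : ℝ} (hε : 0 < ε) :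
    ∃ K > (0 : ℝ), ∀ N X : ℕ, 1 ≤ N → X ^ 3 ≤ N → IsDivisorMajorant X (K * (N : ℝ) ^ ε) := by
  obtain ⟨C, hC₁, hC⟩ := exists_card_divisors_le_rpow (ε := ε / 4) (by positivity)
  refine ⟨C * 100 ^ (ε / 4) + (1 + 1 / ε), by positivity, fun N X hN hXN => ⟨?_, ?_⟩⟩
  · refine (one_add_three_mul_log_le hε hN hXN).trans ?_
    gcongr ?_ * _
    exact le_add_of_nonneg_left (by positivity)
  intro k hk hkX
  have hkN : k ≤ 100 * N ^ 4 := by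
    refine hkX.trans (Nat.mul_le_mul_left _ ?_)
    rcases X.eq_zero_or_pos with rfl | hX
    · simp
    · calc X ^ 10 ≤ X ^ 12 := Nat.pow_le_pow_right hX (by norm_num)
        _ = (X ^ 3) ^ 4 := by ring
        _ ≤ N ^ 4 := by gcongr
  calc (#k.divisors : ℝ) ≤ C * (k : ℝ) ^ (ε / 4) := hC k hk
    _ ≤ C * (100 * (N : ℝ) ^ 4) ^ (ε / 4) := by gcongr; exact_mod_cast hkN
    _ = C * 100 ^ (ε / 4) * (N : ℝ) ^ ε := by
        rw [Real.mul_rpow (by norm_num) (by positivity), ← Real.rpow_natCast_mul N.cast_nonneg,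
          Nat.cast_ofNat, mul_div_cancel₀ ε four_ne_zero, mul_assoc]
    _ ≤ (C * 100 ^ (ε / 4) + (1 + 1 / ε)) * (N : ℝ) ^ ε := by
        gcongr
        exact le_add_of_nonneg_right (by positivity)

theorem S₃_eq_sum_floor (N : ℕ) (α : ℝ) : S₃ N α =
    ∑ p ∈ Ioc 0 ⌊(N : ℝ) ^ ((1 : ℝ) / 3)⌋₊ with p.Prime, eexp (α * (p : ℝ) ^ 3) := by
  rw [S₃]
  refine sum_congr (ext fun p => ?_) fun _ _ => rfl
  rw [mem_filter, mem_filter, mem_range, mem_Ioc, Nat.le_floor_iff (by positivity)]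
  refine ⟨fun ⟨_, hp, hpN⟩ => ⟨⟨hp.pos, hpN⟩, hp⟩, fun ⟨⟨_, hpN⟩, hp⟩ => ⟨?_, hp, hpN⟩⟩
  rw [Nat.lt_succ_iff]
  rcases N.eq_zero_or_pos with rfl | hN
  · norm_num at hpN
    exact hpN.le
  have hN' : (1 : ℝ) ≤ N := by exact_mod_cast hN
  exact_mod_cast hpN.trans (Real.rpow_le_self_of_one_le hN' (by norm_num))

theorem rpow_third_pow_three (N : ℕ) : ((N : ℝ) ^ ((1 : ℝ) / 3)) ^ 3 = N := by
  rw [← Real.rpow_mul_natCast N.cast_nonneg]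
  norm_num

theorem floor_rpow_third_pow_three_le (N : ℕ) : ⌊(N : ℝ) ^ ((1 : ℝ) / 3)⌋₊ ^ 3 ≤ N := by
  have hfloor := Nat.floor_le (a := (N : ℝ) ^ ((1 : ℝ) / 3)) (by positivity)
  have hpow := pow_le_pow_left₀ (Nat.cast_nonneg _) hfloor 3
  rw [rpow_third_pow_three] at hpow
  exact_mod_cast hpow

theorem weylFactor_rpow_third (q N : ℕ) : weylFactor q ((N : ℝ) ^ ((1 : ℝ) / 3)) =
    (1 / (q : ℝ) + (N : ℝ) ^ (-(1 : ℝ) / 6) + (q : ℝ) / (N : ℝ)) ^ ((1 : ℝ) / 16) := by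
  rw [weylFactor, rpow_third_pow_three, Real.sqrt_eq_rpow, ← Real.rpow_mul N.cast_nonneg,
    ← Real.rpow_neg N.cast_nonneg]
  norm_num

end MinorArc

open MinorArc in
theorem S₃_minor_arc_bound (ε : ℝ) (hε : 0 < ε) :
    ∃ C > (0 : ℝ), ∀ N : ℕ, 2 ≤ N → ∀ α : ℝ, ∀ a : ℤ, ∀ q : ℕ, 1 ≤ q →
      Int.gcd a q = 1 → |α - (a : ℝ) / (q : ℝ)| ≤ 1 / (q : ℝ) ^ 2 →
      ‖S₃ N α‖ ≤ C * (N : ℝ) ^ ((1 : ℝ) / 3 + ε) *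
        (1 / (q : ℝ) + (N : ℝ) ^ (-(1 : ℝ) / 6) + (q : ℝ) / (N : ℝ)) ^ ((1 : ℝ) / 16) := by
  obtain ⟨K, hK, hmajorant⟩ := exists_isDivisorMajorant_mul_rpow (ε := ε / 5) (by positivity)
  refine ⟨110 * K ^ 5, by positivity, fun N hN α a q hq hgcd hα => ?_⟩
  have hN₀ : (0 : ℝ) < N := by positivity
  have hN₁ : (1 : ℝ) ≤ N := by exact_mod_cast (by lia : 1 ≤ N)
  set P : ℝ := (N : ℝ) ^ ((1 : ℝ) / 3)
  have hfloor : 0 < ⌊P⌋₊ := Nat.floor_pos.2 (Real.one_le_rpow hN₁ (by norm_num))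
  calc ‖S₃ N α‖ ≤ 110 * (K * (N : ℝ) ^ (ε / 5)) ^ 5 * (⌊P⌋₊ * weylFactor q ⌊P⌋₊) := by
        rw [S₃_eq_sum_floor]
        exact norm_sum_prime_eexp_cube_le ⟨hq, a, hgcd, hα⟩
          (hmajorant N ⌊P⌋₊ (by lia) (floor_rpow_third_pow_three_le N))
    _ ≤ 110 * (K * (N : ℝ) ^ (ε / 5)) ^ 5 * (P * weylFactor q P) := by
        gcongr ?_ * ?_
        exact mul_weylFactor_le_mul_weylFactor q (by positivity) (Nat.floor_le (by positivity))
    _ = 110 * K ^ 5 * (P * (N : ℝ) ^ ε) * weylFactor q P := by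
        rw [mul_pow, ← Real.rpow_mul_natCast hN₀.le, Nat.cast_ofNat,
          div_mul_cancel₀ ε (by norm_num)]
        ring
    _ = _ := by rw [weylFactor_rpow_third, ← Real.rpow_add hN₀]
end

section
/- There exist absolute constants C, C′ with the following property. For every real H ≥ 1 and every real θ one has |ψ(θ) + Σ_{h ∈ ℤ, 0 < |h| ≤ H} e(θh)/(2πih)| ≤ C · g(θ, H), where g(θ, H) := min(1, 1/(H‖θ‖)). Moreover, for every real H ≥ 1 there exists a sequence of complex numbers (a_h)_{h ∈ ℤ} such that g(θ, H) = Σ_{h ∈ ℤ} a_h e(θh) for all real θ, with |a_h| ≤ C′ min( log(2H)/H, 1/|h|, H/h² ) for every h ≠ 0 and |a₀| ≤ C′ log(2H)/H. -/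
/-- The sawtooth function `ψ(θ) = θ - ⌊θ⌋ - 1/2`. -/
noncomputable def sawtooth (θ : ℝ) : ℝ := θ - ⌊θ⌋ - 1 / 2

/-- `‖θ‖`, the distance from `θ` to the nearest integer. -/
noncomputable def distNearestInt (θ : ℝ) : ℝ := |θ - round θ|

/-- `g(θ,H) = min(1, 1/(H‖θ‖))`, interpreted as `1` when `‖θ‖ = 0`. -/
noncomputable def gFn (θ H : ℝ) : ℝ :=
  if distNearestInt θ = 0 then 1 else min 1 (1 / (H * distNearestInt θ))

/-!
Both halves rest on the same estimate: if `u ≥ 0` is decreasing on `[a, b]`, then integrating by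
parts gives `|∫ x in a..b, u x * sin (w * x)| ≤ 2 * u a / |w|`, because the total variation of `u`
is at most `u a`.

For `0 < x ≤ 1/2` the derivative of `ψ + ∑_{h ≤ N} sin(2πh·)/(πh)` is the Dirichlet kernel
`sin((2N+1)πt)/sin(πt)`, and the function vanishes at `1/2`, so it equals minus the integral of the
kernel over `[x, 1/2]`; the weight `1/sin(πt)` is decreasing there and at most `1/(2x)`. When
`H‖θ‖ ≤ 1` the trivial bound `1/2 + 2N‖θ‖` suffices.

The function `g(·, H)` is even, so its Fourier coefficients are
`2 ∫ x in 0..1/2, cos(2πhx) / max(1, Hx)`. Since `1/max(1, y) ≤ 2/(1+y)`, they are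
`O(log(2H)/H)`. For `w = 2πh ≠ 0` one integration by parts cancels all boundary terms and leaves
`(wH)⁻¹ ∫ sin(wx)/x²` over `[1/H, 1/2]`. The integral is at most `H` trivially and at most `2H²/|w|`
by the estimate above, with the decreasing weight `1/x²`.
-/

open MeasureTheory Real Set

section DecreasingWeight

variable {a b : ℝ} {u u' : ℝ → ℝ}

lemma intervalIntegrable_deriv_of_nonpos (hab : a ≤ b)
    (hu : ∀ x ∈ Icc a b, HasDerivAt u (u' x) x) (hu' : ∀ x ∈ Icc a b, u' x ≤ 0) :
    IntervalIntegrable u' volume a b := by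
  have hneg : IntervalIntegrable (fun x => -u' x) volume a b := by
    refine intervalIntegral.intervalIntegrable_deriv_of_nonneg (g := fun x => -u x) ?_ ?_ ?_
    · exact fun x hx => (hu x (uIcc_of_le hab ▸ hx)).neg.continuousAt.continuousWithinAt
    all_goals rw [min_eq_left hab, max_eq_right hab]
    · exact fun x hx => (hu x (Ioo_subset_Icc_self hx)).neg
    · exact fun x hx => neg_nonneg.2 (hu' x (Ioo_subset_Icc_self hx))
  simpa only [Pi.neg_def, neg_neg] using hneg.neg

section VectorValued

variable {E : Type*} [NormedAddCommGroup E] [NormedSpace ℝ E] {v v' : ℝ → E} {M : ℝ}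

lemma norm_integral_deriv_smul_le (hab : a ≤ b) (hu : ∀ x ∈ Icc a b, HasDerivAt u (u' x) x)
    (hu' : ∀ x ∈ Icc a b, u' x ≤ 0) (hM : ∀ x ∈ Icc a b, ‖v x‖ ≤ M) :
    ‖∫ x in a..b, u' x • v x‖ ≤ M * (u a - u b) := by
  have hu'_int := intervalIntegrable_deriv_of_nonpos hab hu hu'
  have hvariation : ∫ x in a..b, M * -u' x = M * (u a - u b) := by
    rw [intervalIntegral.integral_const_mul, intervalIntegral.integral_neg,
      intervalIntegral.integral_eq_sub_of_hasDerivAt (uIcc_of_le hab ▸ hu) hu'_int, neg_sub]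
  rw [← hvariation]
  refine intervalIntegral.norm_integral_le_of_norm_le hab
    (Filter.Eventually.of_forall fun x hx => ?_) (hu'_int.neg.const_mul M)
  have hx := Ioc_subset_Icc_self hx
  rw [norm_smul, Real.norm_eq_abs, abs_of_nonpos (hu' x hx), mul_comm]
  exact mul_le_mul_of_nonneg_right (hM x hx) (neg_nonneg.2 (hu' x hx))

lemma norm_integral_smul_deriv_le [CompleteSpace E] (hab : a ≤ b)
    (hu : ∀ x ∈ Icc a b, HasDerivAt u (u' x) x) (hu' : ∀ x ∈ Icc a b, u' x ≤ 0) (hub : 0 ≤ u b)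
    (hv : ∀ x ∈ Icc a b, HasDerivAt v (v' x) x) (hv' : IntervalIntegrable v' volume a b)
    (hM : ∀ x ∈ Icc a b, ‖v x‖ ≤ M) :
    ‖∫ x in a..b, u x • v' x‖ ≤ 2 * M * u a := by
  have hua : u b ≤ u a :=
    antitoneOn_of_hasDerivWithinAt_nonpos (convex_Icc a b)
      (fun x hx => (hu x hx).continuousAt.continuousWithinAt)
      (fun x hx => (hu x (interior_subset hx)).hasDerivWithinAt)
      (fun x hx => hu' x (interior_subset hx)) (left_mem_Icc.2 hab) (right_mem_Icc.2 hab) hab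
  have hboundary : ∀ x ∈ Icc a b, 0 ≤ u x → ‖u x • v x‖ ≤ u x * M := fun x hx hux => by
    rw [norm_smul, Real.norm_eq_abs, abs_of_nonneg hux]
    exact mul_le_mul_of_nonneg_left (hM x hx) hux
  rw [intervalIntegral.integral_smul_deriv_eq_deriv_smul (uIcc_of_le hab ▸ hu)
    (uIcc_of_le hab ▸ hv) (intervalIntegrable_deriv_of_nonpos hab hu hu') hv']
  calc ‖u b • v b - u a • v a - ∫ x in a..b, u' x • v x‖
      ≤ ‖u b • v b‖ + ‖u a • v a‖ + ‖∫ x in a..b, u' x • v x‖ :=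
        (norm_sub_le _ _).trans (add_le_add_left (norm_sub_le _ _) _)
    _ ≤ u b * M + u a * M + M * (u a - u b) :=
        add_le_add (add_le_add (hboundary b (right_mem_Icc.2 hab) hub)
          (hboundary a (left_mem_Icc.2 hab) (hub.trans hua)))
          (norm_integral_deriv_smul_le hab hu hu' hM)
    _ = 2 * M * u a := by ring

end VectorValued

lemma abs_integral_mul_sin_le (hab : a ≤ b) (hu : ∀ x ∈ Icc a b, HasDerivAt u (u' x) x)
    (hu' : ∀ x ∈ Icc a b, u' x ≤ 0) (hub : 0 ≤ u b) {w : ℝ} (hw : w ≠ 0) :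
    |∫ x in a..b, u x * sin (w * x)| ≤ 2 * u a / |w| := by
  have hv : ∀ x, HasDerivAt (fun x => -cos (w * x) / w) (sin (w * x)) x := fun x => by
    refine ((hasDerivAt_const_mul w).cos.neg.div_const w).congr_deriv ?_
    field_simp
  have hM : ∀ x, ‖-cos (w * x) / w‖ ≤ 1 / |w| := fun x => by
    rw [norm_div, norm_neg, Real.norm_eq_abs, Real.norm_eq_abs]
    gcongr
    exact abs_cos_le_one _
  calc |∫ x in a..b, u x * sin (w * x)| ≤ 2 * (1 / |w|) * u a :=
        norm_integral_smul_deriv_le hab hu hu' hub (fun x _ => hv x)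
          (Continuous.intervalIntegrable (by fun_prop) _ _) (fun x _ => hM x)
    _ = 2 * u a / |w| := by ring

end DecreasingWeight

lemma one_add_sum_two_mul_cos_mul_sin (N : ℕ) (x : ℝ) :
    (1 + ∑ h ∈ Finset.range N, 2 * cos (2 * (h + 1) * x)) * sin x = sin ((2 * N + 1) * x) := by
  induction N with
  | zero => simp
  | succ N ih =>
    have hsucc : (2 * ((N + 1 : ℕ) : ℝ) + 1) * x = 2 * (N + 1) * x + x := by push_cast; ring
    have hprev : (2 * (N : ℝ) + 1) * x = 2 * (N + 1) * x - x := by ring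
    rw [Finset.sum_range_succ, ← add_assoc, add_mul, ih, hsucc, hprev, sin_add, sin_sub]
    ring

/-- `∑_{1 ≤ h ≤ N} sin(2πhθ) / (πh)`, the `N`-th partial sum of the Fourier series of `-ψ`. -/
noncomputable def sineSum (N : ℕ) (θ : ℝ) : ℝ :=
  ∑ h ∈ Finset.range N, sin (2 * π * (h + 1) * θ) / (π * (h + 1))

lemma eexp_sub_eexp_neg (x : ℝ) : eexp x - eexp (-x) = 2 * Complex.I * (sin (2 * π * x) : ℝ) := by
  have hpos : eexp x = Complex.exp ((2 * π * x : ℝ) * Complex.I) := by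
    rw [eexp]; push_cast; ring_nf
  have hneg : eexp (-x) = Complex.exp (-(2 * π * x : ℝ) * Complex.I) := by
    rw [eexp]; push_cast; ring_nf
  rw [hpos, hneg, Complex.ofReal_sin, Complex.sin]
  linear_combination
    (Complex.exp ((2 * π * x : ℝ) * Complex.I) - Complex.exp (-(2 * π * x : ℝ) * Complex.I)) *
      Complex.I_sq

lemma eexp_div_add_eexp_neg_div (θ x : ℝ) :
    eexp (θ * x) / (2 * π * Complex.I * x) + eexp (θ * -x) / (2 * π * Complex.I * -x) =
      (sin (2 * π * x * θ) / (π * x) : ℝ) := by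
  have hpair := eexp_sub_eexp_neg (θ * x)
  rw [show 2 * π * (θ * x) = 2 * π * x * θ by ring] at hpair
  rw [mul_neg, mul_neg, div_neg, ← sub_eq_add_neg, ← sub_div, hpair,
    mul_right_comm 2 (π : ℂ), mul_assoc (2 * Complex.I),
    mul_div_mul_left _ _ (mul_ne_zero two_ne_zero Complex.I_ne_zero)]
  push_cast
  rfl

lemma sum_eexp_div_eq_sineSum (N : ℕ) (θ : ℝ) :
    ∑ h ∈ (Finset.Icc (-(N : ℤ)) N).erase 0,
      eexp (θ * (h : ℝ)) / (2 * π * Complex.I * (h : ℝ)) = (sineSum N θ : ℝ) := by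
  rw [Finset.sum_erase _ (by simp)]
  induction N with
  | zero => simp [sineSum]
  | succ N ih =>
    have hpair := eexp_div_add_eexp_neg_div θ (N + 1)
    rw [Nat.cast_succ, Finset.sum_Icc_succ_eq_add_endpoints, ih, sineSum, sineSum,
      Finset.sum_range_succ, Complex.ofReal_add, ← hpair]
    push_cast
    ring

lemma sineSum_neg (N : ℕ) (θ : ℝ) : sineSum N (-θ) = -sineSum N θ := by
  simp only [sineSum, mul_neg, sin_neg, neg_div, Finset.sum_neg_distrib]

lemma sineSum_sub_intCast (N : ℕ) (θ : ℝ) (m : ℤ) : sineSum N (θ - m) = sineSum N θ := by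
  refine Finset.sum_congr rfl fun h _ => ?_
  have hperiods : 2 * π * ((h : ℝ) + 1) * (θ - m) =
      2 * π * (h + 1) * θ - ((h + 1) * m : ℤ) * (2 * π) := by push_cast; ring
  rw [hperiods, sin_sub_int_mul_two_pi]

lemma abs_sineSum_le (N : ℕ) (θ : ℝ) : |sineSum N θ| ≤ 2 * N * |θ| := by
  have hterm : ∀ h ∈ Finset.range N,
      |sin (2 * π * (h + 1) * θ) / (π * (h + 1))| ≤ 2 * |θ| := fun h _ => by
    have hden : 0 < π * ((h : ℝ) + 1) := by positivity
    rw [abs_div, abs_of_pos hden, div_le_iff₀ hden]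
    calc |sin (2 * π * (h + 1) * θ)| ≤ |2 * (π * (h + 1)) * θ| := by
          rw [← mul_assoc 2]; exact abs_sin_le_abs
      _ = 2 * |θ| * (π * (h + 1)) := by
          rw [abs_mul, abs_of_pos (mul_pos two_pos hden)]; ring
  calc |sineSum N θ| ≤ ∑ _h ∈ Finset.range N, 2 * |θ| :=
        (Finset.abs_sum_le_sum_abs _ _).trans (Finset.sum_le_sum hterm)
    _ = 2 * N * |θ| := by
        rw [Finset.sum_const, Finset.card_range, nsmul_eq_mul]; ring

lemma hasDerivAt_sineSum (N : ℕ) (x : ℝ) :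
    HasDerivAt (sineSum N) (∑ h ∈ Finset.range N, 2 * cos (2 * (h + 1) * (π * x))) x := by
  refine HasDerivAt.fun_sum fun h _ => ?_
  have hlin : HasDerivAt (fun x : ℝ => 2 * π * (h + 1) * x) (2 * π * (h + 1)) x :=
    hasDerivAt_const_mul _
  refine (hlin.sin.div_const (π * (h + 1))).congr_deriv ?_
  rw [show 2 * π * (h + 1) * x = 2 * (h + 1) * (π * x) by ring]
  field_simp

lemma sineSum_half (N : ℕ) : sineSum N (1 / 2) = 0 := by
  refine Finset.sum_eq_zero fun h _ => ?_
  rw [show 2 * π * ((h : ℝ) + 1) * (1 / 2) = ((h + 1 : ℕ) : ℝ) * π by push_cast; ring,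
    sin_nat_mul_pi, zero_div]

lemma sawtooth_sub_intCast (θ : ℝ) (m : ℤ) : sawtooth (θ - m) = sawtooth θ := by
  simp only [sawtooth, Int.floor_sub_intCast, Int.cast_sub]
  ring

lemma sawtooth_neg {θ : ℝ} (hθ : Int.fract θ ≠ 0) : sawtooth (-θ) = -sawtooth θ := by
  have hfract := Int.fract_neg hθ
  simp only [Int.fract] at hfract
  simp only [sawtooth, hfract]
  ring

lemma abs_sawtooth_le (θ : ℝ) : |sawtooth θ| ≤ 1 / 2 := by
  rw [abs_le, sawtooth]
  constructor <;> linarith [Int.floor_le θ, Int.lt_floor_add_one θ]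

lemma sawtooth_of_mem_Ico {x : ℝ} (hx : x ∈ Ico 0 1) : sawtooth x = x - 1 / 2 := by
  rw [sawtooth, Int.floor_eq_zero_iff.2 hx, Int.cast_zero, sub_zero]

lemma distNearestInt_eq_zero_of_fract_eq_zero {θ : ℝ} (hθ : Int.fract θ = 0) :
    distNearestInt θ = 0 := by
  obtain ⟨m, rfl⟩ := Int.fract_eq_zero_iff.1 hθ
  rw [distNearestInt, round_intCast, sub_self, abs_zero]

lemma abs_sawtooth_add_sineSum_distNearestInt (N : ℕ) {θ : ℝ} (hθ : distNearestInt θ ≠ 0) :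
    |sawtooth (distNearestInt θ) + sineSum N (distNearestInt θ)| =
      |sawtooth θ + sineSum N θ| := by
  rw [← sawtooth_sub_intCast θ (round θ), ← sineSum_sub_intCast N θ (round θ)]
  rcases abs_choice (θ - round θ) with habs | habs
  · rw [distNearestInt, habs]
  · have hfract : Int.fract (θ - round θ) ≠ 0 := by
      rw [Int.fract_sub_intCast]
      exact mt distNearestInt_eq_zero_of_fract_eq_zero hθ
    rw [distNearestInt, habs, sawtooth_neg hfract, sineSum_neg, ← neg_add, abs_neg]

lemma sin_pi_mul_pos {x : ℝ} (hx : x ∈ Ioo 0 1) : 0 < sin (π * x) :=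
  sin_pos_of_pos_of_lt_pi (mul_pos pi_pos hx.1) (mul_lt_of_lt_one_right pi_pos hx.2)

lemma sawtooth_add_sineSum_eq_integral (N : ℕ) {x : ℝ} (hx : x ∈ Ioc 0 (1 / 2)) :
    sawtooth x + sineSum N x =
      -∫ t in x..1 / 2, (sin (π * t))⁻¹ * sin ((2 * N + 1) * π * t) := by
  have hsin : ∀ t ∈ uIcc x (1 / 2), sin (π * t) ≠ 0 := fun t ht => by
    rw [uIcc_of_le hx.2] at ht
    exact (sin_pi_mul_pos ⟨hx.1.trans_le ht.1, ht.2.trans_lt one_half_lt_one⟩).ne'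
  have hderiv : ∀ t ∈ uIcc x (1 / 2), HasDerivAt (fun t => t - 1 / 2 + sineSum N t)
      ((sin (π * t))⁻¹ * sin ((2 * N + 1) * π * t)) t := fun t ht => by
    refine (((hasDerivAt_id' t).sub_const (1 / 2)).add (hasDerivAt_sineSum N t)).congr_deriv ?_
    rw [mul_assoc _ π, ← one_add_sum_two_mul_cos_mul_sin]
    rw [mul_comm (_ + _) (sin _), inv_mul_cancel_left₀ (hsin t ht)]
  have hint : IntervalIntegrable (fun t => (sin (π * t))⁻¹ * sin ((2 * N + 1) * π * t))
      volume x (1 / 2) :=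
    ((ContinuousOn.inv₀ (by fun_prop) hsin).mul (by fun_prop)).intervalIntegrable
  rw [intervalIntegral.integral_eq_sub_of_hasDerivAt hderiv hint, sineSum_half,
    sawtooth_of_mem_Ico ⟨hx.1.le, hx.2.trans_lt one_half_lt_one⟩]
  ring

lemma abs_sawtooth_add_sineSum_le_of_mem_Ioc (N : ℕ) {x : ℝ} (hx : x ∈ Ioc 0 (1 / 2)) :
    |sawtooth x + sineSum N x| ≤ 1 / ((2 * N + 1) * π * x) := by
  have hsin : ∀ t ∈ Icc x (1 / 2), 0 < sin (π * t) := fun t ht =>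
    sin_pi_mul_pos ⟨hx.1.trans_le ht.1, ht.2.trans_lt one_half_lt_one⟩
  have hderiv : ∀ t ∈ Icc x (1 / 2), HasDerivAt (fun t => (sin (π * t))⁻¹)
      (-(cos (π * t) * π) / sin (π * t) ^ 2) t := fun t ht =>
    (hasDerivAt_const_mul π).sin.inv (hsin t ht).ne'
  have hderiv_nonpos : ∀ t ∈ Icc x (1 / 2), -(cos (π * t) * π) / sin (π * t) ^ 2 ≤ 0 :=
    fun t ht => by
      have hcos : 0 ≤ cos (π * t) := cos_nonneg_of_neg_pi_div_two_le_of_le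
        (by nlinarith [pi_pos, hx.1, ht.1]) (by nlinarith [pi_pos, ht.2])
      exact div_nonpos_of_nonpos_of_nonneg
        (neg_nonpos.2 (mul_nonneg hcos pi_pos.le)) (sq_nonneg _)
  have hjordan : 2 * x ≤ sin (π * x) := by
    have h := mul_le_sin (x := π * x) (mul_nonneg pi_pos.le hx.1.le) (by nlinarith [pi_pos, hx.2])
    rwa [← mul_assoc, div_mul_cancel₀ _ pi_ne_zero] at h
  have hx0 := hx.1
  rw [sawtooth_add_sineSum_eq_integral N hx, abs_neg]
  calc |∫ t in x..1 / 2, (sin (π * t))⁻¹ * sin ((2 * N + 1) * π * t)|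
      ≤ 2 * (sin (π * x))⁻¹ / |(2 * N + 1) * π| :=
        abs_integral_mul_sin_le hx.2 hderiv hderiv_nonpos
          (inv_nonneg.2 (hsin _ (right_mem_Icc.2 hx.2)).le) (by positivity)
    _ ≤ 2 * (2 * x)⁻¹ / |(2 * N + 1) * π| := by gcongr
    _ = 1 / ((2 * N + 1) * π * x) := by
        rw [abs_of_pos (by positivity)]
        field_simp

lemma distNearestInt_nonneg (θ : ℝ) : 0 ≤ distNearestInt θ := abs_nonneg _

lemma distNearestInt_le_half (θ : ℝ) : distNearestInt θ ≤ 1 / 2 := abs_sub_round θ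

lemma abs_sawtooth_add_sineSum_le (N : ℕ) (θ : ℝ) :
    |sawtooth θ + sineSum N θ| ≤ 1 / 2 + 2 * N * distNearestInt θ := by
  rw [← sineSum_sub_intCast N θ (round θ)]
  exact (abs_add_le _ _).trans (add_le_add (abs_sawtooth_le θ) (abs_sineSum_le N _))

lemma abs_sawtooth_add_sineSum_le_inv (N : ℕ) {θ : ℝ} (hθ : distNearestInt θ ≠ 0) :
    |sawtooth θ + sineSum N θ| ≤ 1 / ((2 * N + 1) * π * distNearestInt θ) := by
  rw [← abs_sawtooth_add_sineSum_distNearestInt N hθ]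
  exact abs_sawtooth_add_sineSum_le_of_mem_Ioc N
    ⟨(distNearestInt_nonneg θ).lt_of_ne' hθ, distNearestInt_le_half θ⟩

/-- The profile `x ↦ min(1, 1/(Hx))` of `g(·, H)` as a function of `x = ‖θ‖`, written as
`1 / max(1, Hx)` so that no convention is needed at `x = 0`. -/
noncomputable def gProfile (H x : ℝ) : ℝ := (max 1 (H * x))⁻¹

lemma gProfile_of_le {H x : ℝ} (h : H * x ≤ 1) : gProfile H x = 1 := by
  rw [gProfile, max_eq_left h, inv_one]

lemma gProfile_of_ge {H x : ℝ} (h : 1 ≤ H * x) : gProfile H x = (H * x)⁻¹ := by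
  rw [gProfile, max_eq_right h]

lemma gFn_eq_gProfile {H : ℝ} (hH : 0 < H) (θ : ℝ) : gFn θ H = gProfile H (distNearestInt θ) := by
  rw [gFn]
  split_ifs with hθ
  · rw [hθ, gProfile_of_le (by simp)]
  · have hpos : 0 < H * distNearestInt θ := mul_pos hH ((distNearestInt_nonneg θ).lt_of_ne' hθ)
    rcases le_total (H * distNearestInt θ) 1 with h | h
    · rw [gProfile_of_le h, min_eq_left ((one_le_div hpos).2 h)]
    · rw [gProfile_of_ge h, one_div, min_eq_right (inv_le_one_of_one_le₀ h)]

theorem norm_sawtooth_add_sum_eexp_div_le {H : ℝ} (hH : 0 < H) (θ : ℝ) :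
    ‖(sawtooth θ : ℂ) + ∑ h ∈ (Finset.Icc (-⌊H⌋) ⌊H⌋).erase 0,
        eexp (θ * (h : ℝ)) / (2 * π * Complex.I * (h : ℝ))‖ ≤ 3 * gFn θ H := by
  have hN_le : (⌊H⌋₊ : ℝ) ≤ H := Nat.floor_le hH.le
  have hlt_N : H < ⌊H⌋₊ + 1 := Nat.lt_floor_add_one H
  have hd := distNearestInt_nonneg θ
  rw [← Int.natCast_floor_eq_floor hH.le, sum_eexp_div_eq_sineSum, ← Complex.ofReal_add,
    Complex.norm_real, Real.norm_eq_abs, gFn_eq_gProfile hH]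
  generalize ⌊H⌋₊ = N at *
  rcases le_total (H * distNearestInt θ) 1 with hle | hge
  · rw [gProfile_of_le hle]
    calc |sawtooth θ + sineSum N θ| ≤ 1 / 2 + 2 * N * distNearestInt θ :=
          abs_sawtooth_add_sineSum_le N θ
      _ ≤ 3 * 1 := by nlinarith
  · have hd_ne : distNearestInt θ ≠ 0 := fun h0 => by norm_num [h0] at hge
    have hH_le : H ≤ (2 * N + 1) * π := by nlinarith [pi_gt_three]
    rw [gProfile_of_ge hge]
    calc |sawtooth θ + sineSum N θ| ≤ 1 / ((2 * N + 1) * π * distNearestInt θ) :=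
          abs_sawtooth_add_sineSum_le_inv N hd_ne
      _ ≤ 1 / (H * distNearestInt θ) := by gcongr
      _ ≤ 3 * (H * distNearestInt θ)⁻¹ := by
          rw [one_div]
          linarith [inv_nonneg.2 (zero_le_one.trans hge)]

lemma gProfile_nonneg (H x : ℝ) : 0 ≤ gProfile H x :=
  inv_nonneg.2 (zero_le_one.trans (le_max_left _ _))

lemma continuous_gProfile (H : ℝ) : Continuous (gProfile H) :=
  Continuous.inv₀ (by fun_prop) fun _ => (zero_lt_one.trans_le (le_max_left _ _)).ne'

lemma gProfile_le_two_mul_inv {H x : ℝ} (h : 0 ≤ H * x) : gProfile H x ≤ 2 * (1 + H * x)⁻¹ := by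
  have hmax : (1 + H * x) / 2 ≤ max 1 (H * x) := by
    linarith [le_max_left 1 (H * x), le_max_right 1 (H * x)]
  calc gProfile H x ≤ ((1 + H * x) / 2)⁻¹ := inv_anti₀ (by positivity) hmax
    _ = 2 * (1 + H * x)⁻¹ := by rw [inv_div, div_eq_mul_inv]

lemma integral_gProfile_le {H b : ℝ} (hH : 0 < H) (hb : 0 ≤ b) :
    ∫ x in 0..b, gProfile H x ≤ 2 * log (1 + H * b) / H := by
  have hpos : ∀ x ∈ Icc 0 b, 0 < 1 + H * x := fun x hx =>
    add_pos_of_pos_of_nonneg one_pos (mul_nonneg hH.le hx.1)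
  have hderiv : ∀ x ∈ uIcc 0 b,
      HasDerivAt (fun x => 2 * log (1 + H * x) / H) (2 * (1 + H * x)⁻¹) x := fun x hx => by
    have hne := (hpos x (uIcc_of_le hb ▸ hx)).ne'
    refine ((((hasDerivAt_const_mul H).const_add 1).log hne).const_mul 2 |>.div_const H).congr_deriv
      ?_
    field_simp
  have hint : IntervalIntegrable (fun x => 2 * (1 + H * x)⁻¹) volume 0 b := by
    refine ContinuousOn.intervalIntegrable (continuousOn_const.mul (ContinuousOn.inv₀
      (by fun_prop) fun x hx => ?_))
    exact (hpos x (uIcc_of_le hb ▸ hx)).ne'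
  calc ∫ x in 0..b, gProfile H x ≤ ∫ x in 0..b, 2 * (1 + H * x)⁻¹ :=
        intervalIntegral.integral_mono_on hb ((continuous_gProfile H).intervalIntegrable _ _) hint
          fun x hx => gProfile_le_two_mul_inv (mul_nonneg hH.le hx.1)
    _ = 2 * log (1 + H * b) / H := by
        rw [intervalIntegral.integral_eq_sub_of_hasDerivAt hderiv hint]
        simp

lemma integral_gProfile_mul {H b : ℝ} (hH : 0 < H) (hb : H⁻¹ ≤ b) {f : ℝ → ℝ} (hf : Continuous f) :
    ∫ x in 0..b, gProfile H x * f x =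
      (∫ x in 0..H⁻¹, f x) + ∫ x in H⁻¹..b, (H * x)⁻¹ * f x := by
  have hint : Continuous fun x => gProfile H x * f x := (continuous_gProfile H).mul hf
  rw [← intervalIntegral.integral_add_adjacent_intervals (b := H⁻¹)
    (hint.intervalIntegrable _ _) (hint.intervalIntegrable _ _)]
  congr 1
  · refine intervalIntegral.integral_congr fun x hx => ?_
    rw [uIcc_of_le (inv_nonneg.2 hH.le)] at hx
    simp only [gProfile_of_le ((le_inv_mul_iff₀ hH).1 (by simpa using hx.2)), one_mul]
  · refine intervalIntegral.integral_congr fun x hx => ?_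
    rw [uIcc_of_le hb] at hx
    simp only [gProfile_of_ge ((inv_mul_le_iff₀ hH).1 (by simpa using hx.1))]

lemma integral_inv_mul_cos {a b w : ℝ} (ha : 0 < a) (hab : a ≤ b) (hw : w ≠ 0) :
    ∫ x in a..b, x⁻¹ * cos (w * x) =
      w⁻¹ * (b⁻¹ * sin (w * b) - a⁻¹ * sin (w * a) + ∫ x in a..b, (x ^ 2)⁻¹ * sin (w * x)) := by
  have hne : ∀ x ∈ uIcc a b, x ≠ 0 := fun x hx =>
    (ha.trans_le (uIcc_of_le hab ▸ hx).1).ne'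
  have hinv : ∀ x ∈ uIcc a b, HasDerivAt (fun x : ℝ => x⁻¹) (-(x ^ 2)⁻¹) x := fun x hx =>
    hasDerivAt_inv (hne x hx)
  have hsin : ∀ x ∈ uIcc a b, HasDerivAt (fun x => w⁻¹ * sin (w * x)) (cos (w * x)) x :=
    fun x _ => by
      refine ((hasDerivAt_const_mul w).sin.const_mul w⁻¹).congr_deriv ?_
      field_simp
  rw [intervalIntegral.integral_mul_deriv_eq_deriv_mul hinv hsin
    (ContinuousOn.intervalIntegrable
      (ContinuousOn.inv₀ (by fun_prop) fun x hx => pow_ne_zero 2 (hne x hx)).neg)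
    (Continuous.intervalIntegrable (by fun_prop) _ _)]
  simp only [neg_mul, mul_left_comm _ w⁻¹, intervalIntegral.integral_neg,
    intervalIntegral.integral_const_mul]
  ring

lemma integral_gProfile_mul_cos {H b w : ℝ} (hH : 0 < H) (hb : 0 ≤ b) (hw : w ≠ 0)
    (hwb : sin (w * b) = 0) :
    ∫ x in 0..b, gProfile H x * cos (w * x) =
      (w * H)⁻¹ * ∫ x in H⁻¹..max H⁻¹ b, (x ^ 2)⁻¹ * sin (w * x) := by
  have hcos : ∀ c, ∫ x in 0..c, cos (w * x) = w⁻¹ * sin (w * c) := fun c => by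
    rw [intervalIntegral.integral_comp_mul_left _ hw, integral_cos, mul_zero, sin_zero, sub_zero,
      smul_eq_mul]
  rcases le_total b H⁻¹ with hbH | hbH
  · have hplateau : ∫ x in 0..b, gProfile H x * cos (w * x) = ∫ x in 0..b, cos (w * x) := by
      refine intervalIntegral.integral_congr fun x hx => ?_
      have hxH : x ≤ H⁻¹ := (uIcc_of_le hb ▸ hx).2.trans hbH
      simp only [gProfile_of_le ((le_inv_mul_iff₀ hH).1 (by simpa using hxH)), one_mul]
    rw [hplateau, hcos, hwb, max_eq_left hbH, intervalIntegral.integral_same, mul_zero, mul_zero]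
  · rw [integral_gProfile_mul hH hbH (by fun_prop), hcos, max_eq_right hbH]
    simp only [mul_inv, mul_assoc, intervalIntegral.integral_const_mul]
    rw [integral_inv_mul_cos (inv_pos.2 hH) hbH hw, hwb]
    field_simp
    ring

lemma abs_integral_inv_sq_mul_sin_le_inv {a b : ℝ} (ha : 0 < a) (hab : a ≤ b) (w : ℝ) :
    |∫ x in a..b, (x ^ 2)⁻¹ * sin (w * x)| ≤ a⁻¹ := by
  have hne : ∀ x ∈ uIcc a b, x ≠ 0 := fun x hx =>
    (ha.trans_le (uIcc_of_le hab ▸ hx).1).ne'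
  have hint : IntervalIntegrable (fun x : ℝ => (x ^ 2)⁻¹) volume a b :=
    (ContinuousOn.inv₀ (by fun_prop) fun x hx => pow_ne_zero 2 (hne x hx)).intervalIntegrable
  have hderiv : ∀ x ∈ uIcc a b, HasDerivAt (fun x : ℝ => -x⁻¹) (x ^ 2)⁻¹ x := fun x hx => by
    exact (hasDerivAt_inv (hne x hx)).fun_neg.congr_deriv (neg_neg _)
  calc |∫ x in a..b, (x ^ 2)⁻¹ * sin (w * x)| ≤ ∫ x in a..b, (x ^ 2)⁻¹ := by
        rw [← Real.norm_eq_abs]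
        refine intervalIntegral.norm_integral_le_of_norm_le hab
          (Filter.Eventually.of_forall fun x _ => ?_) hint
        rw [norm_mul, norm_inv, norm_pow, Real.norm_eq_abs, Real.norm_eq_abs, sq_abs]
        exact mul_le_of_le_one_right (by positivity) (abs_sin_le_one _)
    _ = a⁻¹ - b⁻¹ := by
        rw [intervalIntegral.integral_eq_sub_of_hasDerivAt hderiv hint]; ring
    _ ≤ a⁻¹ := sub_le_self _ (inv_nonneg.2 (ha.le.trans hab))

lemma abs_integral_inv_sq_mul_sin_le_div {a b w : ℝ} (ha : 0 < a) (hab : a ≤ b) (hw : w ≠ 0) :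
    |∫ x in a..b, (x ^ 2)⁻¹ * sin (w * x)| ≤ 2 * (a ^ 2)⁻¹ / |w| := by
  have hpos : ∀ x ∈ Icc a b, 0 < x := fun x hx => ha.trans_le hx.1
  refine abs_integral_mul_sin_le (u' := fun x => -(2 * x) / (x ^ 2) ^ 2) hab (fun x hx => ?_)
    (fun x hx => ?_) (by positivity) hw
  · simpa using! (hasDerivAt_pow 2 x).inv (pow_ne_zero 2 (hpos x hx).ne')
  · have := hpos x hx
    exact div_nonpos_of_nonpos_of_nonneg (by linarith) (by positivity)

section EvenFunction

variable {T : ℝ}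

lemma fourier_apply_neg (n : ℤ) (x : AddCircle T) : fourier n (-x) = fourier (-n) x := by
  rw [fourier_apply, fourier_apply, smul_neg, neg_smul]

lemma fourier_add_fourier_neg_coe (n : ℤ) (x : ℝ) :
    fourier n (x : AddCircle T) + fourier (-n) (x : AddCircle T) =
      2 * (cos (2 * π * n / T * x) : ℝ) := by
  rw [fourier_coe_apply, fourier_coe_apply, Complex.ofReal_cos, Complex.two_cos]
  push_cast
  ring_nf

variable {E : Type*} [NormedAddCommGroup E] [NormedSpace ℂ E]

lemma fourierCoeff_of_even [hT : Fact (0 < T)] {f : AddCircle T → E} (hf : ∀ x, f (-x) = f x)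
    (hint : IntervalIntegrable (fun x : ℝ => f x) volume 0 (T / 2)) (n : ℤ) :
    fourierCoeff f n =
      (2 / T) • ∫ x in 0..T / 2, cos (2 * π * n / T * x) • f x := by
  set F : ℝ → E := fun x => fourier (-n) (x : AddCircle T) • f x with hF
  have hreflect : ∀ x : ℝ, F (-x) = fourier n (x : AddCircle T) • f x := fun x => by
    simp only [hF, AddCircle.coe_neg, hf, fourier_apply_neg, neg_neg]
  have hsum : ∀ x : ℝ, F (-x) + F x = (2 : ℝ) • cos (2 * π * n / T * x) • f x := fun x => by
    rw [hreflect, hF, ← add_smul, fourier_add_fourier_neg_coe, mul_smul]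
    rfl
  have hcont : ∀ m : ℤ, Continuous fun x : ℝ => fourier m (x : AddCircle T) := fun m =>
    (map_continuous (fourier m)).comp (AddCircle.continuous_mk' T)
  have hright : IntervalIntegrable F volume 0 (T / 2) :=
    hint.continuousOn_smul (hcont (-n)).continuousOn
  have hleft : IntervalIntegrable (fun x => F (-x)) volume 0 (T / 2) := by
    simp only [hreflect]
    exact hint.continuousOn_smul (hcont n).continuousOn
  have hneg : IntervalIntegrable F volume (-(T / 2)) 0 := by
    rw [IntervalIntegrable.iff_comp_neg (by finiteness), neg_neg, neg_zero]
    exact hleft.symm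
  rw [fourierCoeff_eq_intervalIntegral f n (-(T / 2)), neg_add_eq_sub, sub_half,
    ← intervalIntegral.integral_add_adjacent_intervals hneg hright, ← neg_zero,
    ← intervalIntegral.integral_comp_neg, neg_zero,
    ← intervalIntegral.integral_add hleft hright]
  simp only [hsum]
  rw [intervalIntegral.integral_smul, smul_smul, one_div_mul_eq_div]

end EvenFunction

/-- `g(·, H)` as a continuous function on `ℝ/ℤ`, whose norm is the distance to the nearest
integer. -/
noncomputable def gCircle (H : ℝ) : C(UnitAddCircle, ℂ) where
  toFun x := gProfile H ‖x‖
  continuous_toFun := Complex.continuous_ofReal.comp ((continuous_gProfile H).comp continuous_norm)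

lemma gCircle_coe {H : ℝ} (hH : 0 < H) (θ : ℝ) : gCircle H θ = gFn θ H := by
  rw [gFn_eq_gProfile hH, distNearestInt, ← UnitAddCircle.norm_eq]
  rfl

lemma gCircle_coe_of_mem_Icc (H : ℝ) {x : ℝ} (hx : x ∈ Icc 0 (1 / 2)) :
    gCircle H x = gProfile H x := by
  have hnorm : ‖(x : UnitAddCircle)‖ = |x| :=
    (AddCircle.norm_coe_eq_abs_iff 1 one_ne_zero).2 (by simpa [abs_of_nonneg hx.1] using hx.2)
  rw [abs_of_nonneg hx.1] at hnorm
  exact congrArg (fun y => (gProfile H y : ℂ)) hnorm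

lemma fourierCoeff_gCircle (H : ℝ) (n : ℤ) :
    fourierCoeff (gCircle H) n =
      (2 * ∫ x in 0..1 / 2, gProfile H x * cos (2 * π * n * x) : ℝ) := by
  have heven : ∀ x, gCircle H (-x) = gCircle H x := fun x =>
    congrArg (fun y => (gProfile H y : ℂ)) (norm_neg x)
  have hcont : Continuous fun x : ℝ => gCircle H x :=
    (map_continuous (gCircle H)).comp (AddCircle.continuous_mk' 1)
  have hcongr : ∫ x in 0..1 / 2, cos (2 * π * n * x) • gCircle H x =
      ∫ x in 0..1 / 2, ((gProfile H x * cos (2 * π * n * x) : ℝ) : ℂ) := by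
    refine intervalIntegral.integral_congr fun x hx => ?_
    rw [uIcc_of_le one_half_pos.le] at hx
    simp only [gCircle_coe_of_mem_Icc H hx, Complex.real_smul, Complex.ofReal_mul, mul_comm]
  rw [fourierCoeff_of_even heven (hcont.intervalIntegrable _ _), div_one, div_one, hcongr,
    intervalIntegral.integral_ofReal, Complex.real_smul, Complex.ofReal_mul]

lemma norm_fourierCoeff_gCircle_le_log {H : ℝ} (hH : 1 ≤ H) (n : ℤ) :
    ‖fourierCoeff (gCircle H) n‖ ≤ 4 * (log (2 * H) / H) := by
  have hH0 : 0 < H := one_pos.trans_le hH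
  have htriangle : |∫ x in 0..1 / 2, gProfile H x * cos (2 * π * n * x)| ≤
      ∫ x in 0..1 / 2, gProfile H x := by
    rw [← Real.norm_eq_abs]
    refine intervalIntegral.norm_integral_le_of_norm_le one_half_pos.le
      (Filter.Eventually.of_forall fun x _ => ?_) ((continuous_gProfile H).intervalIntegrable _ _)
    rw [norm_mul, Real.norm_of_nonneg (gProfile_nonneg H x)]
    exact mul_le_of_le_one_right (gProfile_nonneg H x) (abs_cos_le_one _)
  rw [fourierCoeff_gCircle, Complex.norm_real, norm_mul, Real.norm_two, Real.norm_eq_abs]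
  calc 2 * |∫ x in 0..1 / 2, gProfile H x * cos (2 * π * n * x)|
      ≤ 2 * (2 * log (1 + H * (1 / 2)) / H) := by
        gcongr
        exact htriangle.trans (integral_gProfile_le hH0 one_half_pos.le)
    _ ≤ 2 * (2 * log (2 * H) / H) := by
        gcongr
        linarith
    _ = 4 * (log (2 * H) / H) := by ring

section NonzeroFrequency

variable {H : ℝ} {n : ℤ}

lemma norm_fourierCoeff_gCircle_eq (hH : 0 < H) (hn : n ≠ 0) :
    ‖fourierCoeff (gCircle H) n‖ =
      |∫ x in H⁻¹..max H⁻¹ (1 / 2), (x ^ 2)⁻¹ * sin (2 * π * n * x)| / (π * |(n : ℝ)| * H) := by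
  have hn' : (n : ℝ) ≠ 0 := by exact_mod_cast hn
  have hsin : sin (2 * π * n * (1 / 2)) = 0 := by
    rw [show 2 * π * (n : ℝ) * (1 / 2) = n * π by ring, sin_int_mul_pi]
  rw [fourierCoeff_gCircle,
    integral_gProfile_mul_cos hH one_half_pos.le (mul_ne_zero two_pi_pos.ne' hn') hsin,
    Complex.norm_real, norm_mul, norm_mul, norm_inv, Real.norm_two]
  simp only [Real.norm_eq_abs, abs_mul, abs_two, abs_of_pos pi_pos, abs_of_pos hH, mul_assoc 2 π]
  rw [mul_assoc 2, mul_inv, mul_assoc, mul_inv_cancel_left₀ two_ne_zero, inv_mul_eq_div]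

lemma norm_fourierCoeff_gCircle_le_inv (hH : 0 < H) (hn : n ≠ 0) :
    ‖fourierCoeff (gCircle H) n‖ ≤ 1 / |(n : ℝ)| := by
  rw [norm_fourierCoeff_gCircle_eq hH hn]
  calc |∫ x in H⁻¹..max H⁻¹ (1 / 2), (x ^ 2)⁻¹ * sin (2 * π * n * x)| / (π * |(n : ℝ)| * H)
      ≤ H⁻¹⁻¹ / (π * |(n : ℝ)| * H) := by
        gcongr
        exact abs_integral_inv_sq_mul_sin_le_inv (inv_pos.2 hH) (le_max_left _ _) _
    _ = π⁻¹ * (1 / |(n : ℝ)|) := by field_simp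
    _ ≤ 1 / |(n : ℝ)| :=
        mul_le_of_le_one_left (by positivity) (inv_le_one_of_one_le₀ (by linarith [pi_gt_three]))

lemma norm_fourierCoeff_gCircle_le_div_sq (hH : 0 < H) (hn : n ≠ 0) :
    ‖fourierCoeff (gCircle H) n‖ ≤ H / (n : ℝ) ^ 2 := by
  have hn' : (n : ℝ) ≠ 0 := by exact_mod_cast hn
  rw [norm_fourierCoeff_gCircle_eq hH hn]
  calc |∫ x in H⁻¹..max H⁻¹ (1 / 2), (x ^ 2)⁻¹ * sin (2 * π * n * x)| / (π * |(n : ℝ)| * H)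
      ≤ (2 * (H⁻¹ ^ 2)⁻¹ / |2 * π * n|) / (π * |(n : ℝ)| * H) := by
        gcongr
        exact abs_integral_inv_sq_mul_sin_le_div (inv_pos.2 hH) (le_max_left _ _)
          (mul_ne_zero two_pi_pos.ne' hn')
    _ = (π ^ 2)⁻¹ * (H / (n : ℝ) ^ 2) := by
        rw [← sq_abs (n : ℝ), abs_mul, abs_of_pos two_pi_pos]
        field_simp
    _ ≤ H / (n : ℝ) ^ 2 :=
        mul_le_of_le_one_left (by positivity)
          (inv_le_one_of_one_le₀ (one_le_pow₀ (by linarith [pi_gt_three])))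

lemma norm_fourierCoeff_gCircle_le (hH : 1 ≤ H) (hn : n ≠ 0) :
    ‖fourierCoeff (gCircle H) n‖ ≤
      4 * min (log (2 * H) / H) (min (1 / |(n : ℝ)|) (H / (n : ℝ) ^ 2)) := by
  have hH0 : 0 < H := one_pos.trans_le hH
  have hinv := norm_fourierCoeff_gCircle_le_inv hH0 hn
  have hdiv_sq := norm_fourierCoeff_gCircle_le_div_sq hH0 hn
  have hnonneg := norm_nonneg (fourierCoeff (gCircle H) n)
  rw [mul_min_of_nonneg _ _ zero_le_four, mul_min_of_nonneg _ _ zero_le_four]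
  exact le_min (norm_fourierCoeff_gCircle_le_log hH n)
    (le_min (by linarith) (by linarith))

end NonzeroFrequency

lemma summable_fourierCoeff_gCircle {H : ℝ} (hH : 0 < H) :
    Summable (fourierCoeff (gCircle H)) := by
  refine Summable.of_norm_bounded_eventually
    ((Real.summable_one_div_int_pow.2 one_lt_two).mul_left H) ?_
  filter_upwards [Filter.eventually_cofinite_ne 0] with n hn
  simpa only [mul_one_div] using norm_fourierCoeff_gCircle_le_div_sq hH hn

lemma hasSum_fourierCoeff_gCircle_mul_eexp {H : ℝ} (hH : 0 < H) (θ : ℝ) :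
    HasSum (fun h : ℤ => fourierCoeff (gCircle H) h * eexp (θ * (h : ℝ))) (gFn θ H : ℂ) := by
  have hexp : ∀ h : ℤ, eexp (θ * (h : ℝ)) = fourier h (θ : UnitAddCircle) := fun h => by
    rw [eexp, fourier_coe_apply]
    push_cast
    ring_nf
  simpa only [hexp, gCircle_coe hH, smul_eq_mul] using
    has_pointwise_sum_fourier_series_of_summable (summable_fourierCoeff_gCircle hH)
      (θ : UnitAddCircle)

theorem sawtooth_truncated_fourier :
    ∃ C > (0 : ℝ), ∃ C' > (0 : ℝ),
      (∀ H : ℝ, 1 ≤ H → ∀ θ : ℝ,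
        ‖(sawtooth θ : ℂ) +
            ∑ h ∈ (Finset.Icc (-⌊H⌋) ⌊H⌋).erase 0,
              eexp (θ * (h : ℝ)) / (2 * Real.pi * Complex.I * (h : ℝ))‖ ≤
          C * gFn θ H) ∧
      (∀ H : ℝ, 1 ≤ H → ∃ a : ℤ → ℂ,
        (∀ θ : ℝ, HasSum (fun h : ℤ => a h * eexp (θ * (h : ℝ))) ((gFn θ H : ℝ) : ℂ)) ∧
        (∀ h : ℤ, h ≠ 0 →
          ‖a h‖ ≤ C' * min (Real.log (2 * H) / H)
            (min (1 / |(h : ℝ)|) (H / (h : ℝ) ^ 2))) ∧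
        ‖a 0‖ ≤ C' * (Real.log (2 * H) / H)) := by
  refine ⟨3, three_pos, 4, four_pos,
    fun H hH θ => norm_sawtooth_add_sum_eexp_div_le (one_pos.trans_le hH) θ,
    fun H hH => ⟨fourierCoeff (gCircle H), ?_, ?_, ?_⟩⟩
  · exact hasSum_fourierCoeff_gCircle_mul_eexp (one_pos.trans_le hH)
  · exact fun h => norm_fourierCoeff_gCircle_le hH
  · exact norm_fourierCoeff_gCircle_le_log hH 0
end
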